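/- arXiv:1507.01813 — 2 statements merged into one kernel-verified Lean document; each statement's English description precedes it below -/
import Mathlib

section
/- There exists a stationary profile μ = μ(v), μ : ℝ³ → ℝ smooth, with ∫_{ℝ³} μ(v) dv = 1, such that the following holds. For all m, s ∈ ℕ, α ∈ (0,1], and k ∈ ℕ, there exist a point (x₀,v₀) ∈ 𝕋³ × ℝ³, a constant C > 0, an ε₀ > 0, and for every ε ∈ (0,ε₀] a time t_ε ∈ (0, C·ε·|log ε|] together with a smooth solution f_ε of the kinetic incompressible Euler equations on [0,t_ε] × 𝕋³ × ℝ³, such that ‖f_ε − μ‖_{L²([0,t_ε] × Ω_ε)} / (‖⟨v⟩^m (f_ε(0,·,·) − μ)‖_{H^s(𝕋³×ℝ³)})^α → +∞ as ε → 0, where Ω_ε = B(x₀, ε^k) × B(v₀, ε^k). -/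
open MeasureTheory Set Filter

noncomputable section

abbrev E3 : Type := EuclideanSpace ℝ (Fin 3)

/-- Partial derivative in the `i`-th coordinate for functions on `ℝ³`. -/
noncomputable def pdE (i : Fin 3) (g : E3 → ℝ) : E3 → ℝ :=
  fun x => fderiv ℝ g x (EuclideanSpace.single i 1)

/-- Partial derivative in the `i`-th `x`-coordinate for `g = g x v`. -/
noncomputable def pdx (i : Fin 3) (g : E3 → E3 → ℝ) : E3 → E3 → ℝ :=
  fun x v => fderiv ℝ (fun x' => g x' v) x (EuclideanSpace.single i 1)

/-- Partial derivative in the `i`-th `v`-coordinate for `g = g x v`. -/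
noncomputable def pdv (i : Fin 3) (g : E3 → E3 → ℝ) : E3 → E3 → ℝ :=
  fun x v => fderiv ℝ (fun v' => g x v') v (EuclideanSpace.single i 1)

/-- Mixed partial derivative `∂^β` for a multi-index `β` in the six variables `(x,v)`. -/
noncomputable def mpart6 (β : Fin 6 → ℕ) (g : E3 → E3 → ℝ) : E3 → E3 → ℝ :=
  (pdx 0)^[β 0] ((pdx 1)^[β 1] ((pdx 2)^[β 2]
    ((pdv 0)^[β 3] ((pdv 1)^[β 4] ((pdv 2)^[β 5] g)))))

/-- The fundamental domain of the torus `𝕋³ = ℝ³/ℤ³`. -/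
def cube3 : Set E3 := {x : E3 | ∀ i, x i ∈ Set.Ico (0:ℝ) 1}

/-- The square of the weighted `L²(𝕋³ × ℝ³)` norm `‖⟨v⟩^m g‖²_{L²}`. -/
noncomputable def wL2sq (m : ℕ) (g : E3 → E3 → ℝ) : ℝ :=
  ∫ p in cube3 ×ˢ (Set.univ : Set E3),
    ((1 + ‖p.2‖ ^ 2) ^ ((m : ℝ) / 2) * g p.1 p.2) ^ 2

/-- The weighted Sobolev norm `‖⟨v⟩^m g‖_{H^s(𝕋³×ℝ³)} := (Σ_{|β|≤s} ‖⟨v⟩^m ∂^β g‖²_{L²})^{1/2}`,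
the sum over multi-indices `β` in `(x,v)` of total order at most `s`. -/
noncomputable def HsNormW (m s : ℕ) (g : E3 → E3 → ℝ) : ℝ :=
  Real.sqrt (∑ β : Fin 6 → Fin (s+1),
    if (∑ i, (β i : ℕ)) ≤ s then wL2sq m (mpart6 (fun i => (β i : ℕ)) g) else 0)

/-- `f : [0,T] × 𝕋³ × ℝ³ → ℝ` is a smooth solution of the kinetic incompressible Euler
equations: functions on `𝕋³` are represented by `ℤ³`-periodic functions on `ℝ³`, and there is a
smooth potential `φ` with `∫_{𝕋³} φ dx = 0` and `-Δ_x φ = ∇_x·(∇_x·∫ v ⊗ v f dv)`, such that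
`∂_t f + v·∇_x f - ∇_x φ·∇_v f = 0`. -/
def IsKIESol (T : ℝ) (f : ℝ → E3 → E3 → ℝ) : Prop :=
  ContDiff ℝ (⊤ : ℕ∞) (fun p : ℝ × E3 × E3 => f p.1 p.2.1 p.2.2) ∧
  (∀ t x v (i : Fin 3), f t (x + EuclideanSpace.single i 1) v = f t x v) ∧
  ∃ φ : ℝ → E3 → ℝ,
    ContDiff ℝ (⊤ : ℕ∞) (fun p : ℝ × E3 => φ p.1 p.2) ∧
    (∀ t x (i : Fin 3), φ t (x + EuclideanSpace.single i 1) = φ t x) ∧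
    (∀ t ∈ Set.Icc (0:ℝ) T, (∫ x in cube3, φ t x) = 0) ∧
    (∀ t ∈ Set.Icc (0:ℝ) T, ∀ x : E3,
      -(∑ i, pdE i (pdE i (φ t)) x)
        = ∑ i, ∑ j, pdE i (pdE j (fun x' => ∫ v : E3, (v i) * (v j) * f t x' v)) x) ∧
    (∀ t ∈ Set.Icc (0:ℝ) T, ∀ x v : E3,
      deriv (fun t' => f t' x v) t
        + fderiv ℝ (fun x' => f t x' v) x v
        - ∑ i, pdE i (φ t) x * fderiv ℝ (fun v' => f t x v') v (EuclideanSpace.single i 1)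
        = 0)

/-!
We look for solutions depending on `x` through `x₁` only, of the form
`f = F(S(t, x₁), p(t, x₁), v₁) · R(v₂, v₃)`. Here `F(S, p, ·)` is the pullback of a fixed bump under
the Boole-type map `v ↦ v - P / (v - S)`, `P = 1 + p`. Such maps preserve Lebesgue measure, so `F`
has constant mass, and its second moment in `v` is `p` plus a constant. Differentiating the pullback
in `v`, `S` and `p` shows that `f` solves kinetic Euler with potential `-p` as soon as
`S_t + S S_x = p_x` and `p_t + ((1 + p) S)_x = 0`, the shallow water system with the wrong sign of
the pressure. This system is elliptic: for `Y = S + i p` it reads `Y_t = -i Y_x - ∂_x Q(Y)` with `Q`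
quadratic, so the mode `e^{i l x}` of the linearization grows like `e^{l t}`.

A contraction argument in a space of Fourier series with weights decaying as `t → -∞` yields an
exact solution for `t ≤ 0` that stays close to the growing mode `e^{t + i x}`. Compressing time and
space by a frequency `N ~ n²` and starting at inner time `-n - 1` gives solutions whose initial
distance to the equilibrium is at most a power of `n` times `e^{-n/2}` in every weighted `H^s`, but
which within time `O(1/n)` deviate from it by a fixed amount on a ball of radius `~ 1/N`. The `L²`
deviation is therefore bounded below by a power of `1/n`, and `n ~ ε^{-(k+1)}` gives the claim.
-/

namespace KineticEuler

open Function (uncurry)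
open scoped Topology ContDiff BoundedContinuousFunction

section FixedPoint

variable {𝕜 X : Type*} [NontriviallyNormedField 𝕜] [NormedAddCommGroup X] [NormedSpace 𝕜 X]

lemma hasStrictFDerivAt_sub_bilinear_zero (B : X →L[𝕜] X →L[𝕜] X) :
    HasStrictFDerivAt (fun U : X => U - B U U) (ContinuousLinearEquiv.refl 𝕜 X : X →L[𝕜] X) 0 := by
  have hdiag : HasStrictFDerivAt (fun U : X => (U, U))
      ((ContinuousLinearMap.id 𝕜 X).prod (ContinuousLinearMap.id 𝕜 X)) 0 :=
    (hasStrictFDerivAt_id 0).prodMk (hasStrictFDerivAt_id 0)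
  have hquad := (B.isBoundedBilinearMap.hasStrictFDerivAt ((0 : X), (0 : X))).comp
    (f := fun U : X => (U, U)) (0 : X) hdiag
  refine ((hasStrictFDerivAt_id (𝕜 := 𝕜) (0 : X)).sub hquad).congr_fderiv ?_
  ext v
  simp [IsBoundedBilinearMap.deriv]

theorem eventually_exists_eq_add_bilinear [CompleteSpace X] (B : X →L[𝕜] X →L[𝕜] X) :
    ∀ᶠ x in 𝓝 (0 : X), ∃ U : X, ‖U‖ ≤ 2 * ‖x‖ ∧ U = x + B U U := by
  have hmap := (hasStrictFDerivAt_sub_bilinear_zero B).map_nhds_eq_of_equiv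
  simp only [map_zero, sub_zero] at hmap
  set ρ : ℝ := 1 / (2 * (‖B‖ + 1)) with hρ
  have hρ_pos : 0 < ρ := by positivity
  have himage : (fun U : X => U - B U U) '' Metric.ball 0 ρ ∈ 𝓝 (0 : X) := by
    rw [← hmap]
    exact image_mem_map (Metric.ball_mem_nhds 0 hρ_pos)
  filter_upwards [himage]
  rintro x ⟨U, hU, rfl⟩
  rw [mem_ball_zero_iff] at hU
  have hBU : ‖B‖ * ‖U‖ ≤ 1 / 2 := by
    calc ‖B‖ * ‖U‖ ≤ (‖B‖ + 1) * ρ := by gcongr; linarith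
      _ = 1 / 2 := by rw [hρ]; field_simp
  have hUle : ‖U‖ ≤ ‖U - B U U‖ + 1 / 2 * ‖U‖ := by
    calc ‖U‖ = ‖(U - B U U) + B U U‖ := by rw [sub_add_cancel]
      _ ≤ ‖U - B U U‖ + ‖B U U‖ := norm_add_le _ _
      _ ≤ ‖U - B U U‖ + ‖B‖ * ‖U‖ * ‖U‖ := by gcongr; exact B.le_opNorm₂ U U
      _ ≤ ‖U - B U U‖ + 1 / 2 * ‖U‖ := by gcongr
  exact ⟨U, by linarith, (sub_add_cancel _ _).symm⟩

end FixedPoint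

section ExponentialTail

variable {E : Type*} [NormedAddCommGroup E] [NormedSpace ℝ E]

lemma hasDerivAt_integral_Ioi [CompleteSpace E] {k : ℝ → E} {c t : ℝ}
    (hk : IntegrableOn k (Ioi c)) (hct : c < t) (hkt : ContinuousAt k t) :
    HasDerivAt (fun t => ∫ s in Ioi t, k s) (-k t) t := by
  have hint : ∀ s, c < s → IntervalIntegrable k volume c s := fun s hs =>
    (intervalIntegrable_iff_integrableOn_Ioc_of_le hs.le).mpr (hk.mono_set Ioc_subset_Ioi_self)
  have hmeas : StronglyMeasurableAtFilter k (𝓝 t) :=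
    ⟨Ioi c, Ioi_mem_nhds hct, hk.aestronglyMeasurable⟩
  refine ((intervalIntegral.integral_hasDerivAt_right (hint t hct) hmeas hkt).const_sub
    (∫ s in Ioi c, k s)).congr_of_eventuallyEq ?_
  filter_upwards [Ioi_mem_nhds hct] with s hs
  rw [← intervalIntegral.integral_interval_add_Ioi hk
    (hk.mono_set (Ioi_subset_Ioi (le_of_lt hs))), add_sub_cancel_left]

lemma setIntegral_Ioi_comp_add_left (k : ℝ → E) (c t : ℝ) :
    ∫ r in Ioi c, k (t + r) = ∫ s in Ioi (t + c), k s := by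
  rw [← (measurePreserving_add_left volume t).setIntegral_preimage_emb
    (measurableEmbedding_addLeft t) k]
  simp

lemma integral_exp_smul_comp_add (a : ℝ) (g : ℝ → E) (t : ℝ) :
    ∫ r in Ioi (0 : ℝ), Real.exp (-a * r) • g (t + r)
      = Real.exp (a * t) • ∫ s in Ioi t, Real.exp (-a * s) • g s := by
  have hshift := setIntegral_Ioi_comp_add_left (fun s => Real.exp (-a * s) • g s) 0 t
  rw [add_zero] at hshift
  rw [← hshift, ← integral_smul]
  refine integral_congr_ae (ae_of_all _ fun r => ?_)
  simp only [smul_smul, ← Real.exp_add]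
  congr 2
  ring

lemma integrableOn_exp_smul {a M : ℝ} (ha : 0 < a) {g : ℝ → E} (hg : Continuous g)
    (hM : ∀ t, ‖g t‖ ≤ M) (c : ℝ) :
    IntegrableOn (fun r => Real.exp (-a * r) • g r) (Ioi c) := by
  refine Integrable.mono' ((integrableOn_exp_mul_Ioi (neg_lt_zero.mpr ha) c).mul_const M)
    (by fun_prop : Continuous _).aestronglyMeasurable (ae_of_all _ fun r => ?_)
  rw [norm_smul, Real.norm_of_nonneg (Real.exp_pos _).le]
  gcongr
  exact hM r

lemma norm_integral_exp_smul_le {a M : ℝ} (ha : 0 < a) {g : ℝ → E} (hM : ∀ t, ‖g t‖ ≤ M) :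
    ‖∫ r in Ioi (0 : ℝ), Real.exp (-a * r) • g r‖ ≤ M / a := by
  have hexp : ∫ r in Ioi (0 : ℝ), Real.exp (-a * r) * M = M / a := by
    rw [integral_mul_const, integral_exp_mul_Ioi (neg_lt_zero.mpr ha)]
    simp [mul_comm, div_eq_mul_inv]
  rw [← hexp]
  refine norm_integral_le_of_norm_le
    ((integrableOn_exp_mul_Ioi (neg_lt_zero.mpr ha) 0).mul_const M) (ae_of_all _ fun r => ?_)
  rw [norm_smul, Real.norm_of_nonneg (Real.exp_pos _).le]
  gcongr
  exact hM r

variable [CompleteSpace E] {a M : ℝ} {g : ℝ → E}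

lemma hasDerivAt_integral_exp_smul_comp_add (ha : 0 < a) (hg : Continuous g)
    (hM : ∀ t, ‖g t‖ ≤ M) (t : ℝ) :
    HasDerivAt (fun t => ∫ r in Ioi (0 : ℝ), Real.exp (-a * r) • g (t + r))
      (a • (∫ r in Ioi (0 : ℝ), Real.exp (-a * r) • g (t + r)) - g t) t := by
  have hexp : HasDerivAt (fun t => Real.exp (a * t)) (Real.exp (a * t) * a) t := by
    simpa using ((hasDerivAt_id t).const_mul a).exp
  have htail := hasDerivAt_integral_Ioi (integrableOn_exp_smul ha hg hM (t - 1)) (sub_one_lt t)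
    (by fun_prop : Continuous fun r => Real.exp (-a * r) • g r).continuousAt
  rw [funext (integral_exp_smul_comp_add a g)]
  refine (hexp.smul htail).congr_deriv ?_
  have hcancel : Real.exp (a * t) * Real.exp (-a * t) = 1 := by rw [← Real.exp_add]; simp
  rw [integral_exp_smul_comp_add, smul_neg, smul_smul, hcancel, one_smul, smul_smul,
    mul_comm a (Real.exp _), neg_add_eq_sub]

lemma hasDerivAt_integral_exp_smul_comp_sub (ha : 0 < a) (hg : Continuous g)
    (hM : ∀ t, ‖g t‖ ≤ M) (t : ℝ) :
    HasDerivAt (fun t => ∫ r in Ioi (0 : ℝ), Real.exp (-a * r) • g (t - r))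
      (g t - a • ∫ r in Ioi (0 : ℝ), Real.exp (-a * r) • g (t - r)) t := by
  have h := HasDerivAt.scomp t (hasDerivAt_integral_exp_smul_comp_add ha (g := fun s => g (-s))
    (by fun_prop) (fun s => hM (-s)) (-t)) (hasDerivAt_neg t)
  simpa [Function.comp_def, neg_add_eq_sub] using h

end ExponentialTail

section ModeSpace

/-- The summable polynomial weight on Fourier modes; it is a convolution algebra weight. -/
def modeWeight (l : ℤ) : ℝ := (1 + (l : ℝ) ^ 2)⁻¹

lemma modeWeight_pos (l : ℤ) : 0 < modeWeight l := by unfold modeWeight; positivity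

lemma modeWeight_neg (l : ℤ) : modeWeight (-l) = modeWeight l := by simp [modeWeight]

lemma modeWeight_le_one (l : ℤ) : modeWeight l ≤ 1 :=
  inv_le_one_of_one_le₀ (le_add_of_nonneg_right (sq_nonneg _))

lemma summable_modeWeight : Summable modeWeight := by
  have hpow : Summable fun l : ℤ => 1 / (l : ℝ) ^ 2 :=
    Real.summable_one_div_int_pow.mpr one_lt_two
  refine hpow.of_norm_bounded_eventually ?_
  filter_upwards [(finite_singleton (0 : ℤ)).compl_mem_cofinite] with l hl
  have hl' : (l : ℝ) ≠ 0 := by exact_mod_cast hl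
  rw [Real.norm_of_nonneg (modeWeight_pos l).le, modeWeight, one_div]
  gcongr
  linarith

lemma modeWeight_mul_le (l j : ℤ) :
    modeWeight j * modeWeight (l - j)
      ≤ 2 * (modeWeight j + modeWeight (l - j)) * modeWeight l := by
  obtain ⟨m, rfl⟩ : ∃ m, l = j + m := ⟨l - j, by ring⟩
  simp only [modeWeight, add_sub_cancel_left, Int.cast_add]
  field_simp
  nlinarith [sq_nonneg ((j : ℝ) - m)]

/-- The sum of all mode weights. -/
def modeWeightSum : ℝ := ∑' l, modeWeight l

lemma modeWeightSum_nonneg : 0 ≤ modeWeightSum := tsum_nonneg fun l => (modeWeight_pos l).le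

lemma hasSum_modeWeight_conv (l : ℤ) :
    HasSum (fun j => 2 * (modeWeight j + modeWeight (l - j))) (4 * modeWeightSum) := by
  have hsum : HasSum modeWeight modeWeightSum := summable_modeWeight.hasSum
  have hreflect : HasSum (fun j => modeWeight (l - j)) modeWeightSum :=
    (Equiv.subLeft l).hasSum_iff.mpr hsum
  have hconv := (hsum.add hreflect).mul_left 2
  rwa [show 2 * (modeWeightSum + modeWeightSum) = 4 * modeWeightSum by ring] at hconv

/-- The weight `⟨l⟩⁻² e^{|l| min(t,0) / 2}` carried by the `l`-th mode at time `t`: modes decay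
backward in time, faster for higher frequencies, which yields analyticity in `x` for `t < 0`. -/
def expWeight (l : ℤ) (t : ℝ) : ℝ := modeWeight l * Real.exp (|(l : ℝ)| / 2 * min t 0)

lemma expWeight_pos (l : ℤ) (t : ℝ) : 0 < expWeight l t :=
  mul_pos (modeWeight_pos l) (Real.exp_pos _)

lemma expWeight_neg (l : ℤ) (t : ℝ) : expWeight (-l) t = expWeight l t := by
  simp [expWeight, modeWeight_neg]

lemma continuous_expWeight (l : ℤ) : Continuous (expWeight l) := by
  unfold expWeight; fun_prop

lemma expWeight_mul_le (l j : ℤ) (t : ℝ) :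
    expWeight j t * expWeight (l - j) t
      ≤ 2 * (modeWeight j + modeWeight (l - j)) * expWeight l t := by
  have htriangle : |(l : ℝ)| ≤ |(j : ℝ)| + |((l - j : ℤ) : ℝ)| := by
    simpa using abs_add_le (j : ℝ) ((l - j : ℤ) : ℝ)
  have hexp : Real.exp (|(j : ℝ)| / 2 * min t 0) * Real.exp (|((l - j : ℤ) : ℝ)| / 2 * min t 0)
      ≤ Real.exp (|(l : ℝ)| / 2 * min t 0) := by
    rw [← Real.exp_add]
    exact Real.exp_le_exp.mpr (by nlinarith [min_le_right t 0])
  unfold expWeight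
  rw [mul_mul_mul_comm, ← mul_assoc _ (modeWeight l)]
  exact mul_le_mul (modeWeight_mul_le l j) hexp (by positivity)
    ((mul_pos (modeWeight_pos _) (modeWeight_pos _)).le.trans (modeWeight_mul_le l j))

lemma hasDerivAt_expWeight (l : ℤ) {t : ℝ} (ht : t < 0) :
    HasDerivAt (expWeight l) (|(l : ℝ)| / 2 * expWeight l t) t := by
  have hexp : HasDerivAt (fun t : ℝ => modeWeight l * Real.exp (|(l : ℝ)| / 2 * t))
      (modeWeight l * (Real.exp (|(l : ℝ)| / 2 * t) * (|(l : ℝ)| / 2 * 1))) t :=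
    (((hasDerivAt_id t).const_mul _).exp).const_mul _
  refine (hexp.congr_of_eventuallyEq ?_).congr_deriv ?_
  · filter_upwards [Iio_mem_nhds ht] with s hs
    rw [expWeight, min_eq_left (le_of_lt hs)]
  · rw [expWeight, min_eq_left ht.le]
    ring

/-- The kernel of convolution in coordinates normalized by `expWeight`. -/
def convKernel (l j : ℤ) (t : ℝ) : ℝ := expWeight j t * expWeight (l - j) t / expWeight l t

lemma convKernel_nonneg (l j : ℤ) (t : ℝ) : 0 ≤ convKernel l j t :=
  div_nonneg (mul_pos (expWeight_pos _ _) (expWeight_pos _ _)).le (expWeight_pos _ _).le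

lemma continuous_convKernel (l j : ℤ) : Continuous (convKernel l j) :=
  ((continuous_expWeight j).mul (continuous_expWeight (l - j))).div (continuous_expWeight l)
    fun t => (expWeight_pos l t).ne'

lemma convKernel_le (l j : ℤ) (t : ℝ) :
    convKernel l j t ≤ 2 * (modeWeight j + modeWeight (l - j)) :=
  (div_le_iff₀ (expWeight_pos l t)).mpr (expWeight_mul_le l j t)

/-- Families of Fourier coefficients indexed by mode and time, normalized by `expWeight`, with the
sup norm. -/
abbrev ModeSpace : Type := (ℤ × ℝ) →ᵇ ℂ

lemma continuous_mode (U : ModeSpace) (l : ℤ) : Continuous fun t : ℝ => U (l, t) :=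
  U.continuous.comp (by fun_prop)

lemma norm_convKernel_smul_le (U V : ModeSpace) (l j : ℤ) (t : ℝ) :
    ‖convKernel l j t • (U (j, t) * V (l - j, t))‖
      ≤ 2 * (modeWeight j + modeWeight (l - j)) * (‖U‖ * ‖V‖) := by
  rw [norm_smul, norm_mul, Real.norm_of_nonneg (convKernel_nonneg _ _ _)]
  exact mul_le_mul (convKernel_le l j t)
    (mul_le_mul (U.norm_coe_le_norm _) (V.norm_coe_le_norm _) (norm_nonneg _) (norm_nonneg _))
    (by positivity) ((convKernel_nonneg l j t).trans (convKernel_le l j t))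

lemma summable_convKernel_smul (U V : ModeSpace) (l : ℤ) (t : ℝ) :
    Summable fun j => convKernel l j t • (U (j, t) * V (l - j, t)) :=
  Summable.of_norm_bounded ((hasSum_modeWeight_conv l).summable.mul_right _)
    fun j => norm_convKernel_smul_le U V l j t

/-- Convolution of mode families, that is, multiplication of the Fourier series. -/
def modeConv (U V : ModeSpace) : ModeSpace :=
  BoundedContinuousFunction.ofNormedAddCommGroup
    (fun p => ∑' j, convKernel p.1 j p.2 • (U (j, p.2) * V (p.1 - j, p.2)))
    (continuous_prod_of_discrete_left.mpr fun l =>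
      continuous_tsum
        (fun j => (continuous_convKernel l j).smul
          ((continuous_mode U j).mul (continuous_mode V (l - j))))
        ((hasSum_modeWeight_conv l).summable.mul_right (‖U‖ * ‖V‖))
        (fun j t => norm_convKernel_smul_le U V l j t))
    (4 * modeWeightSum * (‖U‖ * ‖V‖))
    (fun p => tsum_of_norm_bounded ((hasSum_modeWeight_conv p.1).mul_right _)
      fun j => norm_convKernel_smul_le U V p.1 j p.2)

lemma modeConv_apply (U V : ModeSpace) (p : ℤ × ℝ) :
    modeConv U V p = ∑' j, convKernel p.1 j p.2 • (U (j, p.2) * V (p.1 - j, p.2)) := rfl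

lemma norm_modeConv_le (U V : ModeSpace) : ‖modeConv U V‖ ≤ 4 * modeWeightSum * ‖U‖ * ‖V‖ := by
  have := modeWeightSum_nonneg
  rw [mul_assoc]
  exact BoundedContinuousFunction.norm_ofNormedAddCommGroup_le _ (by positivity) _

lemma modeConv_comm (U V : ModeSpace) : modeConv U V = modeConv V U := by
  ext p
  rw [modeConv_apply, modeConv_apply, ← (Equiv.subLeft p.1).tsum_eq]
  refine tsum_congr fun j => ?_
  simp only [Equiv.subLeft_apply, convKernel, sub_sub_cancel, mul_comm]

lemma modeConv_add_left (U V W : ModeSpace) :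
    modeConv (U + V) W = modeConv U W + modeConv V W := by
  ext p
  simp only [modeConv_apply, BoundedContinuousFunction.add_apply, add_mul, smul_add]
  exact (summable_convKernel_smul U W _ _).tsum_add (summable_convKernel_smul V W _ _)

lemma modeConv_smul_left (c : ℝ) (U V : ModeSpace) :
    modeConv (c • U) V = c • modeConv U V := by
  ext p
  simp only [modeConv_apply, BoundedContinuousFunction.smul_apply, smul_mul_assoc]
  rw [← tsum_const_smul'' c]
  exact tsum_congr fun j => smul_comm _ _ _

/-- `modeConv` as a bounded bilinear map. -/
def modeConvL : ModeSpace →L[ℝ] ModeSpace →L[ℝ] ModeSpace :=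
  LinearMap.mkContinuous₂
    (LinearMap.mk₂ ℝ modeConv modeConv_add_left modeConv_smul_left
      (fun U V W => by rw [modeConv_comm U, modeConv_add_left, modeConv_comm V, modeConv_comm W])
      (fun c U V => by rw [modeConv_comm U, modeConv_smul_left, modeConv_comm V]))
    (4 * modeWeightSum) norm_modeConv_le

/-- Complex conjugation of the Fourier series, on the level of coefficients. -/
def modeStarL : ModeSpace →L[ℝ] ModeSpace :=
  LinearMap.mkContinuous
    { toFun := fun U => BoundedContinuousFunction.ofNormedAddCommGroup
        (fun p => starRingEnd ℂ (U (-p.1, p.2)))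
        (Complex.continuous_conj.comp (U.continuous.comp (by fun_prop))) ‖U‖
        (fun p => (RCLike.norm_conj _).trans_le (U.norm_coe_le_norm _))
      map_add' := fun U V => by ext p; simp
      map_smul' := fun c U => by ext p; simp }
    1 (fun U => by
      rw [one_mul]
      exact BoundedContinuousFunction.norm_ofNormedAddCommGroup_le _ (norm_nonneg _)
        fun p => (RCLike.norm_conj _).trans_le (U.norm_coe_le_norm _))

lemma modeStarL_apply (U : ModeSpace) (p : ℤ × ℝ) :
    modeStarL U p = starRingEnd ℂ (U (-p.1, p.2)) := rfl

/-- The quadratic flux `(Y + Ȳ)(3Y - Ȳ) / 8` of the complexified shallow water system, polarized. -/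
def fluxL : ModeSpace →L[ℝ] ModeSpace →L[ℝ] ModeSpace :=
  (1 / 8 : ℝ) • modeConvL.bilinearComp (ContinuousLinearMap.id ℝ ModeSpace + modeStarL)
    ((3 : ℝ) • ContinuousLinearMap.id ℝ ModeSpace - modeStarL)

/-- The growing mode `e^{t + ix}` of the linearized system, in coordinates normalized by
`expWeight`; hence the factor `2 = 1 / modeWeight 1`. -/
def growingMode : ModeSpace :=
  BoundedContinuousFunction.ofNormedAddCommGroup
    (fun p => if p.1 = 1 then ((2 * Real.exp (min p.2 0 / 2) : ℝ) : ℂ) else 0)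
    (continuous_prod_of_discrete_left.mpr fun l => by
      by_cases hl : l = 1
      · simp only [hl, if_true]
        fun_prop
      · simp only [hl, if_false]
        fun_prop)
    2 (fun p => by
      split_ifs with h
      · have : Real.exp (min p.2 0 / 2) ≤ 1 :=
          Real.exp_le_one_iff.mpr (by linarith [min_le_right p.2 0])
        rw [Complex.norm_real, Real.norm_of_nonneg (by positivity)]
        linarith
      · simp)

lemma growingMode_apply (p : ℤ × ℝ) :
    growingMode p = if p.1 = 1 then ((2 * Real.exp (min p.2 0 / 2) : ℝ) : ℂ) else 0 := rfl

lemma norm_growingMode_le : ‖growingMode‖ ≤ 2 :=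
  BoundedContinuousFunction.norm_ofNormedAddCommGroup_le _ zero_le_two _

end ModeSpace

section Duhamel

/-- The decay rate, in normalized coordinates, of the kernel inverting the linear flow on the `l`-th
mode. -/
def duhamelRate (l : ℤ) : ℝ := |(l : ℝ)| - (l : ℝ) / 2

lemma abs_le_two_mul_duhamelRate (l : ℤ) : |(l : ℝ)| ≤ 2 * duhamelRate l := by
  unfold duhamelRate
  linarith [le_abs_self (l : ℝ)]

lemma duhamelRate_pos {l : ℤ} (hl : l ≠ 0) : 0 < duhamelRate l := by
  have : 0 < |(l : ℝ)| := by positivity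
  linarith [abs_le_two_mul_duhamelRate l]

/-- The Duhamel integral of the forcing `G`, taken from `t = ∞` on the modes `l > 0` and from
`t = -∞` on the modes `l < 0`, so that its kernel always decays. -/
def duhamelFun (G : ModeSpace) (p : ℤ × ℝ) : ℂ :=
  Complex.I * |(p.1 : ℝ)| * ∫ r in Ioi (0 : ℝ),
    Real.exp (-duhamelRate p.1 * r) • G (p.1, p.2 + p.1.sign * r)

lemma duhamelFun_zero_mode (G : ModeSpace) (t : ℝ) : duhamelFun G (0, t) = 0 := by
  simp [duhamelFun]

lemma norm_duhamelFun_le (G : ModeSpace) (p : ℤ × ℝ) : ‖duhamelFun G p‖ ≤ 2 * ‖G‖ := by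
  obtain ⟨l, t⟩ := p
  rcases eq_or_ne l 0 with rfl | hl
  · rw [duhamelFun_zero_mode, norm_zero]
    positivity
  have hrate := duhamelRate_pos hl
  have hintegral := norm_integral_exp_smul_le hrate
    (g := fun r => G (l, t + l.sign * r)) (fun r => G.norm_coe_le_norm _)
  calc ‖duhamelFun G (l, t)‖ ≤ |(l : ℝ)| * (‖G‖ / duhamelRate l) := by
        simpa [duhamelFun] using mul_le_mul_of_nonneg_left hintegral (abs_nonneg (l : ℝ))
    _ ≤ 2 * duhamelRate l * (‖G‖ / duhamelRate l) := by
        gcongr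
        exact abs_le_two_mul_duhamelRate l
    _ = 2 * ‖G‖ := by field_simp

lemma hasDerivAt_duhamelFun (G : ModeSpace) (l : ℤ) (t : ℝ) :
    HasDerivAt (fun t => duhamelFun G (l, t))
      ((l - |(l : ℝ)| / 2) * duhamelFun G (l, t) - Complex.I * l * G (l, t)) t := by
  have hbound : ∀ s, ‖G (l, s)‖ ≤ ‖G‖ := fun s => G.norm_coe_le_norm _
  rcases lt_trichotomy l 0 with hl | rfl | hl
  · have habs : |(l : ℝ)| = -l := abs_of_neg (by exact_mod_cast hl)
    have h := (hasDerivAt_integral_exp_smul_comp_sub (duhamelRate_pos hl.ne)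
      (continuous_mode G l) hbound t).const_mul (Complex.I * |(l : ℝ)|)
    simp only [duhamelFun, Int.sign_eq_neg_one_of_neg hl, Int.cast_neg, Int.cast_one, neg_one_mul,
      ← sub_eq_add_neg]
    refine h.congr_deriv ?_
    simp only [duhamelRate, habs, Complex.real_smul]
    push_cast
    ring
  · simpa [duhamelFun_zero_mode] using hasDerivAt_const t (0 : ℂ)
  · have habs : |(l : ℝ)| = l := abs_of_pos (by exact_mod_cast hl)
    have h := (hasDerivAt_integral_exp_smul_comp_add (duhamelRate_pos hl.ne')
      (continuous_mode G l) hbound t).const_mul (Complex.I * |(l : ℝ)|)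
    simp only [duhamelFun, Int.sign_eq_one_of_pos hl, Int.cast_one, one_mul]
    refine h.congr_deriv ?_
    simp only [duhamelRate, habs, Complex.real_smul]
    push_cast
    ring

/-- The Duhamel operator on mode families, see `duhamelFun`. -/
def duhamel (G : ModeSpace) : ModeSpace :=
  BoundedContinuousFunction.ofNormedAddCommGroup (duhamelFun G)
    (continuous_prod_of_discrete_left.mpr fun l =>
      continuous_iff_continuousAt.mpr fun t => (hasDerivAt_duhamelFun G l t).continuousAt)
    (2 * ‖G‖) (norm_duhamelFun_le G)

lemma duhamel_apply (G : ModeSpace) (p : ℤ × ℝ) : duhamel G p = duhamelFun G p := rfl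

lemma norm_duhamel_le (G : ModeSpace) : ‖duhamel G‖ ≤ 2 * ‖G‖ :=
  BoundedContinuousFunction.norm_ofNormedAddCommGroup_le _ (by positivity) _

lemma integrableOn_duhamel_integrand (G : ModeSpace) {l : ℤ} (hl : l ≠ 0) (t : ℝ) :
    IntegrableOn (fun r : ℝ => Real.exp (-duhamelRate l * r) • G (l, t + l.sign * r)) (Ioi 0) :=
  integrableOn_exp_smul (duhamelRate_pos hl) ((continuous_mode G l).comp (by fun_prop))
    (fun r => G.norm_coe_le_norm (l, t + l.sign * r)) 0

/-- `duhamel` as a bounded linear map. -/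
def duhamelL : ModeSpace →L[ℝ] ModeSpace :=
  LinearMap.mkContinuous
    { toFun := duhamel
      map_add' := fun U V => by
        ext ⟨l, t⟩
        rcases eq_or_ne l 0 with rfl | hl
        · simp [duhamel_apply, duhamelFun_zero_mode]
        simp only [duhamel_apply, duhamelFun, BoundedContinuousFunction.add_apply, smul_add]
        rw [integral_add (integrableOn_duhamel_integrand U hl t)
          (integrableOn_duhamel_integrand V hl t), mul_add]
      map_smul' := fun c U => by
        ext ⟨l, t⟩
        simp only [duhamel_apply, duhamelFun, BoundedContinuousFunction.smul_apply,
          RingHom.id_apply, smul_comm _ c]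
        rw [integral_smul, mul_smul_comm] }
    2 norm_duhamel_le

end Duhamel

section ModeSolution

/-- Coefficient families dominated by a multiple of `expWeight`. -/
def ModeBounded (M : ℝ) (c : ℤ → ℝ → ℂ) : Prop := ∀ l t, ‖c l t‖ ≤ M * expWeight l t

lemma ModeBounded.nonneg {M : ℝ} {c : ℤ → ℝ → ℂ} (hc : ModeBounded M c) : 0 ≤ M :=
  nonneg_of_mul_nonneg_left ((norm_nonneg _).trans (hc 0 0)) (expWeight_pos 0 0)

lemma ModeBounded.mono {M N : ℝ} {c : ℤ → ℝ → ℂ} (hc : ModeBounded M c) (hMN : M ≤ N) :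
    ModeBounded N c :=
  fun l t => (hc l t).trans (mul_le_mul_of_nonneg_right hMN (expWeight_pos l t).le)

lemma ModeBounded.add {M N : ℝ} {a b : ℤ → ℝ → ℂ} (ha : ModeBounded M a) (hb : ModeBounded N b) :
    ModeBounded (M + N) (a + b) := fun l t => by
  rw [add_mul]
  exact (norm_add_le _ _).trans (add_le_add (ha l t) (hb l t))

lemma ModeBounded.sub {M N : ℝ} {a b : ℤ → ℝ → ℂ} (ha : ModeBounded M a) (hb : ModeBounded N b) :
    ModeBounded (M + N) (a - b) := fun l t => by
  rw [add_mul]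
  exact (norm_sub_le _ _).trans (add_le_add (ha l t) (hb l t))

lemma ModeBounded.smul {𝕜 : Type*} [NormedField 𝕜] [NormedSpace 𝕜 ℂ] {M : ℝ} {c : ℤ → ℝ → ℂ}
    (hc : ModeBounded M c) (r : 𝕜) : ModeBounded (‖r‖ * M) (r • c) := fun l t => by
  rw [Pi.smul_apply, Pi.smul_apply, norm_smul, mul_assoc]
  exact mul_le_mul_of_nonneg_left (hc l t) (norm_nonneg r)

/-- The Fourier coefficients of the complex conjugate of `∑ c l t e^{ilx}`. -/
def conjModes (c : ℤ → ℝ → ℂ) (l : ℤ) (t : ℝ) : ℂ := starRingEnd ℂ (c (-l) t)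

lemma ModeBounded.conjModes {M : ℝ} {c : ℤ → ℝ → ℂ} (hc : ModeBounded M c) :
    ModeBounded M (conjModes c) := fun l t => by
  rw [KineticEuler.conjModes, RCLike.norm_conj, ← expWeight_neg]
  exact hc (-l) t

/-- The Fourier coefficients of the product of `∑ a l t e^{ilx}` and `∑ b l t e^{ilx}`. -/
def convModes (a b : ℤ → ℝ → ℂ) (l : ℤ) (t : ℝ) : ℂ := ∑' j, a j t * b (l - j) t

lemma ModeBounded.convModes {M N : ℝ} {a b : ℤ → ℝ → ℂ} (ha : ModeBounded M a)
    (hb : ModeBounded N b) : ModeBounded (4 * modeWeightSum * (M * N)) (convModes a b) := by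
  intro l t
  rw [mul_assoc]
  refine tsum_of_norm_bounded ((hasSum_modeWeight_conv l).mul_right (M * N * expWeight l t))
    fun j => ?_
  rw [norm_mul]
  calc ‖a j t‖ * ‖b (l - j) t‖ ≤ M * expWeight j t * (N * expWeight (l - j) t) := by
        gcongr
        exacts [(norm_nonneg _).trans (ha j t), ha j t, hb (l - j) t]
    _ = M * N * (expWeight j t * expWeight (l - j) t) := by ring
    _ ≤ M * N * (2 * (modeWeight j + modeWeight (l - j)) * expWeight l t) :=
        mul_le_mul_of_nonneg_left (expWeight_mul_le l j t) (mul_nonneg ha.nonneg hb.nonneg)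
    _ = 2 * (modeWeight j + modeWeight (l - j)) * (M * N * expWeight l t) := by ring

/-- The Fourier coefficients of the flux `(Y + Ȳ)(3Y - Ȳ) / 8` of `Y = ∑ y l t e^{ilx}`. -/
def modeFlux (y : ℤ → ℝ → ℂ) : ℤ → ℝ → ℂ :=
  (1 / 8 : ℝ) • convModes (y + conjModes y) ((3 : ℝ) • y - conjModes y)

lemma ModeBounded.modeFlux {M : ℝ} {y : ℤ → ℝ → ℂ} (hy : ModeBounded M y) :
    ModeBounded (4 * modeWeightSum * M ^ 2) (modeFlux y) := by
  have h := ((hy.add hy.conjModes).convModes ((hy.smul (3 : ℝ)).sub hy.conjModes)).smul (1 / 8 : ℝ)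
  refine h.mono (le_of_eq ?_)
  norm_num
  ring

/-- The Fourier coefficients represented by an element of the normalized space. -/
def unweight : ModeSpace →ₗ[ℝ] (ℤ → ℝ → ℂ) where
  toFun U l t := expWeight l t • U (l, t)
  map_add' U V := by ext l t; simp
  map_smul' c U := by ext l t; simp [mul_left_comm]

lemma unweight_apply (U : ModeSpace) (l : ℤ) (t : ℝ) :
    unweight U l t = expWeight l t • U (l, t) := rfl

lemma continuous_unweight (U : ModeSpace) (l : ℤ) : Continuous (unweight U l) :=
  (continuous_expWeight l).smul (continuous_mode U l)

lemma modeBounded_unweight (U : ModeSpace) : ModeBounded ‖U‖ (unweight U) := fun l t => by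
  rw [unweight_apply, norm_smul, Real.norm_of_nonneg (expWeight_pos l t).le, mul_comm]
  exact mul_le_mul_of_nonneg_right (U.norm_coe_le_norm _) (expWeight_pos l t).le

lemma unweight_modeStarL (U : ModeSpace) : unweight (modeStarL U) = conjModes (unweight U) := by
  ext l t
  simp [unweight_apply, conjModes, modeStarL_apply, expWeight_neg]

lemma unweight_modeConv (U V : ModeSpace) :
    unweight (modeConv U V) = convModes (unweight U) (unweight V) := by
  ext l t
  rw [unweight_apply, modeConv_apply, convModes, ← tsum_const_smul'']
  refine tsum_congr fun j => ?_
  rw [smul_smul, convKernel, mul_div_cancel₀ _ (expWeight_pos l t).ne', unweight_apply,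
    unweight_apply, smul_mul_smul_comm]

lemma unweight_fluxL (U : ModeSpace) : unweight (fluxL U U) = modeFlux (unweight U) := by
  have hflux : fluxL U U
      = (1 / 8 : ℝ) • modeConv (U + modeStarL U) ((3 : ℝ) • U - modeStarL U) := rfl
  rw [hflux, map_smul, unweight_modeConv, map_add, map_sub, map_smul, unweight_modeStarL, modeFlux]

lemma unweight_growingMode_apply (l : ℤ) (t : ℝ) :
    unweight growingMode l t = if l = 1 then (Real.exp (min t 0) : ℂ) else 0 := by
  rw [unweight_apply, growingMode_apply]
  split_ifs with hl
  · have hhalves : Real.exp (min t 0) = Real.exp (min t 0 / 2) * Real.exp (min t 0 / 2) := by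
      rw [← Real.exp_add, add_halves]
    subst hl
    rw [hhalves, expWeight, modeWeight, Complex.real_smul, ← Complex.ofReal_mul]
    congr 1
    norm_num
    ring_nf
  · exact smul_zero _

lemma hasDerivAt_unweight_growingMode (l : ℤ) {t : ℝ} (ht : t < 0) :
    HasDerivAt (unweight growingMode l) (l * unweight growingMode l t) t := by
  rw [funext (unweight_growingMode_apply l)]
  split_ifs with hl
  · subst hl
    refine ((Real.hasDerivAt_exp t).ofReal_comp.congr_of_eventuallyEq ?_).congr_deriv
      (by simp [min_eq_left ht.le])
    filter_upwards [Iio_mem_nhds ht] with s hs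
    rw [min_eq_left (le_of_lt hs)]
  · simpa using hasDerivAt_const t (0 : ℂ)

lemma hasDerivAt_unweight_duhamel (G : ModeSpace) (l : ℤ) {t : ℝ} (ht : t < 0) :
    HasDerivAt (unweight (duhamel G) l)
      (l * unweight (duhamel G) l t - Complex.I * l * unweight G l t) t := by
  refine ((hasDerivAt_expWeight l ht).smul (hasDerivAt_duhamelFun G l t)).congr_deriv ?_
  simp only [unweight_apply, duhamel_apply, Complex.real_smul]
  push_cast
  ring

/-- The mode coefficients `y` of a solution, on `t < 0`, of the complexified shallow water system
`∂ₜY = -i∂ₓY - ∂ₓ((Y + Ȳ)(3Y - Ȳ)/8)`, with size at most `M`. -/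
structure IsModeSolution (M : ℝ) (y : ℤ → ℝ → ℂ) : Prop where
  bounded : ModeBounded M y
  continuous : ∀ l, Continuous (y l)
  zero_mode : ∀ t, y 0 t = 0
  hasDerivAt : ∀ l, ∀ t < 0, HasDerivAt (y l) (l * y l t - Complex.I * l * modeFlux y l t) t

lemma isModeSolution_unweight {U : ModeSpace} {δ M : ℝ}
    (hU : U = δ • growingMode + duhamel (fluxL U U)) (hM : ‖U‖ ≤ M) :
    IsModeSolution M (unweight U) where
  bounded := (modeBounded_unweight U).mono hM
  continuous := continuous_unweight U
  zero_mode t := by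
    rw [unweight_apply, hU]
    simp [growingMode_apply, duhamel_apply, duhamelFun_zero_mode]
  hasDerivAt l t ht := by
    have hsplit : unweight U = δ • unweight growingMode + unweight (duhamel (fluxL U U)) := by
      conv_lhs => rw [hU, map_add, map_smul]
    rw [← unweight_fluxL, hsplit]
    refine (((hasDerivAt_unweight_growingMode l ht).const_smul δ).add
      (hasDerivAt_unweight_duhamel (fluxL U U) l ht)).congr_deriv ?_
    simp only [Pi.add_apply, Pi.smul_apply, Complex.real_smul]
    ring

theorem exists_isModeSolution :
    ∃ C > 0, ∀ᶠ δ : ℝ in 𝓝[>] 0, ∃ y : ℤ → ℝ → ℂ, IsModeSolution (C * δ) y ∧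
      ModeBounded (C * δ ^ 2) (y - δ • unweight growingMode) := by
  have htendsto : Tendsto (fun δ : ℝ => δ • growingMode) (𝓝[>] 0) (𝓝 0) := by
    refine Tendsto.mono_left ?_ nhdsWithin_le_nhds
    simpa using (by fun_prop : Continuous fun δ : ℝ => δ • growingMode).tendsto 0
  have hsolve := eventually_exists_eq_add_bilinear
    ((ContinuousLinearMap.compL ℝ ModeSpace ModeSpace ModeSpace duhamelL).comp fluxL)
  refine ⟨4 + 32 * ‖fluxL‖, by positivity, ?_⟩
  filter_upwards [htendsto.eventually hsolve, Ioo_mem_nhdsGT one_pos]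
    with δ ⟨U, hU, hfix⟩ ⟨hδ_pos, hδ_lt⟩
  replace hfix : U = δ • growingMode + duhamel (fluxL U U) := hfix
  have hU_le : ‖U‖ ≤ 4 * δ := by
    rw [norm_smul, Real.norm_of_nonneg hδ_pos.le] at hU
    nlinarith [norm_growingMode_le]
  have hflux_le : ‖fluxL U U‖ ≤ 16 * ‖fluxL‖ * δ ^ 2 := by
    calc ‖fluxL U U‖ ≤ ‖fluxL‖ * ‖U‖ * ‖U‖ := fluxL.le_opNorm₂ U U
      _ ≤ ‖fluxL‖ * (4 * δ) * (4 * δ) := by gcongr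
      _ = 16 * ‖fluxL‖ * δ ^ 2 := by ring
  have hfluxδ : 0 ≤ ‖fluxL‖ * δ := by positivity
  refine ⟨unweight U, isModeSolution_unweight hfix (by nlinarith), ?_⟩
  have hdiff : unweight U - δ • unweight growingMode = unweight (duhamel (fluxL U U)) := by
    rw [← map_smul, ← map_sub, sub_eq_of_eq_add' hfix]
  rw [hdiff]
  refine (modeBounded_unweight _).mono ((norm_duhamel_le _).trans ?_)
  nlinarith [sq_nonneg δ]

end ModeSolution

section Smoothness

lemma iteratedDeriv_eq_of_hasDerivAt_succ {𝕜 E : Type*} [NontriviallyNormedField 𝕜]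
    [NormedAddCommGroup E] [NormedSpace 𝕜 E] {u : ℕ → 𝕜 → E}
    (h : ∀ k x, HasDerivAt (u k) (u (k + 1) x) x) (k : ℕ) : iteratedDeriv k (u 0) = u k := by
  induction k with
  | zero => exact iteratedDeriv_zero
  | succ k ih =>
    rw [iteratedDeriv_succ, ih]
    exact funext fun x => (h k x).deriv

lemma contDiff_of_hasDerivAt_succ {𝕜 E : Type*} [NontriviallyNormedField 𝕜]
    [NormedAddCommGroup E] [NormedSpace 𝕜 E] {u : ℕ → 𝕜 → E}
    (h : ∀ k x, HasDerivAt (u k) (u (k + 1) x) x) : ContDiff 𝕜 ∞ (u 0) :=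
  contDiff_of_differentiable_iteratedDeriv fun k _ => by
    rw [iteratedDeriv_eq_of_hasDerivAt_succ h]
    exact fun x => (h k x).differentiableAt

lemma leibniz_of_hasDerivAt_succ {𝕜 A : Type*} [NontriviallyNormedField 𝕜] [NormedCommRing A]
    [NormedAlgebra 𝕜 A] {u v w : ℕ → 𝕜 → A} (hu : ∀ k x, HasDerivAt (u k) (u (k + 1) x) x)
    (hv : ∀ k x, HasDerivAt (v k) (v (k + 1) x) x) (hw : ∀ k x, HasDerivAt (w k) (w (k + 1) x) x)
    (h : u 0 * v 0 = w 0) (k : ℕ) (x : 𝕜) :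
    w k x = ∑ i ∈ Finset.range (k + 1), k.choose i * u i x * v (k - i) x := by
  have huk := (contDiff_of_hasDerivAt_succ hu).contDiffAt (x := x)
  have hvk := (contDiff_of_hasDerivAt_succ hv).contDiffAt (x := x)
  rw [← iteratedDeriv_eq_of_hasDerivAt_succ hw, ← h,
    iteratedDeriv_mul (huk.of_le (by exact_mod_cast le_top)) (hvk.of_le (by exact_mod_cast le_top))]
  simp only [iteratedDeriv_eq_of_hasDerivAt_succ hu, iteratedDeriv_eq_of_hasDerivAt_succ hv]

lemma contDiffOn_succ_of_hasDerivAt_partials {E : Type*} [NormedAddCommGroup E] [NormedSpace ℝ E]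
    {U : Set (ℝ × ℝ)} (hU : IsOpen U) {u ut ux : ℝ → ℝ → E} {n : ℕ}
    (ht : ∀ z ∈ U, HasDerivAt (fun t => u t z.2) (ut z.1 z.2) z.1)
    (hx : ∀ z ∈ U, HasDerivAt (u z.1) (ux z.1 z.2) z.2)
    (hut : ContDiffOn ℝ n (fun z : ℝ × ℝ => ut z.1 z.2) U)
    (hux : ContDiffOn ℝ n (fun z : ℝ × ℝ => ux z.1 z.2) U) :
    ContDiffOn ℝ (n + 1) (fun z : ℝ × ℝ => u z.1 z.2) U := by
  rw [contDiffOn_succ_iff_hasFDerivWithinAt_of_uniqueDiffOn hU.uniqueDiffOn]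
  let L : E →L[ℝ] ℝ →L[ℝ] E := ContinuousLinearMap.toSpanSingletonCLE.toContinuousLinearMap
  refine ⟨by simp, fun z => (L (ut z.1 z.2)).coprod (L (ux z.1 z.2)), ?_, fun z hz => ?_⟩
  · have hcoprod : (fun z : ℝ × ℝ => (L (ut z.1 z.2)).coprod (L (ux z.1 z.2)))
        = fun z => (L (ut z.1 z.2)).comp (ContinuousLinearMap.fst ℝ ℝ ℝ) +
          (L (ux z.1 z.2)).comp (ContinuousLinearMap.snd ℝ ℝ ℝ) := by
      ext z <;> simp
    rw [hcoprod]
    exact ((L.contDiff.comp_contDiffOn hut).clm_comp contDiffOn_const).add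
      ((L.contDiff.comp_contDiffOn hux).clm_comp contDiffOn_const)
  · have hev : ∀ᶠ w in 𝓝 z, w ∈ U := hU.mem_nhds hz
    exact (hasStrictFDerivAt_uncurry_coprod (f := u) (f₁ := fun t x => L (ut t x))
      (f₂ := fun t x => L (ux t x)) (hev.mono fun w hw => (ht w hw).hasFDerivAt)
      (hev.mono fun w hw => (hx w hw).hasFDerivAt)
      (L.continuous.continuousAt.comp (hut.continuousOn.continuousAt (hU.mem_nhds hz)))
      (L.continuous.continuousAt.comp
        (hux.continuousOn.continuousAt (hU.mem_nhds hz)))).hasFDerivAt.hasFDerivWithinAt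

end Smoothness

section FourierSeries

/-- The `l`-th term of the `k`-times differentiated Fourier series `∑ c l t e^{ilx}`. -/
def fourierTerm (k : ℕ) (c : ℤ → ℝ → ℂ) (t x : ℝ) (l : ℤ) : ℂ :=
  (Complex.I * l) ^ k * c l t * Complex.exp (Complex.I * l * x)

/-- The `k`-th `x`-derivative of the Fourier series `∑ c l t e^{ilx}`. -/
def fourierSeries (k : ℕ) (c : ℤ → ℝ → ℂ) (t x : ℝ) : ℂ := ∑' l, fourierTerm k c t x l

variable {M N t : ℝ} {a b c : ℤ → ℝ → ℂ}

lemma norm_fourierTerm (k : ℕ) (c : ℤ → ℝ → ℂ) (t x : ℝ) (l : ℤ) :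
    ‖fourierTerm k c t x l‖ = |(l : ℝ)| ^ k * ‖c l t‖ := by
  have hexp : ‖Complex.exp (Complex.I * l * x)‖ = 1 := by
    rw [show Complex.I * l * x = ((l * x : ℝ) : ℂ) * Complex.I by push_cast; ring,
      Complex.norm_exp_ofReal_mul_I]
  simp [fourierTerm, hexp]

lemma expWeight_le_modeWeight (l : ℤ) (t : ℝ) : expWeight l t ≤ modeWeight l :=
  mul_le_of_le_one_right (modeWeight_pos l).le <| Real.exp_le_one_iff.mpr <|
    mul_nonpos_of_nonneg_of_nonpos (by positivity) (min_le_right _ _)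

lemma expWeight_le_exp (l : ℤ) {t ε : ℝ} (ht : t ≤ -ε) (hε : 0 ≤ ε) :
    expWeight l t ≤ Real.exp (-(ε / 2) * |(l : ℝ)|) := by
  rw [expWeight, min_eq_left (by linarith)]
  refine (mul_le_of_le_one_left (Real.exp_pos _).le (modeWeight_le_one l)).trans ?_
  exact Real.exp_le_exp.mpr (by nlinarith [abs_nonneg (l : ℝ)])

lemma norm_fourierTerm_le (hc : ModeBounded M c) (k : ℕ) {t ε : ℝ} (ht : t ≤ -ε) (hε : 0 ≤ ε)
    (x : ℝ) (l : ℤ) :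
    ‖fourierTerm k c t x l‖ ≤ M * (|(l : ℝ)| ^ k * Real.exp (-(ε / 2) * |(l : ℝ)|)) := by
  rw [norm_fourierTerm, mul_left_comm]
  gcongr
  exact (hc l t).trans (mul_le_mul_of_nonneg_left (expWeight_le_exp l ht hε) hc.nonneg)

lemma summable_fourierTerm_bound (M : ℝ) (k : ℕ) {ε : ℝ} (hε : 0 < ε) :
    Summable fun l : ℤ => M * (|(l : ℝ)| ^ k * Real.exp (-(ε / 2) * |(l : ℝ)|)) := by
  have h := Real.summable_pow_mul_exp_neg_nat_mul k (half_pos hε)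
  exact (Summable.of_nat_of_neg (by simpa using h) (by simpa using h)).mul_left M

lemma summable_norm_fourierTerm (hc : ModeBounded M c) (k : ℕ) (ht : t < 0) (x : ℝ) :
    Summable fun l => ‖fourierTerm k c t x l‖ :=
  Summable.of_nonneg_of_le (fun l => norm_nonneg _)
    (fun l => norm_fourierTerm_le hc k (by rw [neg_neg]) (neg_pos.mpr ht).le x l)
    (summable_fourierTerm_bound M k (neg_pos.mpr ht))

lemma summable_fourierTerm (hc : ModeBounded M c) (k : ℕ) (ht : t < 0) (x : ℝ) :
    Summable (fourierTerm k c t x) :=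
  (summable_norm_fourierTerm hc k ht x).of_norm

lemma fourierSeries_add (ha : ModeBounded M a) (hb : ModeBounded N b) (k : ℕ) (ht : t < 0)
    (x : ℝ) : fourierSeries k (a + b) t x = fourierSeries k a t x + fourierSeries k b t x := by
  rw [fourierSeries, fourierSeries, fourierSeries,
    ← (summable_fourierTerm ha k ht x).tsum_add (summable_fourierTerm hb k ht x)]
  refine tsum_congr fun l => ?_
  simp only [fourierTerm, Pi.add_apply]
  ring

lemma fourierSeries_sub (ha : ModeBounded M a) (hb : ModeBounded N b) (k : ℕ) (ht : t < 0)
    (x : ℝ) : fourierSeries k (a - b) t x = fourierSeries k a t x - fourierSeries k b t x := by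
  rw [fourierSeries, fourierSeries, fourierSeries,
    ← (summable_fourierTerm ha k ht x).tsum_sub (summable_fourierTerm hb k ht x)]
  refine tsum_congr fun l => ?_
  simp only [fourierTerm, Pi.sub_apply]
  ring

lemma fourierSeries_smul {𝕜 : Type*} [NormedField 𝕜] [NormedAlgebra 𝕜 ℂ] (r : 𝕜)
    (c : ℤ → ℝ → ℂ) (k : ℕ) (t x : ℝ) :
    fourierSeries k (r • c) t x = r • fourierSeries k c t x := by
  rw [fourierSeries, fourierSeries, ← tsum_const_smul'']
  refine tsum_congr fun l => ?_
  simp only [fourierTerm, Pi.smul_apply, mul_smul_comm, smul_mul_assoc]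

lemma fourierSeries_conjModes (c : ℤ → ℝ → ℂ) (k : ℕ) (t x : ℝ) :
    fourierSeries k (conjModes c) t x = starRingEnd ℂ (fourierSeries k c t x) := by
  rw [fourierSeries, fourierSeries, Complex.conj_tsum, ← (Equiv.neg ℤ).tsum_eq]
  refine tsum_congr fun l => ?_
  simp [fourierTerm, conjModes, ← Complex.exp_conj]

lemma fourierSeries_mul (ha : ModeBounded M a) (hb : ModeBounded N b) (ht : t < 0) (x : ℝ) :
    fourierSeries 0 a t x * fourierSeries 0 b t x = fourierSeries 0 (convModes a b) t x := by
  have ha' := summable_norm_fourierTerm ha 0 ht x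
  have hb' := summable_norm_fourierTerm hb 0 ht x
  let e : ℤ × ℤ ≃ ℤ × ℤ :=
    { toFun := fun p => (p.2, p.1 - p.2)
      invFun := fun p => (p.1 + p.2, p.1)
      left_inv := fun p => by simp
      right_inv := fun p => by simp }
  have hsummable : Summable fun p : ℤ × ℤ =>
      fourierTerm 0 a t x (e p).1 * fourierTerm 0 b t x (e p).2 :=
    e.summable_iff.mpr (summable_mul_of_summable_norm ha' hb')
  rw [fourierSeries, fourierSeries, tsum_mul_tsum_of_summable_norm ha' hb', ← e.tsum_eq,
    hsummable.tsum_prod]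
  refine tsum_congr fun l => ?_
  rw [fourierTerm, pow_zero, one_mul, convModes, ← tsum_mul_right]
  refine tsum_congr fun j => ?_
  have hexp : Complex.exp (Complex.I * l * x)
      = Complex.exp (Complex.I * j * x) * Complex.exp (Complex.I * ((l - j : ℤ) : ℂ) * x) := by
    rw [← Complex.exp_add]
    congr 1
    push_cast
    ring
  simp only [e, Equiv.coe_fn_mk, fourierTerm, pow_zero, one_mul, hexp]
  ring

lemma fourierSeries_periodic (k : ℕ) (c : ℤ → ℝ → ℂ) (t : ℝ) :
    Function.Periodic (fourierSeries k c t) (2 * Real.pi) := fun x => by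
  refine tsum_congr fun l => ?_
  have hphase : Complex.I * l * ((x + 2 * Real.pi : ℝ) : ℂ)
      = Complex.I * l * x + l * (2 * Real.pi * Complex.I) := by push_cast; ring
  rw [fourierTerm, fourierTerm, hphase, Complex.exp_add, Complex.exp_int_mul_two_pi_mul_I, mul_one]

lemma hasDerivAt_fourierTerm (k : ℕ) (c : ℤ → ℝ → ℂ) (t x : ℝ) (l : ℤ) :
    HasDerivAt (fun x => fourierTerm k c t x l) (fourierTerm (k + 1) c t x l) x := by
  have hphase : HasDerivAt (fun x : ℝ => Complex.I * l * (x : ℂ)) (Complex.I * l * 1) x :=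
    (Complex.ofRealCLM.hasDerivAt (x := x)).const_mul (Complex.I * l)
  refine (hphase.cexp.const_mul ((Complex.I * l) ^ k * c l t)).congr_deriv ?_
  rw [fourierTerm]
  ring

lemma hasDerivAt_fourierSeries (hc : ModeBounded M c) (k : ℕ) (ht : t < 0) (x : ℝ) :
    HasDerivAt (fourierSeries k c t) (fourierSeries (k + 1) c t x) x :=
  hasDerivAt_tsum_of_isPreconnected (summable_fourierTerm_bound M (k + 1) (neg_pos.mpr ht))
    isOpen_univ isPreconnected_univ (fun l y _ => hasDerivAt_fourierTerm k c t y l)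
    (fun l y _ => norm_fourierTerm_le hc (k + 1) (by rw [neg_neg]) (neg_pos.mpr ht).le y l)
    (mem_univ 0) (summable_fourierTerm hc k ht 0) (mem_univ x)

lemma continuous_fourierSeries (hc : ModeBounded M c) (k : ℕ) (ht : t < 0) :
    Continuous (fourierSeries k c t) :=
  continuous_iff_continuousAt.mpr fun x => (hasDerivAt_fourierSeries hc k ht x).continuousAt

lemma hasDerivAt_fourierSeries_time (hb : ModeBounded M b) (hc : ModeBounded N c)
    (hderiv : ∀ l, ∀ t < 0, HasDerivAt (c l) (Complex.I * l * b l t) t)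
    (k : ℕ) (ht : t < 0) (x : ℝ) :
    HasDerivAt (fun t => fourierSeries k c t x) (fourierSeries (k + 1) b t x) t := by
  have hmem : t ∈ Iio (t / 2) := mem_Iio.mpr (by linarith)
  refine hasDerivAt_tsum_of_isPreconnected
    (g := fun l t => fourierTerm k c t x l) (g' := fun l t => fourierTerm (k + 1) b t x l)
    (summable_fourierTerm_bound M (k + 1) (ε := -(t / 2)) (by linarith))
    isOpen_Iio isPreconnected_Iio (fun l s hs => ?_)
    (fun l s hs => norm_fourierTerm_le hb (k + 1) (by simpa using le_of_lt hs) (by linarith) x l)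
    hmem (summable_fourierTerm hc k ht x) hmem
  refine (((hderiv l s (by linarith [mem_Iio.mp hs])).const_mul ((Complex.I * l) ^ k)).mul_const
    (Complex.exp (Complex.I * l * x))).congr_deriv ?_
  rw [fourierTerm]
  ring

lemma isOpen_fst_neg : IsOpen {z : ℝ × ℝ | z.1 < 0} := isOpen_lt continuous_fst continuous_const

lemma continuousOn_fourierSeries (hc : ModeBounded M c) (hcont : ∀ l, Continuous (c l)) (k : ℕ) :
    ContinuousOn (fun z : ℝ × ℝ => fourierSeries k c z.1 z.2) {z | z.1 < 0} := by
  intro z hz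
  have hz_neg : z.1 < 0 := hz
  have hlocal : ContinuousOn (fun w : ℝ × ℝ => fourierSeries k c w.1 w.2) {w | w.1 < z.1 / 2} := by
    refine continuousOn_tsum (fun l => ?_)
      (summable_fourierTerm_bound M k (ε := -(z.1 / 2)) (by linarith))
      (fun l w hw => norm_fourierTerm_le hc k (by simpa using le_of_lt hw) (by linarith) w.2 l)
    have := hcont l
    unfold fourierTerm
    fun_prop
  have hopen : IsOpen {w : ℝ × ℝ | w.1 < z.1 / 2} := isOpen_lt continuous_fst continuous_const
  exact (hlocal.continuousAt
    (hopen.mem_nhds (show z.1 < z.1 / 2 by linarith))).continuousWithinAt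

lemma norm_fourierSeries_zero_le (hc : ModeBounded M c) (t x : ℝ) :
    ‖fourierSeries 0 c t x‖ ≤ M * modeWeightSum := by
  refine tsum_of_norm_bounded (summable_modeWeight.hasSum.mul_left M) fun l => ?_
  rw [norm_fourierTerm, pow_zero, one_mul]
  exact (hc l t).trans (mul_le_mul_of_nonneg_left (expWeight_le_modeWeight l t) hc.nonneg)

lemma expWeight_le_exp_mul_exp {l : ℤ} (hl : l ≠ 0) {t : ℝ} (ht : t ≤ -1) :
    expWeight l t ≤ Real.exp (-(1 / 2) * |(l : ℝ)|) * Real.exp ((t + 1) / 2) := by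
  have hl_abs : 1 ≤ |(l : ℝ)| := by exact_mod_cast Int.one_le_abs hl
  rw [expWeight, min_eq_left (by linarith), ← Real.exp_add]
  refine (mul_le_of_le_one_left (Real.exp_pos _).le (modeWeight_le_one l)).trans ?_
  exact Real.exp_le_exp.mpr (by nlinarith)

lemma exists_norm_fourierSeries_le_exp (hc : ModeBounded M c) (hzero : ∀ t, c 0 t = 0) (k : ℕ) :
    ∃ C, ∀ t ≤ -1, ∀ x, ‖fourierSeries k c t x‖ ≤ C * Real.exp (t / 2) := by
  refine ⟨(∑' l : ℤ, M * (|(l : ℝ)| ^ k * Real.exp (-(1 / 2) * |(l : ℝ)|))) * Real.exp (1 / 2),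
    fun t ht x => ?_⟩
  rw [mul_assoc, ← Real.exp_add, ← add_div, add_comm 1 t]
  refine tsum_of_norm_bounded ((summable_fourierTerm_bound M k one_pos).hasSum.mul_right _)
    fun l => ?_
  rw [norm_fourierTerm]
  rcases eq_or_ne l 0 with rfl | hl
  · rw [hzero, norm_zero, mul_zero]
    have := hc.nonneg
    positivity
  calc |(l : ℝ)| ^ k * ‖c l t‖
      ≤ |(l : ℝ)| ^ k * (M * (Real.exp (-(1 / 2) * |(l : ℝ)|) * Real.exp ((t + 1) / 2))) := by
        gcongr
        exact (hc l t).trans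
          (mul_le_mul_of_nonneg_left (expWeight_le_exp_mul_exp hl ht) hc.nonneg)
    _ = M * (|(l : ℝ)| ^ k * Real.exp (-(1 / 2) * |(l : ℝ)|)) * Real.exp ((t + 1) / 2) := by ring

lemma integral_fourierSeries_eq_zero (hc : ModeBounded M c) (hzero : ∀ t, c 0 t = 0)
    (ht : t < 0) : ∫ x in (0 : ℝ)..(2 * Real.pi), fourierSeries 0 c t x = 0 := by
  let primitive : ℤ → ℝ → ℂ := fun l t => c l t / (Complex.I * l)
  have hbounded : ModeBounded M primitive := fun l t => by
    refine le_trans ?_ (hc l t)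
    simp only [primitive, norm_div, norm_mul, Complex.norm_I, one_mul, Complex.norm_intCast]
    rcases eq_or_ne l 0 with rfl | hl
    · simp
    · exact div_le_self (norm_nonneg _) (by exact_mod_cast Int.one_le_abs hl)
  have hseries : fourierSeries 1 primitive t = fourierSeries 0 c t := by
    ext x
    refine tsum_congr fun l => ?_
    simp only [fourierTerm, primitive]
    rcases eq_or_ne l 0 with rfl | hl
    · simp [hzero]
    · field_simp
  rw [← hseries, intervalIntegral.integral_eq_sub_of_hasDerivAt
    (fun x _ => hasDerivAt_fourierSeries hbounded 0 ht x)
    ((continuous_fourierSeries hbounded 1 ht).intervalIntegrable _ _), sub_eq_zero]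
  exact (fourierSeries_periodic 0 primitive t).eq

end FourierSeries

section AncientSolution

variable {M t : ℝ} {y : ℤ → ℝ → ℂ}

lemma fourierSeries_modeFlux (hy : ModeBounded M y) (k : ℕ) (ht : t < 0) (x : ℝ) :
    fourierSeries k (modeFlux y) t x = (1 / 8 : ℝ) • ∑ i ∈ Finset.range (k + 1), k.choose i *
      (fourierSeries i y t x + starRingEnd ℂ (fourierSeries i y t x)) *
      ((3 : ℝ) • fourierSeries (k - i) y t x - starRingEnd ℂ (fourierSeries (k - i) y t x)) := by
  have hsum := hy.add hy.conjModes
  have hthree := hy.smul (3 : ℝ)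
  have hdiff := hthree.sub hy.conjModes
  have hleibniz := leibniz_of_hasDerivAt_succ
    (fun k x => hasDerivAt_fourierSeries hsum k ht x)
    (fun k x => hasDerivAt_fourierSeries hdiff k ht x)
    (fun k x => hasDerivAt_fourierSeries (hsum.convModes hdiff) k ht x)
    (funext fun x => fourierSeries_mul hsum hdiff ht x) k x
  rw [modeFlux, fourierSeries_smul, hleibniz]
  simp only [fourierSeries_add hy hy.conjModes _ ht, fourierSeries_sub hthree hy.conjModes _ ht,
    fourierSeries_smul, fourierSeries_conjModes]

lemma fourierSeries_one_modeFlux (hy : ModeBounded M y) (ht : t < 0) (x : ℝ) :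
    fourierSeries 1 (modeFlux y) t x =
      ⟨(fourierSeries 0 y t x).re * (fourierSeries 1 y t x).re,
        (fourierSeries 1 y t x).re * (fourierSeries 0 y t x).im +
          (fourierSeries 0 y t x).re * (fourierSeries 1 y t x).im⟩ := by
  rw [fourierSeries_modeFlux hy 1 ht x]
  apply Complex.ext <;> simp [Finset.sum_range_succ] <;> ring

namespace IsModeSolution

lemma hasDerivAt_fourierSeries_time (hy : IsModeSolution M y) (k : ℕ) (ht : t < 0) (x : ℝ) :
    HasDerivAt (fun t => fourierSeries k y t x)
      (-Complex.I * fourierSeries (k + 1) y t x - fourierSeries (k + 1) (modeFlux y) t x) t := by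
  have hlinear := hy.bounded.smul (-Complex.I)
  have hflux := hy.bounded.modeFlux
  have hderiv : ∀ l, ∀ t < 0,
      HasDerivAt (y l) (Complex.I * l * ((-Complex.I) • y - modeFlux y) l t) t :=
    fun l t ht => (hy.hasDerivAt l t ht).congr_deriv <| by
      simp only [Pi.sub_apply, Pi.smul_apply, smul_eq_mul]
      linear_combination (l * y l t) * Complex.I_mul_I
  have := KineticEuler.hasDerivAt_fourierSeries_time (hlinear.sub hflux) hy.bounded hderiv k ht x
  rwa [fourierSeries_sub hlinear hflux _ ht, fourierSeries_smul] at this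

lemma contDiffOn_fourierSeries (hy : IsModeSolution M y) (k n : ℕ) :
    ContDiffOn ℝ n (fun z : ℝ × ℝ => fourierSeries k y z.1 z.2) {z | z.1 < 0} := by
  induction n generalizing k with
  | zero => exact contDiffOn_zero.mpr (continuousOn_fourierSeries hy.bounded hy.continuous k)
  | succ n ih =>
    have hconj (i : ℕ) : ContDiffOn ℝ n
        (fun z : ℝ × ℝ => starRingEnd ℂ (fourierSeries i y z.1 z.2)) {z | z.1 < 0} :=
      Complex.conjCLE.contDiff.comp_contDiffOn (ih i)
    have hflux : ContDiffOn ℝ n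
        (fun z : ℝ × ℝ => fourierSeries (k + 1) (modeFlux y) z.1 z.2) {z | z.1 < 0} := by
      refine ContDiffOn.congr ?_ fun z hz => fourierSeries_modeFlux hy.bounded (k + 1) hz z.2
      exact (ContDiffOn.sum fun i _ => (contDiffOn_const.mul ((ih i).add (hconj i))).mul
        (((ih _).const_smul (3 : ℝ)).sub (hconj _))).const_smul (1 / 8 : ℝ)
    exact_mod_cast contDiffOn_succ_of_hasDerivAt_partials isOpen_fst_neg (ut := fun t x =>
        -Complex.I * fourierSeries (k + 1) y t x - fourierSeries (k + 1) (modeFlux y) t x)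
      (fun z hz => hy.hasDerivAt_fourierSeries_time k hz z.2)
      (fun z hz => hasDerivAt_fourierSeries hy.bounded k hz z.2)
      ((contDiffOn_const.mul (ih (k + 1))).sub hflux) (ih (k + 1))

end IsModeSolution

/-- Small, smooth, `2π`-periodic solutions on `t < 0`, decaying exponentially as `t → -∞`, of the
elliptic shallow-water system `Sₜ + S Sₓ = pₓ`, `pₜ + ((1 + p) S)ₓ = 0`. The sign of the pressure
term makes the linearization at `0` a Cauchy–Riemann system, so that modes of wave number `l` grow
like `e^{|l| t}`. -/
structure IsAncientSolution (S p : ℝ → ℝ → ℝ) : Prop where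
  contDiffOn_velocity : ContDiffOn ℝ ∞ (fun z : ℝ × ℝ => S z.1 z.2) {z | z.1 < 0}
  contDiffOn_density : ContDiffOn ℝ ∞ (fun z : ℝ × ℝ => p z.1 z.2) {z | z.1 < 0}
  periodic_velocity : ∀ t, Function.Periodic (S t) (2 * Real.pi)
  periodic_density : ∀ t, Function.Periodic (p t) (2 * Real.pi)
  momentum : ∀ t < 0, ∀ x, deriv (fun t => S t x) t = deriv (p t) x - S t x * deriv (S t) x
  mass : ∀ t < 0, ∀ x,
    deriv (fun t => p t x) t = -(deriv (S t) x * (1 + p t x) + S t x * deriv (p t) x)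
  integral_density : ∀ t < 0, ∫ x in (0 : ℝ)..(2 * Real.pi), p t x = 0
  exists_abs_iteratedDeriv_le : ∀ k, ∃ C, ∀ t ≤ -1, ∀ x,
    |iteratedDeriv k (S t) x| ≤ C * Real.exp (t / 2) ∧
      |iteratedDeriv k (p t) x| ≤ C * Real.exp (t / 2)
  abs_le : ∀ t x, |S t x| ≤ 1 / 4 ∧ |p t x| ≤ 1 / 4

lemma hasDerivAt_re_fourierSeries (hy : ModeBounded M y) (k : ℕ) (ht : t < 0) (x : ℝ) :
    HasDerivAt (fun x => (fourierSeries k y t x).re) (fourierSeries (k + 1) y t x).re x :=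
  Complex.reCLM.hasFDerivAt.comp_hasDerivAt x (hasDerivAt_fourierSeries hy k ht x)

lemma hasDerivAt_im_fourierSeries (hy : ModeBounded M y) (k : ℕ) (ht : t < 0) (x : ℝ) :
    HasDerivAt (fun x => (fourierSeries k y t x).im) (fourierSeries (k + 1) y t x).im x :=
  Complex.imCLM.hasFDerivAt.comp_hasDerivAt x (hasDerivAt_fourierSeries hy k ht x)

lemma exists_abs_iteratedDeriv_fourierSeries_le (hy : ModeBounded M y) (hzero : ∀ t, y 0 t = 0)
    (k : ℕ) : ∃ C, ∀ t ≤ -1, ∀ x,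
      |iteratedDeriv k (fun x => (fourierSeries 0 y t x).re) x| ≤ C * Real.exp (t / 2) ∧
        |iteratedDeriv k (fun x => (fourierSeries 0 y t x).im) x| ≤ C * Real.exp (t / 2) := by
  obtain ⟨C, hC⟩ := exists_norm_fourierSeries_le_exp hy hzero k
  refine ⟨C, fun t ht x => ?_⟩
  have ht0 : t < 0 := by linarith
  rw [iteratedDeriv_eq_of_hasDerivAt_succ (fun k x => hasDerivAt_re_fourierSeries hy k ht0 x) k,
    iteratedDeriv_eq_of_hasDerivAt_succ (fun k x => hasDerivAt_im_fourierSeries hy k ht0 x) k]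
  exact ⟨(Complex.abs_re_le_norm _).trans (hC t ht x), (Complex.abs_im_le_norm _).trans (hC t ht x)⟩

lemma IsModeSolution.isAncientSolution (hy : IsModeSolution M y) (hM : M * modeWeightSum ≤ 1 / 4) :
    IsAncientSolution (fun t x => (fourierSeries 0 y t x).re)
      (fun t x => (fourierSeries 0 y t x).im) where
  contDiffOn_velocity := Complex.reCLM.contDiff.comp_contDiffOn
    (contDiffOn_infty.mpr (hy.contDiffOn_fourierSeries 0))
  contDiffOn_density := Complex.imCLM.contDiff.comp_contDiffOn
    (contDiffOn_infty.mpr (hy.contDiffOn_fourierSeries 0))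
  periodic_velocity t x := congrArg _ (fourierSeries_periodic 0 y t x)
  periodic_density t x := congrArg _ (fourierSeries_periodic 0 y t x)
  momentum t ht x := by
    have htime := Complex.reCLM.hasFDerivAt.comp_hasDerivAt t
      (hy.hasDerivAt_fourierSeries_time 0 ht x)
    rw [show deriv (fun t => (fourierSeries 0 y t x).re) t = _ from htime.deriv,
      (hasDerivAt_re_fourierSeries hy.bounded 0 ht x).deriv,
      (hasDerivAt_im_fourierSeries hy.bounded 0 ht x).deriv, zero_add,
      fourierSeries_one_modeFlux hy.bounded ht]
    simp
  mass t ht x := by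
    have htime := Complex.imCLM.hasFDerivAt.comp_hasDerivAt t
      (hy.hasDerivAt_fourierSeries_time 0 ht x)
    rw [show deriv (fun t => (fourierSeries 0 y t x).im) t = _ from htime.deriv,
      (hasDerivAt_re_fourierSeries hy.bounded 0 ht x).deriv,
      (hasDerivAt_im_fourierSeries hy.bounded 0 ht x).deriv, zero_add,
      fourierSeries_one_modeFlux hy.bounded ht]
    simp
    ring
  integral_density t ht := by
    have hcomm := Complex.imCLM.intervalIntegral_comp_comm (μ := volume)
      ((continuous_fourierSeries hy.bounded 0 ht).intervalIntegrable 0 (2 * Real.pi))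
    rw [integral_fourierSeries_eq_zero hy.bounded hy.zero_mode ht] at hcomm
    simpa using hcomm
  exists_abs_iteratedDeriv_le := exists_abs_iteratedDeriv_fourierSeries_le hy.bounded hy.zero_mode
  abs_le t x := by
    have hnorm := (norm_fourierSeries_zero_le hy.bounded t x).trans hM
    exact ⟨(Complex.abs_re_le_norm _).trans hnorm, (Complex.abs_im_le_norm _).trans hnorm⟩

lemma fourierSeries_unweight_growingMode (ht : t ≤ 0) (x : ℝ) :
    fourierSeries 0 (unweight growingMode) t x = Real.exp t * Complex.exp (Complex.I * x) := by
  rw [fourierSeries, tsum_eq_single 1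
    fun l hl => by simp [fourierTerm, unweight_growingMode_apply, hl]]
  simp [fourierTerm, unweight_growingMode_apply, min_eq_left ht]

theorem exists_isAncientSolution :
    ∃ S p, IsAncientSolution S p ∧ ∃ t < -1, ∃ x, p t x ≠ 0 := by
  obtain ⟨C, hC, hev⟩ := exists_isModeSolution
  have hsum := modeWeightSum_nonneg
  let D : ℝ := C * (modeWeightSum + 1)
  have : 0 < D := by positivity
  have hlt (a : ℝ) (ha : 0 < a) : ∀ᶠ δ : ℝ in 𝓝[>] 0, δ < a :=
    nhdsWithin_le_nhds (Iio_mem_nhds ha)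
  obtain ⟨δ, ⟨y, hy, hyδ⟩, hδ_quarter, hδ_exp, hδ⟩ :=
    (hev.and ((hlt (1 / (4 * D)) (by positivity)).and
      ((hlt (Real.exp (-2) / D) (by positivity)).and self_mem_nhdsWithin))).exists
  replace hδ : 0 < δ := hδ
  rw [lt_div_iff₀ (by positivity)] at hδ_quarter hδ_exp
  refine ⟨_, _, hy.isAncientSolution (by simp only [D] at hδ_quarter; nlinarith),
    -2, by norm_num, Real.pi / 2, fun him => ?_⟩
  have hneg : (-2 : ℝ) < 0 := by norm_num
  have hclose : |(fourierSeries 0 (y - δ • unweight growingMode) (-2) (Real.pi / 2)).im|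
      ≤ C * δ ^ 2 * modeWeightSum :=
    (Complex.abs_im_le_norm _).trans (norm_fourierSeries_zero_le hyδ _ _)
  rw [fourierSeries_sub hy.bounded ((modeBounded_unweight growingMode).smul δ) 0 hneg,
    fourierSeries_smul, fourierSeries_unweight_growingMode hneg.le,
    show Complex.I * ((Real.pi / 2 : ℝ) : ℂ) = Real.pi / 2 * Complex.I by push_cast; ring,
    Complex.exp_pi_div_two_mul_I, Complex.sub_im, him, Complex.real_smul, ← mul_assoc,
    ← Complex.ofReal_mul, Complex.im_ofReal_mul, Complex.I_im, mul_one, zero_sub, abs_neg,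
    abs_of_pos (by positivity)] at hclose
  have : C * δ ^ 2 * modeWeightSum ≤ δ * (δ * D) := by simp only [D]; nlinarith [sq_nonneg δ]
  nlinarith

end AncientSolution

section BooleTransform

lemma hasCompactSupport_of_forall_le_norm {E F : Type*} [SeminormedAddCommGroup E] [ProperSpace E]
    [Zero F] {f : E → F} {R : ℝ} (hf : ∀ y, R ≤ ‖y‖ → f y = 0) : HasCompactSupport f :=
  .intro (isCompact_closedBall 0 R) fun y hy =>
    hf y (not_le.mp (mem_closedBall_zero_iff.not.mp hy)).le

/-- An even bump function supported in `[-1, 1]`, written as a smooth function of the rational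
function `(1 - y²) / (1 + y²)` so that its pullback `booleShape` stays smooth across the pole. -/
def baseShape (y : ℝ) : ℝ := Real.smoothTransition ((1 - y ^ 2) / (1 + y ^ 2))

/-- The pullback of `baseShape` under the generalized Boole transform `v ↦ v - P / (v - S)`,
extended by `0` across the pole `v = S`. -/
def booleShape (S P v : ℝ) : ℝ :=
  Real.smoothTransition (2 * (v - S) ^ 2 / ((v - S) ^ 2 + (v * (v - S) - P) ^ 2) - 1)

lemma contDiff_baseShape : ContDiff ℝ ∞ baseShape :=
  Real.smoothTransition.contDiff.comp
    (ContDiff.div (by fun_prop) (by fun_prop) fun x => by positivity)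

lemma baseShape_eq_zero {y : ℝ} (hy : 1 ≤ |y|) : baseShape y = 0 := by
  refine Real.smoothTransition.zero_of_nonpos ?_
  have : 1 ≤ y ^ 2 := (one_le_sq_iff_one_le_abs y).mpr hy
  exact div_nonpos_of_nonpos_of_nonneg (by linarith) (by positivity)

lemma baseShape_neg (y : ℝ) : baseShape (-y) = baseShape y := by simp [baseShape]

lemma baseShape_zero_pos : 0 < baseShape 0 := Real.smoothTransition.pos_of_pos (by norm_num)

lemma integrable_mul_baseShape {q : ℝ → ℝ} (hq : Continuous q) :
    Integrable fun y => q y * baseShape y :=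
  (hq.mul contDiff_baseShape.continuous).integrable_of_hasCompactSupport
    (hasCompactSupport_of_forall_le_norm (R := 1) fun _ hy =>
      mul_eq_zero_of_right _ (baseShape_eq_zero hy))

lemma integral_baseShape_pos : 0 < ∫ y, baseShape y :=
  contDiff_baseShape.continuous.integral_pos_of_hasCompactSupport_nonneg_nonzero
    (hasCompactSupport_of_forall_le_norm fun _ => baseShape_eq_zero)
    (fun _ => Real.smoothTransition.nonneg _) baseShape_zero_pos.ne'

variable {S P : ℝ}

lemma booleShape_denom_pos (hP : 0 < P) (v : ℝ) :
    0 < (v - S) ^ 2 + (v * (v - S) - P) ^ 2 := by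
  rcases eq_or_ne (v - S) 0 with h | h
  · rw [h, mul_zero, zero_sub, neg_sq]
    positivity
  · positivity

lemma booleShape_neg (S P v : ℝ) : booleShape (-S) P (-v) = booleShape S P v := by
  rw [booleShape, booleShape]
  ring_nf

lemma booleShape_eq_baseShape {v y : ℝ} (hv : v ≠ S) (hy : (v - S) * (v - y) = P) :
    booleShape S P v = baseShape y := by
  have hvS : v - S ≠ 0 := sub_ne_zero.mpr hv
  rw [booleShape, baseShape, show v * (v - S) - P = (v - S) * y by rw [← hy]; ring,
    show (v - S) ^ 2 + ((v - S) * y) ^ 2 = (v - S) ^ 2 * (1 + y ^ 2) by ring]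
  congr 1
  field_simp
  ring

lemma booleShape_eq_zero (hP : 0 < P) {v : ℝ} (hv : |S| + P + 2 ≤ |v|) : booleShape S P v = 0 := by
  refine Real.smoothTransition.zero_of_nonpos ?_
  rw [sub_nonpos, div_le_one (booleShape_denom_pos hP v)]
  have hdist : P + 2 ≤ |v - S| := by linarith [abs_sub_abs_le_abs_sub v S]
  have hgrowth : |v - S| ≤ |v * (v - S) - P| := by
    have := abs_sub_abs_le_abs_sub (v * (v - S)) P
    rw [abs_mul, abs_of_pos hP] at this
    nlinarith [abs_nonneg S]
  linarith [sq_le_sq.mpr hgrowth]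

lemma contDiff_booleShape {E : Type*} [NormedAddCommGroup E] [NormedSpace ℝ E] {n : ℕ∞}
    {S P v : E → ℝ} (hS : ContDiff ℝ n S) (hP : ContDiff ℝ n P) (hv : ContDiff ℝ n v)
    (hpos : ∀ z, 0 < P z) : ContDiff ℝ n fun z => booleShape (S z) (P z) (v z) :=
  Real.smoothTransition.contDiff.comp <| .sub
    (.div (by fun_prop) (by fun_prop) fun z => (booleShape_denom_pos (hpos z) _).ne') contDiff_const

lemma booleShape_translate (S P v s : ℝ) :
    booleShape (S + s) (P + (v - S) * s) (v + s) = booleShape S P v := by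
  rw [booleShape, booleShape]
  ring_nf

lemma booleShape_scale (S P v : ℝ) {s : ℝ} (hs : s ≠ 1) :
    booleShape (S + s * (v - S)) (P - s * P) v = booleShape S P v := by
  rw [booleShape, booleShape, show v - (S + s * (v - S)) = (1 - s) * (v - S) by ring,
    show v * ((1 - s) * (v - S)) - (P - s * P) = (1 - s) * (v * (v - S) - P) by ring,
    mul_pow, mul_pow, ← mul_add, mul_left_comm,
    mul_div_mul_left _ _ (pow_ne_zero _ (sub_ne_zero.mpr hs.symm))]

/-- The branch over `v > S` of the inverse of the Boole transform `v ↦ v - P / (v - S)`. The other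
branch is `S + y - booleBranch S P y`. -/
def booleBranch (S P y : ℝ) : ℝ := ((S + y) + √((y - S) ^ 2 + 4 * P)) / 2

/-- The derivative of `booleBranch S P`. -/
def booleBranchDeriv (S P y : ℝ) : ℝ := (1 + (y - S) / √((y - S) ^ 2 + 4 * P)) / 2

lemma abs_sub_lt_sqrt (hP : 0 < P) (y : ℝ) : |y - S| < √((y - S) ^ 2 + 4 * P) :=
  Real.lt_sqrt_of_sq_lt (by rw [sq_abs]; linarith)

lemma booleBranch_mul (hP : 0 ≤ P) (y : ℝ) :
    (booleBranch S P y - S) * (booleBranch S P y - y) = P := by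
  have := Real.sq_sqrt (show 0 ≤ (y - S) ^ 2 + 4 * P by positivity)
  rw [booleBranch]
  linear_combination this / 4

lemma lt_booleBranch (hP : 0 < P) (y : ℝ) : S < booleBranch S P y := by
  have := abs_lt.mp (abs_sub_lt_sqrt (S := S) hP y)
  rw [booleBranch]
  linarith

lemma booleBranch_reflect (S P y : ℝ) : -booleBranch (-S) P (-y) = S + y - booleBranch S P y := by
  rw [booleBranch, booleBranch, show (-y - -S) ^ 2 = (y - S) ^ 2 by ring]
  ring

lemma booleBranchDeriv_reflect (S P y : ℝ) :
    booleBranchDeriv (-S) P (-y) = 1 - booleBranchDeriv S P y := by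
  rw [booleBranchDeriv, booleBranchDeriv, show -y - -S = -(y - S) by ring, neg_sq]
  ring

lemma booleBranchDeriv_pos (hP : 0 < P) (y : ℝ) : 0 < booleBranchDeriv S P y := by
  have hsqrt := abs_sub_lt_sqrt (S := S) hP y
  have : -1 < (y - S) / √((y - S) ^ 2 + 4 * P) := by
    rw [lt_div_iff₀ ((abs_nonneg _).trans_lt hsqrt)]
    linarith [(abs_lt.mp hsqrt).1]
  rw [booleBranchDeriv]
  linarith

lemma hasDerivAt_booleBranch (hP : 0 < P) (y : ℝ) :
    HasDerivAt (booleBranch S P) (booleBranchDeriv S P y) y := by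
  have hpoly : HasDerivAt (fun y => (y - S) ^ 2 + 4 * P) (2 * (y - S)) y := by
    simpa using (((hasDerivAt_id y).sub_const S).pow 2).add_const (4 * P)
  refine ((((hasDerivAt_id y).const_add S).add
    (hpoly.sqrt (by positivity))).div_const 2).congr_deriv ?_
  rw [booleBranchDeriv]
  field_simp

lemma injective_booleBranch (hP : 0 < P) : Function.Injective (booleBranch S P) := by
  intro y z h
  have hy := booleBranch_mul (S := S) hP.le y
  rw [h] at hy
  have := mul_left_cancel₀ (sub_pos.mpr (lt_booleBranch (S := S) hP z)).ne'
    (hy.trans (booleBranch_mul hP.le z).symm)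
  linarith

lemma image_booleBranch (hP : 0 < P) : booleBranch S P '' univ = Ioi S := by
  ext v
  simp only [image_univ, mem_range, mem_Ioi]
  refine ⟨fun ⟨y, hy⟩ => hy ▸ lt_booleBranch hP y, fun hv => ⟨v - P / (v - S), ?_⟩⟩
  have : 0 < v - S := sub_pos.mpr hv
  have hdiscr : (v - P / (v - S) - S) ^ 2 + 4 * P = (v - S + P / (v - S)) ^ 2 := by
    field_simp
    ring
  rw [booleBranch, hdiscr, Real.sqrt_sq (by positivity)]
  ring

lemma setIntegral_Ioi_mul_booleShape (hP : 0 < P) (q : ℝ → ℝ) :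
    ∫ v in Ioi S, q v * booleShape S P v
      = ∫ y, booleBranchDeriv S P y * q (booleBranch S P y) * baseShape y := by
  rw [← image_booleBranch hP, integral_image_eq_integral_abs_deriv_smul MeasurableSet.univ
    (fun y _ => (hasDerivAt_booleBranch hP y).hasDerivWithinAt) (injective_booleBranch hP).injOn,
    setIntegral_univ]
  refine integral_congr_ae (.of_forall fun y => ?_)
  dsimp only
  rw [smul_eq_mul, abs_of_pos (booleBranchDeriv_pos hP y), mul_assoc,
    booleShape_eq_baseShape (lt_booleBranch hP y).ne' (booleBranch_mul hP.le y)]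

lemma setIntegral_Iic_mul_booleShape (hP : 0 < P) (q : ℝ → ℝ) :
    ∫ v in Iic S, q v * booleShape S P v
      = ∫ y, (1 - booleBranchDeriv S P y) * q (S + y - booleBranch S P y) * baseShape y := by
  have hreflect : ∫ v in Iic S, q v * booleShape S P v
      = ∫ v in Ioi (-S), q (-v) * booleShape (-S) P v := by
    rw [← neg_neg S, ← integral_comp_neg_Ioi, neg_neg]
    simp only [← booleShape_neg S P (-_), neg_neg]
  rw [hreflect, setIntegral_Ioi_mul_booleShape hP fun v => q (-v), ← integral_neg_eq_self]
  simp only [booleBranch_reflect, booleBranchDeriv_reflect, baseShape_neg]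

lemma continuous_booleBranch (S P : ℝ) : Continuous (booleBranch S P) := by
  unfold booleBranch
  fun_prop

lemma continuous_booleBranchDeriv (hP : 0 < P) : Continuous (booleBranchDeriv S P) := by
  have (y : ℝ) : √((y - S) ^ 2 + 4 * P) ≠ 0 := by positivity
  unfold booleBranchDeriv
  fun_prop (disch := assumption)

lemma integral_mul_booleShape (hP : 0 < P) {q : ℝ → ℝ} (hq : Continuous q) :
    ∫ v, q v * booleShape S P v
      = ∫ y, (booleBranchDeriv S P y * q (booleBranch S P y)
          + (1 - booleBranchDeriv S P y) * q (S + y - booleBranch S P y)) * baseShape y := by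
  have hshape : Continuous (booleShape S P) :=
    (contDiff_booleShape (n := 0) contDiff_const contDiff_const contDiff_id fun _ => hP).continuous
  have hint : Integrable fun v => q v * booleShape S P v :=
    (hq.mul hshape).integrable_of_hasCompactSupport
      (hasCompactSupport_of_forall_le_norm (R := |S| + P + 2) fun v hv =>
        mul_eq_zero_of_right _ (booleShape_eq_zero hP hv))
  have hbranch := continuous_booleBranch S P
  have hderiv := continuous_booleBranchDeriv (S := S) hP
  rw [← intervalIntegral.integral_Iic_add_Ioi (b := S) hint.integrableOn hint.integrableOn,
    setIntegral_Iic_mul_booleShape hP, setIntegral_Ioi_mul_booleShape hP, add_comm,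
    ← integral_add (integrable_mul_baseShape (by fun_prop))
      (integrable_mul_baseShape (by fun_prop))]
  simp only [add_mul]

lemma integral_booleShape (hP : 0 < P) : ∫ v, booleShape S P v = ∫ y, baseShape y := by
  simpa using integral_mul_booleShape (S := S) hP (q := fun _ => 1) continuous_const

lemma integral_sq_mul_booleShape (hP : 0 < P) :
    ∫ v, v ^ 2 * booleShape S P v = P * (∫ y, baseShape y) + ∫ y, y ^ 2 * baseShape y := by
  rw [integral_mul_booleShape hP (continuous_pow 2), ← integral_const_mul,
    ← integral_add (integrable_mul_baseShape continuous_const)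
      (integrable_mul_baseShape (continuous_pow 2))]
  refine integral_congr_ae (.of_forall fun y => ?_)
  dsimp only
  have hsqrt_pos : 0 < √((y - S) ^ 2 + 4 * P) := by positivity
  have hsqrt := Real.sq_sqrt (show 0 ≤ (y - S) ^ 2 + 4 * P by positivity)
  rw [← add_mul, booleBranch, booleBranchDeriv]
  set r := √((y - S) ^ 2 + 4 * P)
  congr 1
  field_simp
  linear_combination 2 * r * hsqrt

end BooleTransform

section Profile

/-- The cutoff used to keep the density positive. -/
def densityCutoff : ContDiffBump (0 : ℝ) := ⟨1 / 3, 1 / 2, by norm_num, by norm_num⟩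

/-- A smooth modification of the density `1 + p` with values in `[1/2, 3/2]`, equal to `1 + p` for
`|p| ≤ 1/3`. -/
def clampDensity (p : ℝ) : ℝ := 1 + p * densityCutoff p

lemma contDiff_clampDensity : ContDiff ℝ ∞ clampDensity :=
  contDiff_const.add (contDiff_id.mul densityCutoff.contDiff)

lemma clampDensity_eq {p : ℝ} (hp : |p| ≤ 1 / 3) : clampDensity p = 1 + p := by
  rw [clampDensity, densityCutoff.one_of_mem_closedBall (by simpa [densityCutoff] using hp),
    mul_one]

lemma clampDensity_mem_Icc (p : ℝ) : clampDensity p ∈ Icc (1 / 2) (3 / 2) := by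
  suffices |p * densityCutoff p| ≤ 1 / 2 by
    have := abs_le.mp this
    rw [clampDensity]
    constructor <;> linarith
  rw [abs_mul, abs_of_nonneg densityCutoff.nonneg]
  rcases le_or_gt (1 / 2) |p| with h | h
  · rw [densityCutoff.zero_of_le_dist (by simpa [densityCutoff] using h)]
    norm_num
  · exact (mul_le_of_le_one_right (abs_nonneg p) densityCutoff.le_one).trans h.le

lemma clampDensity_pos (p : ℝ) : 0 < clampDensity p := by
  linarith [(clampDensity_mem_Icc p).1]

/-- The velocity profile with mean velocity `S` and density `1 + p` in the fluid system, normalized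
to have unit mass. -/
def profile (S p v : ℝ) : ℝ := (∫ y, baseShape y)⁻¹ * booleShape S (clampDensity p) v

lemma contDiff_profile {E : Type*} [NormedAddCommGroup E] [NormedSpace ℝ E]
    {S p v : E → ℝ} (hS : ContDiff ℝ ∞ S) (hp : ContDiff ℝ ∞ p) (hv : ContDiff ℝ ∞ v) :
    ContDiff ℝ ∞ fun z => profile (S z) (p z) (v z) :=
  contDiff_const.mul (contDiff_booleShape hS (contDiff_clampDensity.comp hp) hv
    fun _ => clampDensity_pos _)

lemma profile_eq_zero {S p v : ℝ} (hS : |S| ≤ 1 / 2) (hv : 4 ≤ |v|) : profile S p v = 0 := by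
  rw [profile, booleShape_eq_zero (clampDensity_pos p) (by linarith [(clampDensity_mem_Icc p).2]),
    mul_zero]

lemma integral_profile (S p : ℝ) : ∫ v, profile S p v = 1 := by
  simp only [profile]
  rw [integral_const_mul, integral_booleShape (clampDensity_pos p)]
  exact inv_mul_cancel₀ integral_baseShape_pos.ne'

lemma integral_sq_mul_profile (S : ℝ) {p : ℝ} (hp : |p| ≤ 1 / 3) :
    ∫ v, v ^ 2 * profile S p v
      = p + (1 + (∫ y, baseShape y)⁻¹ * ∫ y, y ^ 2 * baseShape y) := by
  simp only [profile, mul_left_comm _ (∫ y, baseShape y)⁻¹]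
  rw [integral_const_mul, integral_sq_mul_booleShape (clampDensity_pos p), clampDensity_eq hp]
  have := integral_baseShape_pos.ne'
  field_simp
  ring

/-- The differential of `profile` in its three variables. -/
def profileFDeriv (S p v : ℝ) : ℝ × ℝ × ℝ →L[ℝ] ℝ :=
  fderiv ℝ (fun z : ℝ × ℝ × ℝ => profile z.1 z.2.1 z.2.2) (S, p, v)

lemma hasFDerivAt_profile (S p v : ℝ) :
    HasFDerivAt (fun z : ℝ × ℝ × ℝ => profile z.1 z.2.1 z.2.2) (profileFDeriv S p v) (S, p, v) :=
  ((contDiff_profile contDiff_fst contDiff_snd.fst contDiff_snd.snd).differentiable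
    (by simp) (S, p, v)).hasFDerivAt

lemma hasDerivAt_profile_comp {S p v : ℝ → ℝ} {S' p' v' s : ℝ} (hS : HasDerivAt S S' s)
    (hp : HasDerivAt p p' s) (hv : HasDerivAt v v' s) :
    HasDerivAt (fun s => profile (S s) (p s) (v s))
      (profileFDeriv (S s) (p s) (v s) (S', p', v')) s := by
  have hcomp := HasFDerivAt.comp_hasDerivAt (f := fun s => (S s, p s, v s)) s
    (hasFDerivAt_profile (S s) (p s) (v s)) (hS.prodMk (hp.prodMk hv))
  exact hcomp

lemma profileFDeriv_translate (S v : ℝ) {p : ℝ} (hp : |p| < 1 / 3) :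
    profileFDeriv S p v (1, v - S, 1) = 0 := by
  have hcurve : HasDerivAt (fun s => p + (v - S) * s) (v - S) 0 := by
    simpa using ((hasDerivAt_id (0 : ℝ)).const_mul (v - S)).const_add p
  have hprofile := hasDerivAt_profile_comp ((hasDerivAt_id (0 : ℝ)).const_add S) hcurve
    ((hasDerivAt_id (0 : ℝ)).const_add v)
  simp only [id, mul_zero, add_zero] at hprofile
  refine hprofile.unique ((hasDerivAt_const 0 (profile S p v)).congr_of_eventuallyEq ?_)
  have hsmall : ∀ᶠ s in 𝓝 (0 : ℝ), |p + (v - S) * s| < 1 / 3 :=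
    hcurve.continuousAt.abs.eventually_lt_const (by simpa using hp)
  filter_upwards [hsmall] with s hs
  simp only [profile]
  rw [clampDensity_eq hs.le, clampDensity_eq hp.le, ← add_assoc, booleShape_translate]

lemma profileFDeriv_scale (S v : ℝ) {p : ℝ} (hp : |p| < 1 / 3) :
    profileFDeriv S p v (v - S, -(1 + p), 0) = 0 := by
  have hS : HasDerivAt (fun s => S + s * (v - S)) (v - S) 0 := by
    simpa using ((hasDerivAt_id (0 : ℝ)).mul_const (v - S)).const_add S
  have hcurve : HasDerivAt (fun s => p - s * (1 + p)) (-(1 + p)) 0 := by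
    simpa using ((hasDerivAt_id (0 : ℝ)).mul_const (1 + p)).const_sub p
  have hprofile := hasDerivAt_profile_comp hS hcurve (hasDerivAt_const 0 v)
  simp only [zero_mul, add_zero, sub_zero] at hprofile
  refine hprofile.unique ((hasDerivAt_const 0 (profile S p v)).congr_of_eventuallyEq ?_)
  have hsmall : ∀ᶠ s in 𝓝 (0 : ℝ), |p - s * (1 + p)| < 1 / 3 :=
    hcurve.continuousAt.abs.eventually_lt_const (by simpa using hp)
  filter_upwards [hsmall, isOpen_ne.mem_nhds zero_ne_one] with s hs hs_ne
  simp only [profile]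
  rw [clampDensity_eq hs.le, clampDensity_eq hp.le, show 1 + (p - s * (1 + p))
    = (1 + p) - s * (1 + p) by ring, booleShape_scale _ _ _ hs_ne]

lemma profileFDeriv_transport {S p v St Sx pt px : ℝ} (hp : |p| < 1 / 3)
    (hSt : St = px - S * Sx) (hpt : pt = -(Sx * (1 + p) + S * px)) :
    profileFDeriv S p v (St, pt, 0) + v * profileFDeriv S p v (Sx, px, 0)
      + px * profileFDeriv S p v (0, 0, 1) = 0 := by
  have hcombination : profileFDeriv S p v (St, pt, 0) + v * profileFDeriv S p v (Sx, px, 0)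
      + px * profileFDeriv S p v (0, 0, 1)
      = px * profileFDeriv S p v (1, v - S, 1) + Sx * profileFDeriv S p v (v - S, -(1 + p), 0) := by
    simp only [← smul_eq_mul, ← map_smul, ← map_add]
    congr 1
    simp only [Prod.smul_mk, Prod.mk_add_mk, smul_eq_mul, hSt, hpt]
    refine Prod.ext ?_ (Prod.ext ?_ ?_) <;> ring
  rw [hcombination, profileFDeriv_translate S v hp, profileFDeriv_scale S v hp, mul_zero, mul_zero,
    add_zero]

/-- The normalized `baseShape`, used in the velocity directions transverse to the flow. -/
def baseKernel (y : ℝ) : ℝ := (∫ y, baseShape y)⁻¹ * baseShape y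

lemma contDiff_baseKernel : ContDiff ℝ ∞ baseKernel := contDiff_const.mul contDiff_baseShape

lemma baseKernel_eq_zero {y : ℝ} (hy : 1 ≤ |y|) : baseKernel y = 0 := by
  rw [baseKernel, baseShape_eq_zero hy, mul_zero]

lemma baseKernel_zero_pos : 0 < baseKernel 0 :=
  mul_pos (inv_pos.mpr integral_baseShape_pos) baseShape_zero_pos

lemma integral_baseKernel : ∫ y, baseKernel y = 1 := by
  simp only [baseKernel]
  rw [integral_const_mul]
  exact inv_mul_cancel₀ integral_baseShape_pos.ne'

/-- The velocity profile in the two transverse directions. The parameter `η` moves mass to a bump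
centred at distance `10`, which makes the initial perturbation nonzero independently of the fluid
fields. -/
def sideProfile (η y z : ℝ) : ℝ :=
  baseKernel y * ((1 - η) * baseKernel z + η * baseKernel (z - 10))

lemma contDiff_sideProfile {E : Type*} [NormedAddCommGroup E] [NormedSpace ℝ E]
    {η y z : E → ℝ} (hη : ContDiff ℝ ∞ η) (hy : ContDiff ℝ ∞ y) (hz : ContDiff ℝ ∞ z) :
    ContDiff ℝ ∞ fun w => sideProfile (η w) (y w) (z w) := by
  have := contDiff_baseKernel
  unfold sideProfile
  fun_prop

lemma integral_sideProfile_factor (η : ℝ) :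
    ∫ z, ((1 - η) * baseKernel z + η * baseKernel (z - 10)) = 1 := by
  have hint : Integrable baseKernel :=
    contDiff_baseKernel.continuous.integrable_of_hasCompactSupport
      (hasCompactSupport_of_forall_le_norm fun _ => baseKernel_eq_zero)
  rw [integral_add (hint.const_mul _) ((hint.comp_sub_right 10).const_mul _), integral_const_mul,
    integral_const_mul, integral_sub_right_eq_self baseKernel, integral_baseKernel]
  ring

end Profile

section CoordinateFunctions

lemma integral_euclideanSpace_prod {ι : Type*} [Fintype ι] (f : ι → ℝ → ℝ) :
    ∫ v : EuclideanSpace ℝ ι, ∏ i, f i (v i) = ∏ i, ∫ y, f i y :=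
  ((EuclideanSpace.volume_preserving_symm_measurableEquiv_toLp ι).integral_comp'
    fun w : ι → ℝ => ∏ i, f i (w i)).trans (integral_fintype_prod_volume_eq_prod f)

lemma integral_E3_mul (a b c : ℝ → ℝ) :
    ∫ v : E3, a (v 0) * b (v 1) * c (v 2) = (∫ y, a y) * (∫ y, b y) * ∫ y, c y := by
  simpa [Fin.prod_univ_three] using integral_euclideanSpace_prod ![a, b, c]

lemma measurableSet_cube3 : MeasurableSet cube3 := by
  have : cube3 = ⋂ i, (fun x : E3 => x i) ⁻¹' Ico 0 1 := by
    ext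
    simp [cube3]
  rw [this]
  exact .iInter fun i => measurableSet_Ico.preimage (by fun_prop)

lemma setIntegral_cube3 (g : ℝ → ℝ) : ∫ x in cube3, g (x 0) = ∫ y in (0 : ℝ)..1, g y := by
  have hindicator : cube3.indicator (fun x : E3 => g (x 0)) = fun x : E3 =>
      (Ico 0 1).indicator g (x 0) * (Ico 0 1).indicator 1 (x 1) * (Ico 0 1).indicator 1 (x 2) := by
    ext x
    by_cases h0 : x 0 ∈ Ico (0 : ℝ) 1 <;> by_cases h1 : x 1 ∈ Ico (0 : ℝ) 1 <;>
      by_cases h2 : x 2 ∈ Ico (0 : ℝ) 1 <;>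
      simp [indicator, cube3, Fin.forall_fin_succ, -mem_Ico, h0, h1, h2]
  rw [← integral_indicator measurableSet_cube3, hindicator, integral_E3_mul,
    integral_indicator measurableSet_Ico, integral_indicator_one measurableSet_Ico,
    intervalIntegral.integral_of_le zero_le_one, integral_Ico_eq_integral_Ioc]
  simp

lemma fderiv_comp_apply {ι : Type*} [Finite ι] (g : ℝ → ℝ) (j : ι) (x v : EuclideanSpace ℝ ι) :
    fderiv ℝ (fun x : EuclideanSpace ℝ ι => g (x j)) x v = deriv g (x j) * v j := by
  classical
  cases nonempty_fintype ι
  by_cases hg : DifferentiableAt ℝ g (x j)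
  · have := hg.hasDerivAt.comp_hasFDerivAt x (EuclideanSpace.proj (𝕜 := ℝ) j).hasFDerivAt
    exact congrArg (· v) this.fderiv
  · have hcomp : ¬DifferentiableAt ℝ (fun x : EuclideanSpace ℝ ι => g (x j)) x := by
      contrapose! hg
      have hline : DifferentiableAt ℝ
          (fun s => x + (s - x j) • EuclideanSpace.single j (1 : ℝ)) (x j) := by fun_prop
      have := DifferentiableAt.comp (x j) (by simpa using hg) hline
      simpa [Function.comp_def] using this
    rw [fderiv_zero_of_not_differentiableAt hcomp, deriv_zero_of_not_differentiableAt hg]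
    simp

lemma pdE_comp_apply (i j : Fin 3) (g : ℝ → ℝ) :
    pdE i (fun x => g (x j)) = fun x => (if i = j then deriv g else 0) (x j) := by
  ext x
  rw [pdE, fderiv_comp_apply]
  split_ifs with h <;> simp [h, eq_comm]

lemma pdE_pdE_comp_apply_zero (i j : Fin 3) (g : ℝ → ℝ) (x : E3) :
    pdE i (pdE j fun x => g (x 0)) x = if i = 0 ∧ j = 0 then deriv (deriv g) (x 0) else 0 := by
  rw [pdE_comp_apply, pdE_comp_apply]
  split_ifs <;> simp_all

end CoordinateFunctions

section KineticLift

/-- The velocity distribution at a point with velocity `S` and density `1 + p` in the first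
coordinate; the parameter `η` only affects the other two velocity components. -/
def localDensity (S p η : ℝ) (v : E3) : ℝ := profile S p (v 0) * sideProfile η (v 1) (v 2)

lemma contDiff_localDensity {V : Type*} [NormedAddCommGroup V] [NormedSpace ℝ V] {S p η : V → ℝ}
    {v : V → E3} (hS : ContDiff ℝ ∞ S) (hp : ContDiff ℝ ∞ p) (hη : ContDiff ℝ ∞ η)
    (hv : ContDiff ℝ ∞ v) :
    ContDiff ℝ ∞ fun z => localDensity (S z) (p z) (η z) (v z) :=
  (contDiff_profile hS hp (by fun_prop)).mul (contDiff_sideProfile hη (by fun_prop) (by fun_prop))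

lemma integral_localDensity (S p η : ℝ) : ∫ v, localDensity S p η v = 1 := by
  have := integral_E3_mul (profile S p) baseKernel
    fun z => (1 - η) * baseKernel z + η * baseKernel (z - 10)
  rw [integral_profile, integral_baseKernel, integral_sideProfile_factor] at this
  simpa [localDensity, sideProfile, mul_assoc] using this

lemma integral_sq_mul_localDensity (S η : ℝ) {p : ℝ} (hp : |p| ≤ 1 / 3) :
    ∫ v : E3, v 0 * v 0 * localDensity S p η v
      = p + (1 + (∫ y, baseShape y)⁻¹ * ∫ y, y ^ 2 * baseShape y) := by
  have := integral_E3_mul (fun y => y ^ 2 * profile S p y) baseKernel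
    fun z => (1 - η) * baseKernel z + η * baseKernel (z - 10)
  rw [integral_sq_mul_profile S hp, integral_baseKernel, integral_sideProfile_factor] at this
  simpa [localDensity, sideProfile, mul_assoc, sq] using this

lemma localDensity_eq_zero {S p η : ℝ} (hS : |S| ≤ 1 / 2) {v : E3} (hv : 12 < ‖v‖) :
    localDensity S p η v = 0 := by
  by_contra hne
  obtain ⟨hprofile, hside⟩ := mul_ne_zero_iff.mp hne
  have hv0 : |v 0| < 4 := by
    by_contra! h
    exact hprofile (profile_eq_zero hS h)
  have hv1 : |v 1| < 1 := by
    by_contra! h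
    exact hside (by rw [sideProfile, baseKernel_eq_zero h, zero_mul])
  have hv2 : |v 2| < 11 := by
    by_contra! h
    have hshift : 1 ≤ |v 2 - 10| := by
      linarith [abs_sub_abs_le_abs_sub (v 2) 10, abs_of_pos (show (0 : ℝ) < 10 by norm_num)]
    exact hside (by simp [sideProfile, baseKernel_eq_zero hshift,
      baseKernel_eq_zero (show 1 ≤ |v 2| by linarith)])
  have hnorm : ‖v‖ ^ 2 = |v 0| ^ 2 + |v 1| ^ 2 + |v 2| ^ 2 := by
    simp [EuclideanSpace.real_norm_sq_eq, Fin.sum_univ_three]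
  nlinarith [abs_nonneg (v 0), abs_nonneg (v 1), abs_nonneg (v 2)]

/-- The kinetic density with velocity field `σ` and density `1 + π` in the first coordinate. -/
def kieDensity (η : ℝ) (σ π : ℝ → ℝ → ℝ) (t : ℝ) (x v : E3) : ℝ :=
  localDensity (σ t (x 0)) (π t (x 0)) η v

lemma contDiff_kieDensity (η : ℝ) {σ π : ℝ → ℝ → ℝ}
    (hσ : ContDiff ℝ ∞ fun z : ℝ × ℝ => σ z.1 z.2) (hπ : ContDiff ℝ ∞ fun z : ℝ × ℝ => π z.1 z.2) :
    ContDiff ℝ ∞ fun q : ℝ × E3 × E3 => kieDensity η σ π q.1 q.2.1 q.2.2 := by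
  have hpoint : ContDiff ℝ ∞ fun q : ℝ × E3 × E3 => (q.1, q.2.1 0) := by fun_prop
  exact contDiff_localDensity (hσ.comp hpoint) (hπ.comp hpoint) contDiff_const (by fun_prop)

lemma poisson_kieDensity (η : ℝ) (σ : ℝ → ℝ → ℝ) {π : ℝ → ℝ → ℝ} {t : ℝ}
    (hπ : ∀ y, |π t y| ≤ 1 / 3) (x : E3) :
    -(∑ i, pdE i (pdE i fun x => -π t (x 0)) x)
      = ∑ i, ∑ j, pdE i (pdE j fun x' => ∫ v : E3, v i * v j * kieDensity η σ π t x' v) x := by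
  let moment (i j : Fin 3) (y : ℝ) : ℝ :=
    ∫ v : E3, v i * v j * localDensity (σ t y) (π t y) η v
  have hpressure : moment 0 0 = fun y => π t y + _ :=
    funext fun y => integral_sq_mul_localDensity (σ t y) η (hπ y)
  have hpotential (i : Fin 3) := pdE_pdE_comp_apply_zero i i (fun y => -π t y) x
  have hmoment (i j : Fin 3) : pdE i (pdE j fun x' => ∫ v : E3, v i * v j * kieDensity η σ π t x' v)
      x = if i = 0 ∧ j = 0 then deriv (deriv (moment i j)) (x 0) else 0 :=
    pdE_pdE_comp_apply_zero i j (moment i j) x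
  simp [Fin.sum_univ_three, hpotential, hmoment, hpressure]

lemma hasDerivAt_of_contDiff_left {q : ℝ → ℝ → ℝ} (hq : ContDiff ℝ ∞ fun z : ℝ × ℝ => q z.1 z.2)
    (t y : ℝ) : HasDerivAt (fun t => q t y) (deriv (fun t => q t y) t) t :=
  ((hq.comp (contDiff_id.prodMk contDiff_const)).differentiable (by simp) t).hasDerivAt

lemma hasDerivAt_of_contDiff_right {q : ℝ → ℝ → ℝ} (hq : ContDiff ℝ ∞ fun z : ℝ × ℝ => q z.1 z.2)
    (t y : ℝ) : HasDerivAt (q t) (deriv (q t) y) y :=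
  ((hq.comp (contDiff_const.prodMk contDiff_id)).differentiable (by simp) y).hasDerivAt

lemma fderiv_kieDensity_velocity (η : ℝ) (σ π : ℝ → ℝ → ℝ) (t : ℝ) (x v : E3) :
    fderiv ℝ (kieDensity η σ π t x) v (EuclideanSpace.single 0 1)
      = profileFDeriv (σ t (x 0)) (π t (x 0)) (v 0) (0, 0, 1) * sideProfile η (v 1) (v 2) := by
  have hsmooth : ContDiff ℝ ∞ (kieDensity η σ π t x) :=
    contDiff_localDensity contDiff_const contDiff_const contDiff_const contDiff_id
  have hline := ((hasDerivAt_profile_comp (hasDerivAt_const (0 : ℝ) (σ t (x 0)))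
    (hasDerivAt_const (0 : ℝ) (π t (x 0))) ((hasDerivAt_id (0 : ℝ)).const_add (v 0))).mul_const
      (sideProfile η (v 1) (v 2))).deriv
  rw [← (hsmooth.differentiable (by simp) v).lineDeriv_eq_fderiv, lineDeriv]
  simpa [kieDensity, localDensity] using hline

lemma vlasov_kieDensity (η : ℝ) {σ π : ℝ → ℝ → ℝ}
    (hσ : ContDiff ℝ ∞ fun z : ℝ × ℝ => σ z.1 z.2) (hπ : ContDiff ℝ ∞ fun z : ℝ × ℝ => π z.1 z.2)
    {t : ℝ} {x : E3} (hbound : |π t (x 0)| < 1 / 3)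
    (hmomentum : deriv (fun t => σ t (x 0)) t
      = deriv (π t) (x 0) - σ t (x 0) * deriv (σ t) (x 0))
    (hmass : deriv (fun t => π t (x 0)) t
      = -(deriv (σ t) (x 0) * (1 + π t (x 0)) + σ t (x 0) * deriv (π t) (x 0))) (v : E3) :
    deriv (fun t' => kieDensity η σ π t' x v) t + fderiv ℝ (fun x' => kieDensity η σ π t x' v) x v
      - ∑ i, pdE i (fun x => -π t (x 0)) x
        * fderiv ℝ (fun v' => kieDensity η σ π t x v') v (EuclideanSpace.single i 1) = 0 := by
  have htime : deriv (fun t' => kieDensity η σ π t' x v) t = profileFDeriv (σ t (x 0)) (π t (x 0))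
      (v 0) (deriv (fun t => σ t (x 0)) t, deriv (fun t => π t (x 0)) t, 0)
        * sideProfile η (v 1) (v 2) :=
    ((hasDerivAt_profile_comp (hasDerivAt_of_contDiff_left hσ t (x 0))
      (hasDerivAt_of_contDiff_left hπ t (x 0)) (hasDerivAt_const t (v 0))).mul_const _).deriv
  have hspace : fderiv ℝ (fun x' => kieDensity η σ π t x' v) x v
      = profileFDeriv (σ t (x 0)) (π t (x 0)) (v 0) (deriv (σ t) (x 0), deriv (π t) (x 0), 0)
        * sideProfile η (v 1) (v 2) * v 0 := by
    have hslice := ((hasDerivAt_profile_comp (hasDerivAt_of_contDiff_right hσ t (x 0))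
      (hasDerivAt_of_contDiff_right hπ t (x 0)) (hasDerivAt_const (x 0) (v 0))).mul_const
        (sideProfile η (v 1) (v 2))).deriv
    rw [← hslice]
    exact fderiv_comp_apply (fun y => localDensity (σ t y) (π t y) η v) 0 x v
  have htransport := profileFDeriv_transport (v := v 0) hbound hmomentum hmass
  rw [htime, hspace, Fin.sum_univ_three]
  simp only [pdE_comp_apply _ 0 fun y => -π t y, if_true, deriv.fun_neg, Fin.reduceEq, if_false,
    Pi.zero_apply, zero_mul, add_zero, fderiv_kieDensity_velocity]
  linear_combination sideProfile η (v 1) (v 2) * htransport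

lemma isKIESol_kieDensity {T : ℝ} (η : ℝ) {σ π : ℝ → ℝ → ℝ}
    (hσ : ContDiff ℝ ∞ fun z : ℝ × ℝ => σ z.1 z.2) (hπ : ContDiff ℝ ∞ fun z : ℝ × ℝ => π z.1 z.2)
    (hσ_periodic : ∀ t, Function.Periodic (σ t) 1) (hπ_periodic : ∀ t, Function.Periodic (π t) 1)
    (hbound : ∀ t ∈ Icc 0 T, ∀ y, |π t y| < 1 / 3)
    (hmean : ∀ t ∈ Icc 0 T, ∫ y in (0 : ℝ)..1, π t y = 0)
    (hmomentum : ∀ t ∈ Icc 0 T, ∀ y,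
      deriv (fun t => σ t y) t = deriv (π t) y - σ t y * deriv (σ t) y)
    (hmass : ∀ t ∈ Icc 0 T, ∀ y,
      deriv (fun t => π t y) t = -(deriv (σ t) y * (1 + π t y) + σ t y * deriv (π t) y)) :
    IsKIESol T (kieDensity η σ π) := by
  have hshift {g : ℝ → ℝ} (hg : Function.Periodic g 1) (x : E3) (i : Fin 3) :
      g ((x + EuclideanSpace.single i (1 : ℝ)) 0) = g (x 0) := by
    rcases eq_or_ne i 0 with rfl | hi
    · simpa using hg (x 0)
    · simp [hi.symm]
  refine ⟨contDiff_kieDensity η hσ hπ, fun t x v i => ?_, fun t x => -π t (x 0), ?_,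
    fun t x i => ?_, fun t ht => ?_, fun t ht x => ?_, fun t ht x v => ?_⟩
  · rw [kieDensity, kieDensity, hshift (hσ_periodic t), hshift (hπ_periodic t)]
  · exact (hπ.comp (contDiff_fst.prodMk (by fun_prop : ContDiff ℝ ∞ fun q : ℝ × E3 => q.2 0))).neg
  · exact congrArg Neg.neg (hshift (hπ_periodic t) x i)
  · rw [setIntegral_cube3 fun y => -π t y, intervalIntegral.integral_neg, hmean t ht, neg_zero]
  · exact poisson_kieDensity η σ (fun y => (hbound t ht y).le) x
  · exact vlasov_kieDensity η hσ hπ (hbound t ht (x 0)) (hmomentum t ht (x 0)) (hmass t ht (x 0)) v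

end KineticLift

section Rescaling

/-- A smooth map onto negative times which is the identity below `-1/2`. It extends fields defined
for negative times to all times, as `IsKIESol` demands. -/
def timeCut (τ : ℝ) : ℝ :=
  (1 - Real.smoothTransition (4 * τ + 2)) * τ - Real.smoothTransition (4 * τ + 2) / 4

lemma contDiff_timeCut : ContDiff ℝ ∞ timeCut := by
  have : ContDiff ℝ ∞ fun τ : ℝ => Real.smoothTransition (4 * τ + 2) :=
    Real.smoothTransition.contDiff.comp (by fun_prop)
  unfold timeCut
  fun_prop

lemma timeCut_eq {τ : ℝ} (hτ : τ ≤ -1 / 2) : timeCut τ = τ := by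
  rw [timeCut, Real.smoothTransition.zero_of_nonpos (by linarith)]
  ring

lemma timeCut_neg (τ : ℝ) : timeCut τ < 0 := by
  rw [timeCut]
  rcases le_or_gt (-1 / 4) τ with h | h
  · rw [Real.smoothTransition.one_of_one_le (by linarith)]
    norm_num
  · nlinarith [Real.smoothTransition.nonneg (4 * τ + 2), Real.smoothTransition.le_one (4 * τ + 2)]

/-- The spatial frequency of the `n`-th rescaled solution. -/
def freq (n : ℕ) : ℝ := 2 * Real.pi * (n : ℝ) ^ 2

/-- The time of the ancient solution reached by the `n`-th rescaled solution at time `t`: it runs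
from `-n - 1` to `-1` as `t` runs from `0` to `n / freq n = 1 / (2πn)`. -/
def innerTime (n : ℕ) (t : ℝ) : ℝ := freq n * t - n - 1

/-- The ancient field `q`, rescaled to oscillate at frequency `freq n`. -/
def rescale (n : ℕ) (q : ℝ → ℝ → ℝ) (t y : ℝ) : ℝ := q (timeCut (innerTime n t)) (freq n * y)

variable {n : ℕ} {q : ℝ → ℝ → ℝ} {t : ℝ}

lemma freq_nonneg (n : ℕ) : 0 ≤ freq n := by
  rw [freq]
  positivity

lemma freq_pos (hn : n ≠ 0) : 0 < freq n := by
  rw [freq]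
  positivity

lemma innerTime_le (ht : t ≤ 1 / (2 * Real.pi * n)) : innerTime n t ≤ -1 := by
  rcases eq_or_ne n 0 with rfl | hn
  · simp [innerTime, freq]
  have hend : freq n * (1 / (2 * Real.pi * n)) = n := by
    rw [freq]
    field_simp
  rw [innerTime]
  linarith [mul_le_mul_of_nonneg_left ht (freq_nonneg n)]

lemma rescale_eq (ht : innerTime n t ≤ -1) (y : ℝ) :
    rescale n q t y = q (innerTime n t) (freq n * y) := by
  rw [rescale, timeCut_eq (by linarith)]

lemma contDiff_rescale (n : ℕ) (hq : ContDiffOn ℝ ∞ (fun z : ℝ × ℝ => q z.1 z.2) {z | z.1 < 0}) :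
    ContDiff ℝ ∞ fun z : ℝ × ℝ => rescale n q z.1 z.2 := by
  have htime : ContDiff ℝ ∞ fun z : ℝ × ℝ => timeCut (innerTime n z.1) :=
    contDiff_timeCut.comp (by unfold innerTime; fun_prop)
  exact contDiffOn_univ.mp <| hq.comp (htime.prodMk (by fun_prop :
    ContDiff ℝ ∞ fun z : ℝ × ℝ => freq n * z.2)).contDiffOn fun z _ => timeCut_neg _

lemma periodic_rescale (hq : ∀ t, Function.Periodic (q t) (2 * Real.pi)) (t : ℝ) :
    Function.Periodic (rescale n q t) 1 := fun y => by
  rw [rescale, rescale, ← (hq (timeCut (innerTime n t))).nat_mul (n ^ 2) (freq n * y)]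
  congr 1
  rw [freq]
  push_cast
  ring

lemma integral_rescale (hn : n ≠ 0) (hq : ∀ t, Function.Periodic (q t) (2 * Real.pi))
    (hsmooth : ContDiffOn ℝ ∞ (fun z : ℝ × ℝ => q z.1 z.2) {z | z.1 < 0})
    (hmean : ∀ t < 0, ∫ x in (0 : ℝ)..(2 * Real.pi), q t x = 0) (t : ℝ) :
    ∫ y in (0 : ℝ)..1, rescale n q t y = 0 := by
  simp only [rescale]
  have hτ := timeCut_neg (innerTime n t)
  have hcont : Continuous (q (timeCut (innerTime n t))) :=
    continuousOn_univ.mp <| hsmooth.continuousOn.comp (f := fun x => (timeCut (innerTime n t), x))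
      (by fun_prop) fun _ _ => hτ
  have hperiods := (hq (timeCut (innerTime n t))).intervalIntegral_add_zsmul_eq ((n : ℤ) ^ 2) 0
    fun a b => hcont.intervalIntegrable a b
  rw [zero_add, zero_add, hmean _ hτ, smul_zero] at hperiods
  rw [intervalIntegral.integral_comp_mul_left _ (freq_pos hn).ne', mul_zero, mul_one,
    show freq n = ((n : ℤ) ^ 2) • (2 * Real.pi) by rw [freq, zsmul_eq_mul]; push_cast; ring,
    hperiods, smul_zero]

lemma deriv_rescale_time (hq : ContDiffOn ℝ ∞ (fun z : ℝ × ℝ => q z.1 z.2) {z | z.1 < 0})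
    (ht : innerTime n t ≤ -1) (y : ℝ) :
    deriv (fun t => rescale n q t y) t
      = freq n * deriv (fun t => q t (freq n * y)) (innerTime n t) := by
  have hinner : HasDerivAt (innerTime n) (freq n) t :=
    ((hasDerivAt_const_mul (freq n)).sub_const (n : ℝ)).sub_const 1
  have houter : DifferentiableAt ℝ (fun t => q t (freq n * y)) (innerTime n t) :=
    ((hq.contDiffAt (isOpen_fst_neg.mem_nhds (show innerTime n t < 0 by linarith))
      ).differentiableAt (by simp)).comp (innerTime n t) (f := fun t => (t, freq n * y))
        (by fun_prop)
  have hlocal : (fun t => rescale n q t y) =ᶠ[𝓝 t]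
      (fun t => q t (freq n * y)) ∘ innerTime n := by
    filter_upwards [hinner.continuousAt.eventually_lt_const
      (show innerTime n t < -1 / 2 by linarith)] with s hs
    rw [rescale, timeCut_eq hs.le, Function.comp_apply]
  rw [hlocal.deriv_eq, (houter.hasDerivAt.comp t hinner).deriv, mul_comm]

lemma deriv_rescale_space (ht : innerTime n t ≤ -1) (y : ℝ) :
    deriv (rescale n q t) y = freq n * deriv (q (innerTime n t)) (freq n * y) := by
  rw [funext (rescale_eq ht), deriv_comp_mul_left, smul_eq_mul]

lemma isKIESol_rescale {S p : ℝ → ℝ → ℝ} (h : IsAncientSolution S p) (hn : n ≠ 0) (η : ℝ) :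
    IsKIESol (1 / (2 * Real.pi * n)) (kieDensity η (rescale n S) (rescale n p)) := by
  refine isKIESol_kieDensity η (contDiff_rescale n h.contDiffOn_velocity)
    (contDiff_rescale n h.contDiffOn_density) (periodic_rescale h.periodic_velocity)
    (periodic_rescale h.periodic_density)
    (fun t _ y => (h.abs_le _ _).2.trans_lt (by norm_num))
    (fun t _ => integral_rescale hn h.periodic_density h.contDiffOn_density h.integral_density t)
    (fun t ht y => ?_) (fun t ht y => ?_)
  all_goals
    have hinner := innerTime_le ht.2
    have hneg : innerTime n t < 0 := by linarith
  · rw [deriv_rescale_time h.contDiffOn_velocity hinner, deriv_rescale_space hinner,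
      deriv_rescale_space hinner, rescale_eq hinner, h.momentum _ hneg]
    ring
  · rw [deriv_rescale_time h.contDiffOn_density hinner, deriv_rescale_space hinner,
      deriv_rescale_space hinner, rescale_eq hinner, rescale_eq hinner, h.mass _ hneg]
    ring

end Rescaling

section DerivControlled

variable {V W X : Type*} [NormedAddCommGroup V] [NormedSpace ℝ V] [NormedAddCommGroup W]
  [NormedSpace ℝ W] [NormedAddCommGroup X] [NormedSpace ℝ X]

/-- `G` arises from `F` by `d` differentiations, as far as bounds are concerned: `G` inherits
smoothness from `F`, and its derivatives are controlled by those of `F` of order `d` higher. -/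
def DerivControlled (d : ℕ) (F G : V → W) : Prop :=
  ContDiff ℝ ∞ F → ContDiff ℝ ∞ G ∧
    ∀ j z, ‖iteratedFDeriv ℝ j G z‖ ≤ ‖iteratedFDeriv ℝ (j + d) F z‖

lemma DerivControlled.trans {d e : ℕ} {F G H : V → W} (hFG : DerivControlled d F G)
    (hGH : DerivControlled e G H) : DerivControlled (e + d) F H := fun hF => by
  obtain ⟨hG, hboundG⟩ := hFG hF
  obtain ⟨hH, hboundH⟩ := hGH hG
  exact ⟨hH, fun j z => (hboundH j z).trans (by rw [← add_assoc]; exact hboundG (j + e) z)⟩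

lemma derivControlled_iterate {D : (V → X → W) → V → X → W}
    (hD : ∀ g, DerivControlled 1 (uncurry g) (uncurry (D g))) (b : ℕ) (g : V → X → W) :
    DerivControlled b (uncurry g) (uncurry (D^[b] g)) := by
  induction b with
  | zero => exact fun hg => ⟨hg, fun _ _ => le_rfl⟩
  | succ b ih =>
    rw [Function.iterate_succ_apply', add_comm]
    exact ih.trans (hD _)

lemma derivControlled_fderiv_apply (F : V → W) {u : V} (hu : ‖u‖ ≤ 1) :
    DerivControlled 1 F fun z => fderiv ℝ F z u := fun hF => by
  have hfderiv : ContDiff ℝ ∞ (fderiv ℝ F) := hF.fderiv_right (by simp)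
  refine ⟨hfderiv.clm_apply contDiff_const, fun j z => ?_⟩
  refine (norm_iteratedFDeriv_clm_apply_const hfderiv.contDiffAt
    (by exact_mod_cast le_top)).trans ?_
  rw [norm_iteratedFDeriv_fderiv]
  exact mul_le_of_le_one_left (norm_nonneg _) hu

lemma derivControlled_fderiv_fst (F : V × X → W) {e : V} (he : ‖e‖ ≤ 1) :
    DerivControlled 1 F fun z => fderiv ℝ (fun x => F (x, z.2)) z.1 e := fun hF => by
  have hslice : (fun z : V × X => fderiv ℝ (fun x => F (x, z.2)) z.1 e)
      = fun z => fderiv ℝ F z (e, 0) := by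
    funext z
    have hcomp := HasFDerivAt.comp z.1 (hF.differentiable (by simp) z).hasFDerivAt
      (hasFDerivAt_prodMk_left (𝕜 := ℝ) z.1 z.2)
    exact DFunLike.congr_fun hcomp.fderiv e
  rw [hslice]
  exact derivControlled_fderiv_apply F (by simpa [Prod.norm_def] using he) hF

lemma derivControlled_fderiv_snd (F : V × X → W) {e : X} (he : ‖e‖ ≤ 1) :
    DerivControlled 1 F fun z => fderiv ℝ (fun y => F (z.1, y)) z.2 e := fun hF => by
  have hslice : (fun z : V × X => fderiv ℝ (fun y => F (z.1, y)) z.2 e)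
      = fun z => fderiv ℝ F z (0, e) := by
    funext z
    have hcomp := HasFDerivAt.comp z.2 (hF.differentiable (by simp) z).hasFDerivAt
      (hasFDerivAt_prodMk_right (𝕜 := ℝ) z.1 z.2)
    exact DFunLike.congr_fun hcomp.fderiv e
  rw [hslice]
  exact derivControlled_fderiv_apply F (by simpa [Prod.norm_def] using he) hF

end DerivControlled

section WeightedSobolevNorm

variable {g : E3 → E3 → ℝ} {R : ℝ}

lemma derivControlled_pdx (i : Fin 3) (g : E3 → E3 → ℝ) :
    DerivControlled 1 (uncurry g) (uncurry (pdx i g)) :=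
  derivControlled_fderiv_fst _ (by simp)

lemma derivControlled_pdv (i : Fin 3) (g : E3 → E3 → ℝ) :
    DerivControlled 1 (uncurry g) (uncurry (pdv i g)) :=
  derivControlled_fderiv_snd _ (by simp)

lemma abs_mpart6_le (hg : ContDiff ℝ ∞ (uncurry g)) (β : Fin 6 → ℕ) (x v : E3) :
    |mpart6 β g x v| ≤ ‖iteratedFDeriv ℝ (∑ i, β i) (uncurry g) (x, v)‖ := by
  have hcontrolled := (((((derivControlled_iterate (derivControlled_pdv 2) (β 5) g).trans
    (derivControlled_iterate (derivControlled_pdv 1) (β 4) _)).trans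
    (derivControlled_iterate (derivControlled_pdv 0) (β 3) _)).trans
    (derivControlled_iterate (derivControlled_pdx 2) (β 2) _)).trans
    (derivControlled_iterate (derivControlled_pdx 1) (β 1) _)).trans
    (derivControlled_iterate (derivControlled_pdx 0) (β 0) _)
  have hbound := (hcontrolled hg).2 0 (x, v)
  rw [norm_iteratedFDeriv_zero, Real.norm_eq_abs, zero_add] at hbound
  rw [show ∑ i, β i = β 0 + (β 1 + (β 2 + (β 3 + (β 4 + β 5)))) by
    simp only [Fin.sum_univ_six]; ring]
  exact hbound

lemma isBounded_cube3 : Bornology.IsBounded cube3 := by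
  refine (Metric.isBounded_closedBall (x := (0 : E3)) (r := 2)).subset fun x hx => ?_
  rw [mem_closedBall_zero_iff, EuclideanSpace.norm_eq, Fin.sum_univ_three]
  refine Real.sqrt_le_iff.mpr ⟨by norm_num, ?_⟩
  have hcoord : ∀ i, ‖x i‖ ^ 2 ≤ 1 := fun i => by
    rw [Real.norm_eq_abs, sq_abs]
    nlinarith [(hx i).1, (hx i).2]
  linarith [hcoord 0, hcoord 1, hcoord 2]

lemma mem_interior_cube3 {x : E3} (hx : ∀ i, x i ∈ Ioo (0 : ℝ) 1) : x ∈ interior cube3 := by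
  have hsubset : ⋂ i, {y : E3 | y i ∈ Ioo (0 : ℝ) 1} ⊆ cube3 := fun y hy i =>
    Ioo_subset_Ico_self (mem_iInter.mp hy i)
  refine interior_maximal hsubset (isOpen_iInter_of_finite fun i => ?_) (mem_iInter.mpr hx)
  exact isOpen_Ioo.preimage (by fun_prop)

lemma measure_cube3_prod_closedBall_lt_top (R : ℝ) :
    volume (cube3 ×ˢ Metric.closedBall (0 : E3) R) < ⊤ :=
  (isBounded_cube3.prod Metric.isBounded_closedBall).measure_lt_top

lemma wL2sq_nonneg (m : ℕ) (g : E3 → E3 → ℝ) : 0 ≤ wL2sq m g :=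
  integral_nonneg fun _ => sq_nonneg _

lemma wL2sq_eq_setIntegral (m : ℕ) (hg : ∀ x v, R < ‖v‖ → g x v = 0) :
    wL2sq m g = ∫ p in cube3 ×ˢ Metric.closedBall 0 R,
      ((1 + ‖p.2‖ ^ 2) ^ ((m : ℝ) / 2) * g p.1 p.2) ^ 2 := by
  refine setIntegral_eq_of_subset_of_forall_sdiff_eq_zero
    (measurableSet_cube3.prod .univ) (prod_mono_right (subset_univ _)) fun p hp => ?_
  have hv : R < ‖p.2‖ := by
    by_contra! hv
    exact hp.2 ⟨hp.1.1, by simpa using hv⟩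
  simp [hg p.1 p.2 hv]

lemma wL2sq_le (m : ℕ) {B : ℝ} (hB : ∀ x v, |g x v| ≤ B) (hg : ∀ x v, R < ‖v‖ → g x v = 0) :
    wL2sq m g ≤ ((1 + R ^ 2) ^ ((m : ℝ) / 2) * B) ^ 2
      * volume.real (cube3 ×ˢ Metric.closedBall (0 : E3) R) := by
  rw [wL2sq_eq_setIntegral m hg]
  refine (Real.le_norm_self _).trans (norm_setIntegral_le_of_norm_le_const
    (measure_cube3_prod_closedBall_lt_top R) fun p hp => ?_)
  have hv : ‖p.2‖ ≤ R := by simpa using hp.2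
  rw [Real.norm_eq_abs, abs_pow, abs_mul, abs_of_nonneg (by positivity)]
  gcongr
  exact hB _ _

lemma iteratedFDeriv_eq_zero_of_lt_norm (hg : ∀ x v, R < ‖v‖ → g x v = 0) (j : ℕ) (x : E3)
    {v : E3} (hv : R < ‖v‖) : iteratedFDeriv ℝ j (uncurry g) (x, v) = 0 := by
  have hlocal : uncurry g =ᶠ[𝓝 (x, v)] 0 := by
    filter_upwards [(isOpen_lt continuous_const continuous_snd.norm).mem_nhds hv] with z hz
    exact hg z.1 z.2 hz
  rw [(hlocal.iteratedFDeriv ℝ j).eq_of_nhds]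
  simp

lemma exists_HsNormW_le (m s : ℕ) (R : ℝ) : ∃ C, 0 ≤ C ∧ ∀ g : E3 → E3 → ℝ,
    ContDiff ℝ ∞ (uncurry g) → (∀ x v, R < ‖v‖ → g x v = 0) → ∀ B, 0 ≤ B →
    (∀ j ≤ s, ∀ x v, ‖v‖ ≤ R → ‖iteratedFDeriv ℝ j (uncurry g) (x, v)‖ ≤ B) →
    HsNormW m s g ≤ C * B := by
  refine ⟨√(∑ _β : Fin 6 → Fin (s + 1), ((1 + R ^ 2) ^ ((m : ℝ) / 2)) ^ 2
    * volume.real (cube3 ×ˢ Metric.closedBall (0 : E3) R)), by positivity,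
    fun g hsmooth hsupport B hB hbound => ?_⟩
  rw [HsNormW, ← Real.sqrt_sq hB, ← Real.sqrt_mul (by positivity), Finset.sum_mul]
  refine Real.sqrt_le_sqrt (Finset.sum_le_sum fun β _ => ?_)
  split_ifs with hβ
  swap
  · positivity
  have hvanish : ∀ x v, R < ‖v‖ → mpart6 (fun i => (β i : ℕ)) g x v = 0 := fun x v hv => by
    simpa [iteratedFDeriv_eq_zero_of_lt_norm hsupport _ x hv] using
      abs_mpart6_le hsmooth (fun i => (β i : ℕ)) x v
  refine (wL2sq_le m (B := B) (fun x v => ?_) hvanish).trans (by rw [mul_pow, mul_right_comm])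
  rcases le_or_gt ‖v‖ R with hv | hv
  · exact (abs_mpart6_le hsmooth _ x v).trans (hbound _ hβ x v hv)
  · rwa [hvanish x v hv, abs_zero]

lemma wL2sq_pos (m : ℕ) (hcont : Continuous (uncurry g)) (hsupport : ∀ x v, R < ‖v‖ → g x v = 0)
    {x v : E3} (hx : x ∈ interior cube3) (hxv : g x v ≠ 0) : 0 < wL2sq m g := by
  set F : E3 × E3 → ℝ := fun p => ((1 + ‖p.2‖ ^ 2) ^ ((m : ℝ) / 2) * g p.1 p.2) ^ 2 with hF
  have hFcont : Continuous F :=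
    ((Continuous.rpow_const (by fun_prop) fun p => .inl (by positivity)).mul hcont).pow 2
  have hFint : IntegrableOn F (cube3 ×ˢ Metric.closedBall 0 R) :=
    (hFcont.continuousOn.integrableOn_compact
      (isBounded_cube3.isCompact_closure.prod (isCompact_closedBall 0 R))).mono_set
        (prod_mono_left subset_closure)
  have hFxv : F (x, v) ≠ 0 :=
    pow_ne_zero 2 (mul_ne_zero (Real.rpow_pos_of_pos (by positivity) _).ne' hxv)
  have hopen : IsOpen (Function.support F ∩ interior cube3 ×ˢ univ) :=
    hFcont.isOpen_support.inter (isOpen_interior.prod isOpen_univ)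
  rw [wL2sq_eq_setIntegral m hsupport,
    setIntegral_pos_iff_support_of_nonneg_ae (.of_forall fun _ => sq_nonneg _) hFint]
  refine (hopen.measure_pos volume ⟨(x, v), hFxv, hx, mem_univ v⟩).trans_le (measure_mono ?_)
  rintro p ⟨hp, hpx, -⟩
  refine ⟨hp, interior_subset hpx, ?_⟩
  by_contra hv
  exact hp (by simp [hF, hsupport p.1 p.2 (by simpa using hv)])

lemma HsNormW_pos (m s : ℕ) (hcont : Continuous (uncurry g))
    (hsupport : ∀ x v, R < ‖v‖ → g x v = 0) {x v : E3} (hx : x ∈ interior cube3)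
    (hxv : g x v ≠ 0) : 0 < HsNormW m s g := by
  rw [HsNormW]
  refine Real.sqrt_pos.mpr (Finset.sum_pos' (fun β _ => ?_) ⟨0, Finset.mem_univ _, ?_⟩)
  · split_ifs
    exacts [wL2sq_nonneg m _, le_rfl]
  · rw [if_pos (by simp)]
    exact wL2sq_pos m hcont hsupport hx hxv

end WeightedSobolevNorm

section Slices

variable {X Y F : Type*} [NormedAddCommGroup X] [NormedSpace ℝ X] [NormedAddCommGroup Y]
  [NormedSpace ℝ Y] [NormedAddCommGroup F] [NormedSpace ℝ F] {Θ : X × Y → F}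

lemma iteratedFDeriv_slice (hΘ : ContDiff ℝ ∞ Θ) (j : ℕ) (r : X) (y : Y) :
    iteratedFDeriv ℝ j (fun y => Θ (r, y)) y =
      (iteratedFDeriv ℝ j Θ (r, y)).compContinuousLinearMap
        fun _ => ContinuousLinearMap.inr ℝ X Y := by
  have htranslate : ContDiff ℝ ∞ fun z : X × Y => Θ ((r, 0) + z) := by fun_prop
  have hcomp := (ContinuousLinearMap.inr ℝ X Y).iteratedFDeriv_comp_right htranslate y (i := j)
    (by exact_mod_cast le_top)
  rw [iteratedFDeriv_comp_add_left] at hcomp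
  simpa [Function.comp_def] using hcomp

lemma norm_iteratedFDeriv_slice_sub_le (hΘ : ContDiff ℝ ∞ Θ) {j : ℕ} {s : Set X}
    (hs : Convex ℝ s) {y : Y} {M : ℝ}
    (hM : ∀ r ∈ s, ‖fderiv ℝ (iteratedFDeriv ℝ j Θ) (r, y)‖ ≤ M) {r r' : X} (hr : r ∈ s)
    (hr' : r' ∈ s) :
    ‖iteratedFDeriv ℝ j (fun y => Θ (r, y) - Θ (r', y)) y‖ ≤ M * ‖r - r'‖ := by
  have hslice : ∀ r : X, ContDiffAt ℝ j (fun y => Θ (r, y)) y := fun r =>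
    ((by fun_prop : ContDiff ℝ ∞ fun y => Θ (r, y)).of_le (by exact_mod_cast le_top)).contDiffAt
  have hsub : iteratedFDeriv ℝ j (fun y => Θ (r, y) - Θ (r', y)) y =
      (iteratedFDeriv ℝ j Θ (r, y) - iteratedFDeriv ℝ j Θ (r', y)).compContinuousLinearMap
        fun _ => ContinuousLinearMap.inr ℝ X Y := by
    rw [fun_iteratedFDeriv_sub_apply (hslice r) (hslice r'), iteratedFDeriv_slice hΘ,
      iteratedFDeriv_slice hΘ]
    rfl
  have hmean : ‖iteratedFDeriv ℝ j Θ (r, y) - iteratedFDeriv ℝ j Θ (r', y)‖ ≤ M * ‖r - r'‖ := by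
    have hseg := Convex.norm_image_sub_le_of_norm_fderiv_le (𝕜 := ℝ) (f := iteratedFDeriv ℝ j Θ)
      (s := s ×ˢ {y}) (C := M) (x := (r', y)) (y := (r, y))
      (fun z _ => hΘ.differentiable_iteratedFDeriv (by exact_mod_cast ENat.natCast_lt_top j) z)
      (by rintro ⟨r, _⟩ ⟨hr, rfl⟩; exact hM r hr) (hs.prod (convex_singleton y))
      ⟨hr', rfl⟩ ⟨hr, rfl⟩
    simpa [Prod.norm_def] using hseg
  rw [hsub]
  refine ((ContinuousMultilinearMap.norm_compContinuousLinearMap_le _ _).trans ?_).trans hmean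
  exact mul_le_of_le_one_right (norm_nonneg _) <| Finset.prod_le_one (fun _ _ => norm_nonneg _)
    fun _ _ => ContinuousLinearMap.norm_inr_le_one _ _ _

lemma exists_iteratedFDeriv_slice_sub_le (hΘ : ContDiff ℝ ∞ Θ) {I : Set X} (hI : IsCompact I)
    (hconvex : Convex ℝ I) {K : Set Y} (hK : IsCompact K) (s : ℕ) :
    ∃ C, 0 ≤ C ∧ ∀ j ≤ s, ∀ r ∈ I, ∀ r' ∈ I, ∀ y ∈ K,
      ‖iteratedFDeriv ℝ j (fun y => Θ (r, y) - Θ (r', y)) y‖ ≤ C * ‖r - r'‖ := by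
  have hbound : ∀ j : ℕ, ∃ M, ∀ z ∈ I ×ˢ K, ‖fderiv ℝ (iteratedFDeriv ℝ j Θ) z‖ ≤ M := fun j =>
    (hI.prod hK).exists_bound_of_continuousOn (((hΘ.iteratedFDeriv_right (m := ∞) (i := j)
      (by exact_mod_cast le_top)).continuous_fderiv (by simp)).continuousOn)
  choose M hM using hbound
  obtain ⟨C, hC⟩ := ((Finset.range (s + 1)).image M).exists_le
  refine ⟨max C 0, le_max_right _ _, fun j hj r hr r' hr' y hy => ?_⟩
  have hMC : M j ≤ max C 0 := (hC _ (Finset.mem_image_of_mem M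
    (Finset.mem_range.mpr (by lia)))).trans (le_max_left _ _)
  exact norm_iteratedFDeriv_slice_sub_le hΘ hconvex (fun r hr => (hM j _ ⟨hr, hy⟩).trans hMC) hr hr'

end Slices

section PhaseMap

variable {V W X : Type*} [NormedAddCommGroup V] [NormedSpace ℝ V] [NormedAddCommGroup W]
  [NormedSpace ℝ W] [NormedAddCommGroup X] [NormedSpace ℝ X]

lemma norm_iteratedFDeriv_clm_le (L : V →L[ℝ] W) {i : ℕ} (hi : i ≠ 0) (x : V) :
    ‖iteratedFDeriv ℝ i L x‖ ≤ ‖L‖ := by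
  obtain ⟨i, rfl⟩ := Nat.exists_eq_succ_of_ne_zero hi
  rw [Nat.succ_eq_add_one, ← norm_iteratedFDeriv_fderiv, funext fun x => L.fderiv (x := x)]
  rcases eq_or_ne i 0 with rfl | hi
  · simp
  · simp [iteratedFDeriv_const_of_ne hi]

lemma norm_iteratedFDeriv_comp_clm_le (L : V →L[ℝ] ℝ) {a : ℝ → W} (ha : ContDiff ℝ ∞ a) {A : ℝ}
    {i : ℕ} (hA : ∀ y, ‖iteratedDeriv i a y‖ ≤ A) (x : V) :
    ‖iteratedFDeriv ℝ i (fun x => a (L x)) x‖ ≤ A * ‖L‖ ^ i := by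
  rw [show (fun x => a (L x)) = a ∘ L from rfl,
    L.iteratedFDeriv_comp_right ha x (by exact_mod_cast le_top)]
  refine (ContinuousMultilinearMap.norm_compContinuousLinearMap_le _ _).trans ?_
  rw [norm_iteratedFDeriv_eq_norm_iteratedDeriv, Finset.prod_const, Finset.card_univ,
    Fintype.card_fin]
  gcongr
  exact hA _

lemma norm_iteratedFDeriv_prodMk {f : V → W} {g : V → X} (hf : ContDiff ℝ ∞ f)
    (hg : ContDiff ℝ ∞ g) (i : ℕ) (x : V) : ‖iteratedFDeriv ℝ i (fun x => (f x, g x)) x‖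
      = max ‖iteratedFDeriv ℝ i f x‖ ‖iteratedFDeriv ℝ i g x‖ := by
  rw [iteratedFDeriv_prodMk hf.contDiffAt hg.contDiffAt (by exact_mod_cast le_top),
    ContinuousMultilinearMap.opNorm_prod]

/-- The map `(x, v) ↦ (a (N x₀), b (N x₀), v)`, through which a local density with fields
oscillating at frequency `N` factors. -/
def phaseMap (a b : ℝ → ℝ) (N : ℝ) (z : E3 × E3) : ℝ × ℝ × E3 := (a (N * z.1 0), b (N * z.1 0), z.2)

variable {a b : ℝ → ℝ}

lemma contDiff_phaseMap (ha : ContDiff ℝ ∞ a) (hb : ContDiff ℝ ∞ b) (N : ℝ) :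
    ContDiff ℝ ∞ (phaseMap a b N) := by
  unfold phaseMap
  fun_prop

lemma norm_iteratedFDeriv_phaseMap_le (ha : ContDiff ℝ ∞ a) (hb : ContDiff ℝ ∞ b) {N A : ℝ}
    (hN : 1 ≤ N) (hA : 1 ≤ A) {i : ℕ} (hi : i ≠ 0) (haA : ∀ y, |iteratedDeriv i a y| ≤ A)
    (hbA : ∀ y, |iteratedDeriv i b y| ≤ A) (z : E3 × E3) :
    ‖iteratedFDeriv ℝ i (phaseMap a b N) z‖ ≤ (A * N) ^ i := by
  let L : E3 × E3 →L[ℝ] ℝ :=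
    N • (EuclideanSpace.proj (0 : Fin 3)).comp (ContinuousLinearMap.fst ℝ E3 E3)
  have hL : ‖L‖ ≤ N := by
    refine L.opNorm_le_bound (by linarith) fun z => ?_
    calc ‖L z‖ = N * ‖z.1 0‖ := by
          rw [show L z = N * z.1 0 from rfl, norm_mul, Real.norm_of_nonneg (by linarith)]
      _ ≤ N * ‖z‖ := by
          gcongr
          exact (PiLp.norm_apply_le z.1 0).trans (norm_fst_le z)
  have hpow : A * ‖L‖ ^ i ≤ (A * N) ^ i := by
    rw [mul_pow]
    gcongr
    exact le_self_pow₀ hA hi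
  have ha' : ContDiff ℝ ∞ fun z => a (L z) := ha.comp L.contDiff
  have hb' : ContDiff ℝ ∞ fun z => b (L z) := hb.comp L.contDiff
  rw [show phaseMap a b N = fun z => (a (L z), b (L z), z.2) from rfl,
    norm_iteratedFDeriv_prodMk ha' (hb'.prodMk contDiff_snd),
    norm_iteratedFDeriv_prodMk hb' contDiff_snd]
  refine max_le ((norm_iteratedFDeriv_comp_clm_le L ha haA z).trans hpow)
    (max_le ((norm_iteratedFDeriv_comp_clm_le L hb hbA z).trans hpow) ?_)
  exact ((norm_iteratedFDeriv_clm_le (ContinuousLinearMap.snd ℝ E3 E3) hi z).trans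
    (ContinuousLinearMap.norm_snd_le ..)).trans
      (one_le_pow₀ (one_le_mul_of_one_le_of_one_le hA hN))

end PhaseMap

section InitialDeviation

/-- The stationary profile, that is, the local density at rest. -/
def equilibrium (v : E3) : ℝ := localDensity 0 0 0 v

/-- The size at time `-n - 1` of an ancient solution decaying like `exp (t / 2)`. -/
def amplitude (n : ℕ) : ℝ := Real.exp (-((n : ℝ) + 1) / 2)

/-- The solutions leaving the equilibrium. The last two velocity components are perturbed by
`amplitude n`, so that the initial data never coincides with the equilibrium. -/
def unstableSol (S p : ℝ → ℝ → ℝ) (n : ℕ) : ℝ → E3 → E3 → ℝ :=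
  kieDensity (amplitude n) (rescale n S) (rescale n p)

/-- The value of the ancient field `q` reached initially by `rescale n q`, relative to
`amplitude n`. -/
def normalizedField (n : ℕ) (q : ℝ → ℝ → ℝ) (y : ℝ) : ℝ := (amplitude n)⁻¹ * q (-((n : ℝ) + 1)) y

/-- The local density as a function of its amplitude and of the normalized fields. -/
def amplitudeFamily (z : ℝ × ℝ × ℝ × E3) : ℝ :=
  localDensity (z.1 * z.2.1) (z.1 * z.2.2.1) z.1 z.2.2.2

variable {S p : ℝ → ℝ → ℝ} {n : ℕ}

lemma contDiff_equilibrium : ContDiff ℝ ∞ equilibrium :=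
  contDiff_localDensity contDiff_const contDiff_const contDiff_const contDiff_id

lemma integral_equilibrium : ∫ v, equilibrium v = 1 :=
  integral_localDensity 0 0 0

lemma contDiff_amplitudeFamily : ContDiff ℝ ∞ amplitudeFamily :=
  contDiff_localDensity (by fun_prop) (by fun_prop) (by fun_prop) (by fun_prop)

lemma amplitude_pos (n : ℕ) : 0 < amplitude n := Real.exp_pos _

lemma amplitude_le_one (n : ℕ) : amplitude n ≤ 1 :=
  Real.exp_le_one_iff.mpr (by linarith [n.cast_nonneg (α := ℝ)])

lemma sq_le_freq (n : ℕ) : (n : ℝ) ^ 2 ≤ freq n := by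
  rw [freq]
  nlinarith [Real.pi_gt_three, sq_nonneg (n : ℝ)]

lemma one_le_freq {n : ℕ} (hn : n ≠ 0) : 1 ≤ freq n :=
  (one_le_pow₀ (by exact_mod_cast Nat.one_le_iff_ne_zero.mpr hn)).trans (sq_le_freq n)

lemma contDiff_unstableSol (h : IsAncientSolution S p) (n : ℕ) :
    ContDiff ℝ ∞ fun q : ℝ × E3 × E3 => unstableSol S p n q.1 q.2.1 q.2.2 :=
  contDiff_kieDensity _ (contDiff_rescale n h.contDiffOn_velocity)
    (contDiff_rescale n h.contDiffOn_density)

lemma rescale_zero (n : ℕ) (q : ℝ → ℝ → ℝ) (y : ℝ) :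
    rescale n q 0 y = amplitude n * normalizedField n q (freq n * y) := by
  have hinner : innerTime n 0 = -((n : ℝ) + 1) := by
    rw [innerTime]
    ring
  rw [normalizedField, mul_inv_cancel_left₀ (amplitude_pos n).ne', ← hinner,
    rescale_eq (innerTime_le (by positivity))]

lemma contDiff_normalizedField (n : ℕ) {q : ℝ → ℝ → ℝ}
    (hq : ContDiffOn ℝ ∞ (fun z : ℝ × ℝ => q z.1 z.2) {z | z.1 < 0}) :
    ContDiff ℝ ∞ (normalizedField n q) := by
  have hslice : ContDiff ℝ ∞ fun y : ℝ => (-((n : ℝ) + 1), y) := by fun_prop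
  exact contDiff_const.mul (hq.comp_contDiff hslice fun _ =>
    show -((n : ℝ) + 1) < 0 by linarith [n.cast_nonneg (α := ℝ)])

lemma exists_abs_iteratedDeriv_normalizedField_le (h : IsAncientSolution S p) (s : ℕ) :
    ∃ A, 1 ≤ A ∧ ∀ n, ∀ i ≤ s, ∀ y, |iteratedDeriv i (normalizedField n S) y| ≤ A ∧
      |iteratedDeriv i (normalizedField n p) y| ≤ A := by
  choose C hC using h.exists_abs_iteratedDeriv_le
  obtain ⟨A, hA⟩ := ((Finset.range (s + 1)).image C).exists_le
  have hnormalize {n i : ℕ} {q : ℝ → ℝ → ℝ} {y : ℝ} (hi : i ≤ s)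
      (hq : |iteratedDeriv i (q (-((n : ℝ) + 1))) y| ≤ C i * amplitude n) :
      |iteratedDeriv i (normalizedField n q) y| ≤ max A 1 := by
    have hCA : C i ≤ max A 1 := (hA _ (Finset.mem_image_of_mem C
      (Finset.mem_range.mpr (by lia)))).trans (le_max_left _ _)
    unfold normalizedField
    rw [iteratedDeriv_const_mul_field, abs_mul, abs_inv, abs_of_pos (amplitude_pos n),
      inv_mul_le_iff₀ (amplitude_pos n), mul_comm]
    exact hq.trans (mul_le_mul_of_nonneg_right hCA (amplitude_pos n).le)
  refine ⟨max A 1, le_max_right _ _, fun n i hi y => ?_⟩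
  have hdecay := hC i (-((n : ℝ) + 1)) (by linarith [n.cast_nonneg (α := ℝ)]) y
  exact ⟨hnormalize hi hdecay.1, hnormalize hi hdecay.2⟩

lemma initialDeviation_eq_comp_phaseMap (S p : ℝ → ℝ → ℝ) (n : ℕ) :
    uncurry (fun x v => unstableSol S p n 0 x v - equilibrium v) =
      (fun y => amplitudeFamily (amplitude n, y) - amplitudeFamily (0, y)) ∘
        phaseMap (normalizedField n S) (normalizedField n p) (freq n) := by
  ext z
  simp [uncurry, unstableSol, kieDensity, equilibrium, phaseMap, amplitudeFamily,
    rescale_zero]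

lemma initialDeviation_eq_zero (h : IsAncientSolution S p) (x : E3) {v : E3} (hv : 12 < ‖v‖) :
    unstableSol S p n 0 x v - equilibrium v = 0 := by
  rw [unstableSol, kieDensity, equilibrium, rescale,
    localDensity_eq_zero ((h.abs_le _ _).1.trans (by norm_num)) hv,
    localDensity_eq_zero (by simp) hv, sub_zero]

lemma exists_norm_iteratedFDeriv_initialDeviation_le (h : IsAncientSolution S p) (s : ℕ) :
    ∃ C, 0 ≤ C ∧ ∀ n ≠ 0, ∀ j ≤ s, ∀ x v : E3, ‖v‖ ≤ 12 →
      ‖iteratedFDeriv ℝ j (uncurry fun x v => unstableSol S p n 0 x v - equilibrium v)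
        (x, v)‖ ≤ C * freq n ^ s * amplitude n := by
  obtain ⟨A, hA, hfields⟩ := exists_abs_iteratedDeriv_normalizedField_le h s
  have hcompact : IsCompact (Metric.closedBall (0 : ℝ) A ×ˢ Metric.closedBall (0 : ℝ) A ×ˢ
      Metric.closedBall (0 : E3) 12) :=
    (isCompact_closedBall _ _).prod ((isCompact_closedBall _ _).prod (isCompact_closedBall _ _))
  obtain ⟨C, hC, hfamily⟩ := exists_iteratedFDeriv_slice_sub_le contDiff_amplitudeFamily
    isCompact_Icc (convex_Icc (0 : ℝ) 1) hcompact s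
  refine ⟨s.factorial * C * A ^ s, by positivity, fun n hn j hj x v hv => ?_⟩
  have hN : 1 ≤ freq n := one_le_freq hn
  have hamplitude := amplitude_pos n
  have hS := contDiff_normalizedField n h.contDiffOn_velocity
  have hp := contDiff_normalizedField n h.contDiffOn_density
  have hslice (r : ℝ) : ContDiff ℝ ∞ fun y => amplitudeFamily (r, y) :=
    contDiff_amplitudeFamily.comp (by fun_prop)
  have hvalues := hfields n 0 s.zero_le (freq n * x 0)
  simp only [iteratedDeriv_zero] at hvalues
  rw [initialDeviation_eq_comp_phaseMap]
  refine (norm_iteratedFDeriv_comp_le ((hslice _).sub (hslice _)) (contDiff_phaseMap hS hp _)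
    (C := C * amplitude n) (D := A * freq n) (by exact_mod_cast le_top) (x, v)
    (fun i hi => ?_) (fun i hi hij => ?_)).trans ?_
  · simpa [abs_of_pos hamplitude] using hfamily i (hi.trans hj) _
      ⟨hamplitude.le, amplitude_le_one n⟩ 0 (by simp)
      (phaseMap (normalizedField n S) (normalizedField n p) (freq n) (x, v))
      ⟨by simpa [phaseMap] using hvalues.1, by simpa [phaseMap] using hvalues.2,
        by simpa [phaseMap] using hv⟩
  · have hi' := hfields n i (hij.trans hj)
    exact norm_iteratedFDeriv_phaseMap_le hS hp hN hA (Nat.one_le_iff_ne_zero.mp hi)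
      (fun y => (hi' y).1) (fun y => (hi' y).2) _
  · calc (j.factorial : ℝ) * (C * amplitude n) * (A * freq n) ^ j
        ≤ s.factorial * (C * amplitude n) * (A * freq n) ^ s := by
          gcongr
          exact one_le_mul_of_one_le_of_one_le hA hN
      _ = s.factorial * C * A ^ s * freq n ^ s * amplitude n := by ring

lemma exists_HsNormW_initialDeviation_le (h : IsAncientSolution S p) (m s : ℕ) :
    ∃ C, 0 < C ∧ ∀ n ≠ 0, HsNormW m s (fun x v => unstableSol S p n 0 x v - equilibrium v)
      ≤ C * freq n ^ s * amplitude n := by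
  obtain ⟨C₁, hC₁, hnorm⟩ := exists_HsNormW_le m s 12
  obtain ⟨C₂, hC₂, hderiv⟩ := exists_norm_iteratedFDeriv_initialDeviation_le h s
  refine ⟨C₁ * C₂ + 1, by positivity, fun n hn => ?_⟩
  have hfreq := freq_nonneg n
  have hamplitude := amplitude_pos n
  have hslice (r : ℝ) : ContDiff ℝ ∞ fun y => amplitudeFamily (r, y) :=
    contDiff_amplitudeFamily.comp (by fun_prop)
  have hsmooth : ContDiff ℝ ∞
      (uncurry fun x v => unstableSol S p n 0 x v - equilibrium v) := by
    rw [initialDeviation_eq_comp_phaseMap]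
    exact ((hslice _).sub (hslice _)).comp (contDiff_phaseMap
      (contDiff_normalizedField n h.contDiffOn_velocity)
      (contDiff_normalizedField n h.contDiffOn_density) _)
  calc HsNormW m s (fun x v => unstableSol S p n 0 x v - equilibrium v)
      ≤ C₁ * (C₂ * freq n ^ s * amplitude n) := hnorm _ hsmooth
        (fun x v hv => initialDeviation_eq_zero h x hv) _ (by positivity) (hderiv n hn)
    _ = C₁ * C₂ * freq n ^ s * amplitude n := by ring
    _ ≤ (C₁ * C₂ + 1) * freq n ^ s * amplitude n := by
        gcongr
        linarith

lemma HsNormW_initialDeviation_pos (h : IsAncientSolution S p) (m s n : ℕ) :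
    0 < HsNormW m s (fun x v => unstableSol S p n 0 x v - equilibrium v) := by
  have hcont : Continuous
      (uncurry fun x v => unstableSol S p n 0 x v - equilibrium v) :=
    ((contDiff_unstableSol h n).continuous.comp
      (f := fun z : E3 × E3 => ((0 : ℝ), z)) (by fun_prop)).sub
        (contDiff_equilibrium.continuous.comp continuous_snd)
  obtain ⟨w, hw⟩ : ∃ w, profile (rescale n S 0 (1 / 2)) (rescale n p 0 (1 / 2)) w ≠ 0 := by
    by_contra! hzero
    have hmass := integral_profile (rescale n S 0 (1 / 2)) (rescale n p 0 (1 / 2))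
    simp only [hzero, integral_zero, zero_ne_one] at hmass
  -- At `v₂ = 10` the equilibrium vanishes and the solution does not.
  refine HsNormW_pos m s (x := WithLp.toLp 2 fun _ => 1 / 2) (v := WithLp.toLp 2 ![w, 0, 10])
    hcont (fun x v hv => initialDeviation_eq_zero h x hv)
    (mem_interior_cube3 fun i => by norm_num) ?_
  have hfar : baseKernel 10 = 0 := baseKernel_eq_zero (by norm_num [abs_of_pos])
  simpa [unstableSol, kieDensity, equilibrium, localDensity, sideProfile, hfar,
    (amplitude_pos n).ne', baseKernel_zero_pos.ne'] using hw

end InitialDeviation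

section Deviation

variable {S p : ℝ → ℝ → ℝ}

lemma exists_profile_ne (S : ℝ) {p : ℝ} (hp : |p| ≤ 1 / 3) (hne : p ≠ 0) :
    ∃ w, profile S p w ≠ profile 0 0 w := by
  by_contra! heq
  have hmoment := integral_sq_mul_profile S hp
  have hmoment₀ := integral_sq_mul_profile 0 (p := 0) (by norm_num)
  simp only [heq] at hmoment
  exact hne (by linarith)

lemma exists_localDensity_sub_ne_zero (S : ℝ) {p : ℝ} (hp : |p| ≤ 1 / 3) (hne : p ≠ 0) :
    ∃ v, localDensity S p 0 v - equilibrium v ≠ 0 := by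
  obtain ⟨w, hw⟩ := exists_profile_ne S hp hne
  refine ⟨WithLp.toLp 2 ![w, 0, 0], sub_ne_zero.mpr fun heq => hw ?_⟩
  simpa [equilibrium, localDensity, sideProfile, baseKernel_zero_pos.ne'] using heq

lemma exists_deviation_ge (h : IsAncientSolution S p) {τ ξ : ℝ} (hτ : τ < -1) (hne : p τ ξ ≠ 0) :
    ∃ v₀ c ρ, 0 < c ∧ 0 < ρ ∧ τ + ρ ≤ -1 ∧
      ∀ τ' ξ' η v, |τ' - τ| < ρ → |ξ' - ξ| < ρ → |η| < ρ → dist v v₀ < ρ →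
        c ≤ (localDensity (S τ' ξ') (p τ' ξ') η v - equilibrium v) ^ 2 := by
  obtain ⟨v₀, hv₀⟩ := exists_localDensity_sub_ne_zero (S τ ξ)
    ((h.abs_le τ ξ).2.trans (by norm_num)) hne
  have hpos := pow_pos (abs_pos.mpr hv₀) 2
  rw [sq_abs] at hpos
  let deviation (z : ℝ × ℝ × ℝ × E3) : ℝ :=
    (localDensity (S z.1 z.2.1) (p z.1 z.2.1) z.2.2.1 z.2.2.2 - equilibrium z.2.2.2) ^ 2
  have hcont : ContinuousAt deviation (τ, ξ, 0, v₀) := by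
    have hdensity : Continuous fun z : (ℝ × ℝ) × ℝ × E3 =>
        localDensity z.1.1 z.1.2 z.2.1 z.2.2 :=
      (contDiff_localDensity (by fun_prop) (by fun_prop) (by fun_prop) (by fun_prop)).continuous
    have hmem : {z : ℝ × ℝ | z.1 < 0} ∈ 𝓝 (τ, ξ) :=
      isOpen_fst_neg.mem_nhds (show τ < 0 by linarith)
    have hfields := (h.contDiffOn_velocity.continuousOn.continuousAt hmem).prodMk
      (h.contDiffOn_density.continuousOn.continuousAt hmem)
    have hfields' : ContinuousAt
        (fun z : ℝ × ℝ × ℝ × E3 => (S z.1 z.2.1, p z.1 z.2.1)) (τ, ξ, 0, v₀) :=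
      hfields.comp (x := (τ, ξ, 0, v₀)) (f := fun z : ℝ × ℝ × ℝ × E3 => (z.1, z.2.1))
        (by fun_prop)
    have hrest : Continuous fun z : ℝ × ℝ × ℝ × E3 => equilibrium z.2.2.2 :=
      contDiff_equilibrium.continuous.comp (by fun_prop)
    exact ((hdensity.continuousAt.comp (x := (τ, ξ, 0, v₀)) (hfields'.prodMk
      (by fun_prop : ContinuousAt (fun z : ℝ × ℝ × ℝ × E3 => z.2.2) (τ, ξ, 0, v₀)))).sub
        hrest.continuousAt).pow 2
  obtain ⟨r, hr, hball⟩ := Metric.eventually_nhds_iff_ball.mp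
    (hcont.eventually (lt_mem_nhds (half_lt_self hpos)))
  refine ⟨v₀, _, min r (-1 - τ), half_pos hpos, lt_min hr (by linarith),
    by linarith [min_le_right r (-1 - τ)], fun τ' ξ' η v hτ' hξ' hη hv => ?_⟩
  refine (hball (τ', ξ', η, v) ?_).le
  simp only [Metric.mem_ball, Prod.dist_eq, Real.dist_eq, sub_zero, max_lt_iff]
  exact ⟨(lt_min_iff.mp hτ').1, (lt_min_iff.mp hξ').1, (lt_min_iff.mp hη).1, (lt_min_iff.mp hv).1⟩

lemma tendsto_amplitude : Tendsto amplitude atTop (𝓝 0) := by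
  refine Real.tendsto_exp_atBot.comp (Tendsto.atBot_div_const two_pos ?_)
  exact tendsto_neg_atTop_atBot.comp
    (tendsto_atTop_add_const_right _ _ tendsto_natCast_atTop_atTop)

end Deviation

section LowerBound

lemma const_mul_measureReal_le_setIntegral {X : Type*} [MeasurableSpace X] {μ : Measure X}
    {f : X → ℝ} {s t : Set X} {c : ℝ} (hs : MeasurableSet s) (hμ : μ s ≠ ⊤) (hst : s ⊆ t)
    (hf : IntegrableOn f t μ) (h0 : 0 ≤ f) (hc : ∀ x ∈ s, c ≤ f x) :
    c * μ.real s ≤ ∫ x in t, f x ∂μ :=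
  (setIntegral_ge_of_const_le_real hs hμ hc (hf.mono_set hst)).trans
    (setIntegral_mono_set hf (.of_forall h0) (.of_forall hst))

lemma measureReal_ball {V : Type*} [NormedAddCommGroup V] [NormedSpace ℝ V] [MeasurableSpace V]
    [BorelSpace V] [FiniteDimensional ℝ V] (μ : Measure V) [μ.IsAddHaarMeasure] (x : V) {r : ℝ}
    (hr : 0 < r) :
    μ.real (Metric.ball x r) = r ^ Module.finrank ℝ V * μ.real (Metric.ball (0 : V) 1) := by
  simp [measureReal_def, Measure.addHaar_ball_of_pos μ x hr,
    ENNReal.toReal_ofReal (pow_nonneg hr.le _)]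

/-- The ball of radius `ρ / freq n` in `(t, x, v)` which the change of variables of `rescale` sends
into the `ρ`-neighbourhood of `(τ, ξ, v₀)`. -/
def rescaledBall (n : ℕ) (τ ξ : ℝ) (v₀ : E3) (ρ : ℝ) : Set (ℝ × E3 × E3) :=
  Metric.ball ((τ + n + 1) / freq n, EuclideanSpace.single 0 (ξ / freq n), v₀) (ρ / freq n)

/-- The `L²` distance between `unstableSol S p n` and the equilibrium over the lifespan of the
solution and the product of the `δ`-balls around `0` and `v₀`. -/
def l2Deviation (S p : ℝ → ℝ → ℝ) (n : ℕ) (v₀ : E3) (δ : ℝ) : ℝ :=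
  √(∫ q in Icc 0 (1 / (2 * Real.pi * n)) ×ˢ (Metric.ball 0 δ ×ˢ Metric.ball v₀ δ),
    (unstableSol S p n q.1 q.2.1 q.2.2 - equilibrium q.2.2) ^ 2)

variable {S p : ℝ → ℝ → ℝ} {n : ℕ} {τ ξ ρ δ : ℝ} {v₀ : E3} {q : ℝ × E3 × E3}

lemma abs_mul_sub_lt {N y : ℝ} (hN : 0 < N) (hy : |y - ξ / N| < ρ / N) : |N * y - ξ| < ρ := by
  rw [lt_div_iff₀ hN, ← abs_of_pos hN, ← abs_mul, abs_of_pos hN] at hy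
  rwa [show N * y - ξ = (y - ξ / N) * N by field_simp]

lemma mem_rescaledBall (hn : n ≠ 0) (hq : q ∈ rescaledBall n τ ξ v₀ ρ) :
    |innerTime n q.1 - τ| < ρ ∧ |freq n * q.2.1 0 - ξ| < ρ ∧ dist q.2.2 v₀ < ρ / freq n := by
  have hN := freq_pos hn
  simp only [rescaledBall, Metric.mem_ball, Prod.dist_eq, max_lt_iff, Real.dist_eq] at hq
  refine ⟨?_, abs_mul_sub_lt hN ?_, hq.2.2⟩
  · rw [innerTime, sub_sub, sub_sub, show (n : ℝ) + (1 + τ) = τ + n + 1 by ring]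
    exact abs_mul_sub_lt hN hq.1
  · have hcoord := PiLp.norm_apply_le (q.2.1 - EuclideanSpace.single (0 : Fin 3) (ξ / freq n)) 0
    rw [← dist_eq_norm] at hcoord
    simpa using hcoord.trans_lt hq.2.1

lemma rescaledBall_subset (hn : n ≠ 0) (hτρ : τ + ρ ≤ -1) (hnξ : |ξ| + ρ ≤ n)
    (hnτ : ρ - τ ≤ n) (hδ : 1 / (n : ℝ) ≤ δ) : rescaledBall n τ ξ v₀ ρ ⊆
      Icc 0 (1 / (2 * Real.pi * n)) ×ˢ (Metric.ball 0 δ ×ˢ Metric.ball v₀ δ) := by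
  intro q hq
  have hN := freq_pos hn
  have hn0 : (0 : ℝ) < n := by positivity
  have hscale : n / freq n ≤ δ := by
    refine le_trans ?_ hδ
    rw [div_le_div_iff₀ hN hn0]
    linarith [sq_le_freq n]
  obtain ⟨htime, -, -⟩ := mem_rescaledBall hn hq
  simp only [rescaledBall, Metric.mem_ball, Prod.dist_eq, max_lt_iff] at hq
  rw [innerTime, abs_lt] at htime
  refine ⟨⟨?_, ?_⟩, ?_, ?_⟩
  · exact nonneg_of_mul_nonneg_right (show 0 ≤ freq n * q.1 by linarith) hN
  · rw [show 1 / (2 * Real.pi * n) = n / freq n by rw [freq]; field_simp, le_div_iff₀ hN]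
    linarith
  · refine Metric.ball_subset_ball' ?_ hq.2.1
    rw [dist_zero_right, PiLp.norm_single, Real.norm_eq_abs, abs_div, abs_of_pos hN, ← add_div]
    exact (div_le_div_of_nonneg_right (by linarith) hN.le).trans hscale
  · refine Metric.ball_subset_ball ?_ hq.2.2
    exact (div_le_div_of_nonneg_right (by linarith [abs_nonneg ξ]) hN.le).trans hscale

lemma measureReal_rescaledBall (hρ : 0 < ρ) (hn : n ≠ 0) (τ ξ : ℝ) (v₀ : E3) :
    volume.real (rescaledBall n τ ξ v₀ ρ)
      = 2 * volume.real (Metric.ball (0 : E3) 1) ^ 2 * (ρ / freq n) ^ 7 := by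
  have hr := div_pos hρ (freq_pos hn)
  rw [rescaledBall, ← ball_prod_same, ← ball_prod_same, Measure.volume_eq_prod,
    measureReal_prod_prod, Measure.volume_eq_prod, measureReal_prod_prod,
    Real.volume_real_ball hr.le, measureReal_ball volume _ hr, measureReal_ball volume _ hr,
    finrank_euclideanSpace_fin]
  ring

lemma exists_sq_deviation_ge_rescaledBall (h : IsAncientSolution S p) (hτ : τ < -1)
    (hne : p τ ξ ≠ 0) : ∃ v₀ c ρ, 0 < c ∧ 0 < ρ ∧ τ + ρ ≤ -1 ∧ ∀ᶠ n in atTop,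
      ∀ q ∈ rescaledBall n τ ξ v₀ ρ,
        c ≤ (unstableSol S p n q.1 q.2.1 q.2.2 - equilibrium q.2.2) ^ 2 := by
  obtain ⟨v₀, c, ρ, hc, hρ, hτρ, hdev⟩ := exists_deviation_ge h hτ hne
  refine ⟨v₀, c, ρ, hc, hρ, hτρ, ?_⟩
  filter_upwards [tendsto_amplitude.eventually_lt_const hρ, eventually_ne_atTop 0]
    with n hamplitude hn q hq
  obtain ⟨htime, hspace, hv⟩ := mem_rescaledBall hn hq
  have hinner : innerTime n q.1 ≤ -1 := by linarith [(abs_lt.mp htime).2]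
  have hfreq : 1 ≤ freq n := one_le_freq hn
  rw [unstableSol, kieDensity, rescale_eq hinner, rescale_eq hinner]
  exact hdev _ _ _ _ htime hspace (by rwa [abs_of_pos (amplitude_pos n)])
    (hv.trans_le (div_le_self hρ.le hfreq))

lemma integrableOn_sq_deviation (h : IsAncientSolution S p) (n : ℕ) (T : ℝ) (x₀ v₀ : E3) (δ : ℝ) :
    IntegrableOn (fun q : ℝ × E3 × E3 =>
        (unstableSol S p n q.1 q.2.1 q.2.2 - equilibrium q.2.2) ^ 2)
      (Icc 0 T ×ˢ (Metric.ball x₀ δ ×ˢ Metric.ball v₀ δ)) := by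
  have hcont : Continuous fun q : ℝ × E3 × E3 =>
      (unstableSol S p n q.1 q.2.1 q.2.2 - equilibrium q.2.2) ^ 2 :=
    ((contDiff_unstableSol h n).continuous.sub
      (contDiff_equilibrium.continuous.comp (by fun_prop))).pow 2
  have hcompact := (isCompact_Icc (a := 0) (b := T)).prod
    ((isCompact_closedBall x₀ δ).prod (isCompact_closedBall v₀ δ))
  exact (hcont.continuousOn.integrableOn_compact hcompact).mono_set (prod_mono_right
    (prod_mono Metric.ball_subset_closedBall Metric.ball_subset_closedBall))

lemma exists_l2Deviation_ge (h : IsAncientSolution S p) (hτ : τ < -1) (hne : p τ ξ ≠ 0) :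
    ∃ v₀ c, 0 < c ∧ ∀ᶠ n : ℕ in atTop, ∀ δ, 1 / (n : ℝ) ≤ δ →
      c / (n : ℝ) ^ 7 ≤ l2Deviation S p n v₀ δ := by
  obtain ⟨v₀, c, ρ, hc, hρ, hτρ, hdev⟩ := exists_sq_deviation_ge_rescaledBall h hτ hne
  set V := volume.real (Metric.ball (0 : E3) 1) with hV_def
  have hV : 0 < V := ENNReal.toReal_pos (Metric.measure_ball_pos volume _ one_pos).ne'
    measure_ball_lt_top.ne
  refine ⟨v₀, √(c * (2 * V ^ 2) * (ρ / (2 * Real.pi)) ^ 7), by positivity, ?_⟩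
  filter_upwards [hdev, eventually_ne_atTop 0,
    tendsto_natCast_atTop_atTop.eventually_ge_atTop (|ξ| + ρ),
    tendsto_natCast_atTop_atTop.eventually_ge_atTop (ρ - τ)] with n hdev hn hnξ hnτ δ hδ
  calc √(c * (2 * V ^ 2) * (ρ / (2 * Real.pi)) ^ 7) / (n : ℝ) ^ 7
      = √(c * volume.real (rescaledBall n τ ξ v₀ ρ)) := by
        rw [measureReal_rescaledBall hρ hn, ← hV_def, div_eq_iff (by positivity),
          ← Real.sqrt_sq (show 0 ≤ (n : ℝ) ^ 7 by positivity),
          ← Real.sqrt_mul (by rw [freq]; positivity), freq]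
        congr 1
        field_simp
    _ ≤ l2Deviation S p n v₀ δ := Real.sqrt_le_sqrt <| const_mul_measureReal_le_setIntegral
        Metric.isOpen_ball.measurableSet (measure_ball_lt_top (μ := volume)).ne
        (rescaledBall_subset hn hτρ hnξ hnτ hδ) (integrableOn_sq_deviation h ..)
        (fun q => sq_nonneg _) hdev

end LowerBound

section Blowup

variable {S p : ℝ → ℝ → ℝ}

lemma tendsto_ratio_lower_bound {c C α : ℝ} (hc : 0 < c) (hC : 0 < C) (hα : 0 < α) (j s : ℕ) :
    Tendsto (fun n : ℕ => c / (n : ℝ) ^ j / (C * freq n ^ s * amplitude n) ^ α) atTop atTop := by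
  have hexp := (tendsto_exp_mul_div_rpow_atTop (j + 2 * s * α) (α / 2) (by positivity)).comp
    (tendsto_natCast_atTop_atTop (R := ℝ))
  set K := C * (2 * Real.pi) ^ s with hK
  have hKpos : 0 < K := by positivity
  refine (hexp.const_mul_atTop (show 0 < c / K ^ α * Real.exp (α / 2) by positivity)).congr' ?_
  filter_upwards [eventually_gt_atTop 0] with n hn
  have hn0 : (0 : ℝ) < n := by exact_mod_cast hn
  have hbound : C * freq n ^ s * amplitude n = K * (n : ℝ) ^ (2 * s : ℝ) * amplitude n := by
    rw [hK, freq, mul_pow, ← pow_mul, ← Real.rpow_natCast (n : ℝ) (2 * s)]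
    push_cast
    ring
  rw [hbound, Real.mul_rpow (by positivity) (amplitude_pos n).le,
    Real.mul_rpow hKpos.le (by positivity), ← Real.rpow_mul hn0.le, amplitude, ← Real.exp_mul,
    show -((n : ℝ) + 1) / 2 * α = -(α / 2 * n + α / 2) by ring, Real.exp_neg, Real.exp_add,
    Function.comp_apply, Real.rpow_add hn0, Real.rpow_natCast]
  field_simp

lemma eventually_le_l2Deviation_div_HsNormW (h : IsAncientSolution S p) {τ ξ : ℝ} (hτ : τ < -1)
    (hne : p τ ξ ≠ 0) : ∃ v₀, ∀ (m s : ℕ) {α : ℝ}, 0 < α → ∀ M, ∀ᶠ n : ℕ in atTop, ∀ δ,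
      1 / (n : ℝ) ≤ δ → M ≤ l2Deviation S p n v₀ δ /
        HsNormW m s (fun x v => unstableSol S p n 0 x v - equilibrium v) ^ α := by
  obtain ⟨v₀, c, hc, hL2⟩ := exists_l2Deviation_ge h hτ hne
  refine ⟨v₀, fun m s α hα M => ?_⟩
  obtain ⟨C, hC, hHs⟩ := exists_HsNormW_initialDeviation_le h m s
  filter_upwards [hL2, eventually_ne_atTop 0,
    (tendsto_ratio_lower_bound hc hC hα 7 s).eventually_ge_atTop M] with n hL2 hn hM δ hδ
  have hpos := HsNormW_initialDeviation_pos h m s n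
  exact hM.trans (div_le_div₀ (Real.sqrt_nonneg _) (hL2 δ hδ) (Real.rpow_pos_of_pos hpos α)
    (Real.rpow_le_rpow hpos.le (hHs n hn) hα.le))

/-- The index `n` of the solution `unstableSol S p n` used at scale `ε`, large enough for it to
fit into balls of radius `ε ^ k` and to live for a time at most `ε`. -/
def scaleIndex (k : ℕ) (ε : ℝ) : ℕ := ⌈ε⁻¹ ^ (k + 1)⌉₊

/-- The lifespan of `unstableSol S p (scaleIndex k ε)`. -/
def lifespan (k : ℕ) (ε : ℝ) : ℝ := 1 / (2 * Real.pi * scaleIndex k ε)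

variable {ε : ℝ}

lemma tendsto_scaleIndex (k : ℕ) : Tendsto (scaleIndex k) (𝓝[>] 0) atTop :=
  tendsto_nat_ceil_atTop.comp ((tendsto_pow_atTop k.succ_ne_zero).comp tendsto_inv_nhdsGT_zero)

lemma scaleIndex_ne_zero (k : ℕ) (hε : 0 < ε) : scaleIndex k ε ≠ 0 :=
  (Nat.ceil_pos.mpr (by positivity)).ne'

lemma one_div_scaleIndex_le (k : ℕ) (hε : 0 < ε) : 1 / (scaleIndex k ε : ℝ) ≤ ε ^ (k + 1) := by
  rw [one_div, ← inv_inv (ε ^ (k + 1)), ← inv_pow]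
  exact inv_anti₀ (by positivity) (Nat.le_ceil _)

lemma lifespan_pos (k : ℕ) (hε : 0 < ε) : 0 < lifespan k ε := by
  have := scaleIndex_ne_zero k hε
  rw [lifespan]
  positivity

lemma lifespan_le (k : ℕ) (hε : 0 < ε) : lifespan k ε ≤ ε ^ (k + 1) := by
  have := scaleIndex_ne_zero k hε
  calc lifespan k ε ≤ 1 / (scaleIndex k ε : ℝ) := by
        rw [lifespan]
        gcongr
        exact le_mul_of_one_le_left (by positivity) (by linarith [Real.pi_gt_three])
    _ ≤ ε ^ (k + 1) := one_div_scaleIndex_le k hε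

lemma tendsto_l2Deviation_div_HsNormW {v₀ : E3} {m s : ℕ} {α : ℝ} (k : ℕ)
    (h : ∀ M, ∀ᶠ n : ℕ in atTop, ∀ δ, 1 / (n : ℝ) ≤ δ → M ≤ l2Deviation S p n v₀ δ /
      HsNormW m s (fun x v => unstableSol S p n 0 x v - equilibrium v) ^ α) :
    Tendsto (fun ε => l2Deviation S p (scaleIndex k ε) v₀ (ε ^ k) /
      HsNormW m s (fun x v => unstableSol S p (scaleIndex k ε) 0 x v - equilibrium v) ^ α)
      (𝓝[>] 0) atTop := by
  refine tendsto_atTop.mpr fun M => ?_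
  filter_upwards [(tendsto_scaleIndex k).eventually (h M), Ioc_mem_nhdsGT one_pos] with ε hM hε
  exact hM _ ((one_div_scaleIndex_le k hε.1).trans
    (pow_le_pow_of_le_one hε.1.le hε.2 k.le_succ))

lemma pow_succ_le_mul_abs_log (k : ℕ) (hε : ε ∈ Ioc 0 (Real.exp (-1))) :
    ε ^ (k + 1) ≤ ε * |Real.log ε| := by
  have hε1 : ε ≤ 1 := hε.2.trans (Real.exp_le_one_iff.mpr (by norm_num))
  have hlog : 1 ≤ |Real.log ε| :=
    le_abs.mpr (.inr (by linarith [(Real.log_le_iff_le_exp hε.1).mpr hε.2]))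
  exact (pow_le_of_le_one hε.1.le hε1 k.succ_ne_zero).trans (le_mul_of_one_le_right hε.1.le hlog)

end Blowup

end KineticEuler

open KineticEuler in
theorem illposedness_kinetic_incompressible_euler_general :
    ∃ μ : E3 → ℝ, ContDiff ℝ (⊤ : ℕ∞) μ ∧ (∫ v : E3, μ v) = 1 ∧
      ∃ x₀ v₀ : E3, ∀ k : ℕ, ∃ (t : ℝ → ℝ) (f : ℝ → ℝ → E3 → E3 → ℝ),
        (∀ ε > 0, 0 < t ε ∧ t ε ≤ ε ^ (k + 1) ∧ IsKIESol (t ε) (f ε)) ∧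
        ∀ (m s : ℕ) (α : ℝ), 0 < α → Tendsto
          (fun ε : ℝ =>
            Real.sqrt (∫ p in (Set.Icc (0:ℝ) (t ε)) ×ˢ
                ((Metric.ball x₀ (ε ^ k)) ×ˢ (Metric.ball v₀ (ε ^ k))),
              (f ε p.1 p.2.1 p.2.2 - μ p.2.2) ^ 2)
            / (HsNormW m s (fun x v => f ε 0 x v - μ v)) ^ α)
          (nhdsWithin 0 (Set.Ioi 0)) atTop := by
  obtain ⟨S, p, hsol, τ, hτ, ξ, hne⟩ := exists_isAncientSolution
  obtain ⟨v₀, hlarge⟩ := eventually_le_l2Deviation_div_HsNormW hsol hτ hne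
  refine ⟨equilibrium, contDiff_equilibrium, integral_equilibrium, 0, v₀, fun k =>
    ⟨lifespan k, fun ε => unstableSol S p (scaleIndex k ε), fun ε hε =>
      ⟨lifespan_pos k hε, lifespan_le k hε, isKIESol_rescale hsol (scaleIndex_ne_zero k hε) _⟩,
      fun m s α hα => tendsto_l2Deviation_div_HsNormW k (hlarge m s hα)⟩⟩

/-- Ill-posedness of the kinetic incompressible Euler equations: there is a smooth stationary
profile `μ(v)` with `∫ μ = 1` such that for all `m, s ∈ ℕ`, `α ∈ (0,1]`, `k ∈ ℕ`, there are a
point `(x₀,v₀) ∈ 𝕋³ × ℝ³`, constants `C, ε₀ > 0`, and for every `ε ∈ (0,ε₀]` a time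
`t_ε ∈ (0, C ε |log ε|]` and a smooth solution `f_ε` on `[0,t_ε] × 𝕋³ × ℝ³`, with
`‖f_ε - μ‖_{L²([0,t_ε] × Ω_ε)} / ‖⟨v⟩^m (f_ε(0) - μ)‖_{H^s}^α → ∞` as `ε → 0`, where
`Ω_ε = B(x₀, ε^k) × B(v₀, ε^k)`. -/
theorem illposedness_kinetic_incompressible_euler :
    ∃ μ : E3 → ℝ, ContDiff ℝ (⊤ : ℕ∞) μ ∧ (∫ v : E3, μ v) = 1 ∧
      ∀ (m s : ℕ) (α : ℝ), α ∈ Set.Ioc (0:ℝ) 1 → ∀ k : ℕ,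
        ∃ (x₀ v₀ : E3) (C ε₀ : ℝ), 0 < C ∧ 0 < ε₀ ∧
          ∃ (t : ℝ → ℝ) (f : ℝ → ℝ → E3 → E3 → ℝ),
            (∀ ε ∈ Set.Ioc (0:ℝ) ε₀,
              0 < t ε ∧ t ε ≤ C * ε * |Real.log ε| ∧ IsKIESol (t ε) (f ε)) ∧
            Tendsto
              (fun ε : ℝ =>
                Real.sqrt (∫ p in (Set.Icc (0:ℝ) (t ε)) ×ˢ
                    ((Metric.ball x₀ (ε ^ k)) ×ˢ (Metric.ball v₀ (ε ^ k))),
                  (f ε p.1 p.2.1 p.2.2 - μ p.2.2) ^ 2)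
                / (HsNormW m s (fun x v => f ε 0 x v - μ v)) ^ α)
              (nhdsWithin 0 (Set.Ioc 0 ε₀)) atTop := by
  obtain ⟨μ, hμ, hmass, x₀, v₀, hill⟩ := illposedness_kinetic_incompressible_euler_general
  refine ⟨μ, hμ, hmass, fun m s α hα k => ?_⟩
  obtain ⟨t, f, hsol, hlim⟩ := hill k
  refine ⟨x₀, v₀, 1, Real.exp (-1), one_pos, Real.exp_pos _, t, f, fun ε hε => ?_,
    (hlim m s α hα.1).mono_left (nhdsWithin_mono _ Ioc_subset_Ioi_self)⟩
  obtain ⟨hpos, hle, hKIE⟩ := hsol ε hε.1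
  exact ⟨hpos, by simpa using hle.trans (KineticEuler.pow_succ_le_mul_abs_log k hε), hKIE⟩

end
end

section
/- Assume moreover ∫_{−1}^{1} (U(z) − c)^{−2} dz = 0. Then the function φ̂ := φ₂ satisfies φ̂(−1) = φ̂(1) = 0, and the function ω̂ := φ̂″ is not identically zero and satisfies (U(z) − c)·ω̂(z) = U″(z)·φ̂(z) for all z ∈ [-1,1]; equivalently, for every n ∈ ℤ, −i n U(z)·ω̂(z) + i n U″(z)·φ̂(z) = (−i n c)·ω̂(z) for all z, so that (e^{iny} ω̂(z), −inc) is an eigenpair of the linearized hydrostatic Euler operator. -/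
open Set

noncomputable section

/-- Derivative within the interval `[-1,1]` (for functions on `[-1,1]`). -/
noncomputable def dI (f : ℝ → ℂ) : ℝ → ℂ := fun z => derivWithin f (Set.Icc (-1:ℝ) 1) z

/-- Second derivative of `U` within `[-1,1]`. -/
noncomputable def ddU (U : ℝ → ℝ) : ℝ → ℝ :=
  fun z => derivWithin (fun z' => derivWithin U (Set.Icc (-1:ℝ) 1) z') (Set.Icc (-1:ℝ) 1) z

/-- The first homogeneous solution `φ₁(z) = U(z) - c` of the Rayleigh equation. -/
noncomputable def rayPhi1 (U : ℝ → ℝ) (c : ℂ) : ℝ → ℂ := fun z => (U z : ℂ) - c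

/-- The second homogeneous solution `φ₂(z) = (U(z) - c)·∫_{-1}^{z} (U(z') - c)⁻² dz'`. -/
noncomputable def rayPhi2 (U : ℝ → ℝ) (c : ℂ) : ℝ → ℂ :=
  fun z => ((U z : ℂ) - c) * ∫ t in (-1:ℝ)..z, (((U t : ℂ) - c) ^ 2)⁻¹

/-! Put `V := U - c`. Since `V` solves `V φ″ = V″ φ`, reduction of order gives the second solution
`φ = V · J` with `J′ = V⁻²`. Here `φ′ = V′ J + V⁻¹`, and the two copies of `V′ V⁻²` produced by the
next derivative cancel, leaving `φ″ = V″ J`. The dispersion relation says that `J` vanishes at the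
right endpoint, hence so does `φ`. If `φ″` were identically zero, `φ` would be affine with slope
`1 / V(a) ≠ 0` at the left endpoint `a` and could not vanish at both ends. -/

section Calculus

variable {𝕜 E : Type*} [NormedAddCommGroup E]

theorem differentiableOn_derivWithin_of_contDiffOn_two [NontriviallyNormedField 𝕜]
    [NormedSpace 𝕜 E] {f : 𝕜 → E} {s : Set 𝕜} (hf : ContDiffOn 𝕜 2 f s) (hs : UniqueDiffOn 𝕜 s) :
    DifferentiableOn 𝕜 (derivWithin f s) s :=
  (hf.derivWithin (m := 1) hs one_add_one_eq_two.le).differentiableOn one_ne_zero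

theorem derivWithin_derivWithin_eq_of_hasDerivWithinAt [NontriviallyNormedField 𝕜]
    [NormedSpace 𝕜 E] {f f' : 𝕜 → E} {f'' : E} {s : Set 𝕜} {x : 𝕜} (hs : UniqueDiffOn 𝕜 s)
    (hf : ∀ z ∈ s, HasDerivWithinAt f (f' z) s z) (hf' : HasDerivWithinAt f' f'' s x) (hx : x ∈ s) :
    derivWithin (derivWithin f s) s x = f'' := by
  have hderiv : ∀ z ∈ s, derivWithin f s z = f' z := fun z hz ↦ (hf z hz).derivWithin (hs z hz)
  rw [derivWithin_congr hderiv (hderiv x hx), hf'.derivWithin (hs x hx)]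

theorem eq_of_hasDerivWithinAt_zero [RCLike 𝕜] [NormedSpace 𝕜 E] {f : 𝕜 → E} {s : Set 𝕜}
    {x y : 𝕜} (hs : Convex ℝ s) (hf : ∀ z ∈ s, HasDerivWithinAt f 0 s z) (hx : x ∈ s)
    (hy : y ∈ s) : f x = f y := by
  have hle : ‖f x - f y‖ ≤ 0 * ‖x - y‖ :=
    hs.norm_image_sub_le_of_norm_hasDerivWithin_le hf (fun _ _ ↦ norm_zero.le) hy hx
  simpa [sub_eq_zero] using hle

theorem eq_add_smul_of_hasDerivWithinAt_hasDerivWithinAt_zero [RCLike 𝕜] [NormedSpace 𝕜 E]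
    {f f' : 𝕜 → E} {s : Set 𝕜} {x₀ x : 𝕜} (hs : Convex ℝ s)
    (hf : ∀ z ∈ s, HasDerivWithinAt f (f' z) s z) (hf' : ∀ z ∈ s, HasDerivWithinAt f' 0 s z)
    (hx₀ : x₀ ∈ s) (hx : x ∈ s) : f x = f x₀ + (x - x₀) • f' x₀ := by
  have hdiff : ∀ z ∈ s, HasDerivWithinAt (fun y ↦ f y - (y - x₀) • f' x₀) 0 s z := fun z hz ↦ by
    have hsub := (hf z hz).sub (((hasDerivWithinAt_id z s).sub_const x₀).smul_const (f' x₀))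
    rw [eq_of_hasDerivWithinAt_zero hs hf' hz hx₀, one_smul, sub_self] at hsub
    exact hsub
  have heq := eq_of_hasDerivWithinAt_zero hs hdiff hx hx₀
  rwa [sub_self, zero_smul, sub_zero, sub_eq_iff_eq_add] at heq

theorem hasDerivWithinAt_integral_of_continuousOn_Icc [NormedSpace ℝ E] [CompleteSpace E]
    {f : ℝ → E} {a b x₀ x : ℝ} (hf : ContinuousOn f (Icc a b)) (hx₀ : x₀ ∈ Icc a b)
    (hx : x ∈ Icc a b) :
    HasDerivWithinAt (fun y ↦ ∫ t in x₀..y, f t) (f x) (Icc a b) x := by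
  have : Fact (x ∈ Icc a b) := ⟨hx⟩
  exact intervalIntegral.integral_hasDerivWithinAt_right
    (hf.mono (uIcc_subset_Icc hx₀ hx)).intervalIntegrable
    (hf.stronglyMeasurableAtFilter_nhdsWithin measurableSet_Icc x) (hf x hx)

end Calculus

section ReductionOfOrder

variable {𝕜 : Type*} [NontriviallyNormedField 𝕜] [NormedAlgebra ℝ 𝕜]

/-- The solution of `V φ″ = V″ φ` obtained from the solution `V` by reduction of order, normalized
by `φ x₀ = 0` and `φ′ x₀ = (V x₀)⁻¹`. For `V = U - c` and `x₀ = -1` this is `rayPhi2 U c`. -/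
def reductionOfOrder (V : ℝ → 𝕜) (x₀ : ℝ) : ℝ → 𝕜 :=
  fun x ↦ V x * ∫ t in x₀..x, (V t ^ 2)⁻¹

@[simp]
theorem reductionOfOrder_self (V : ℝ → 𝕜) (x₀ : ℝ) : reductionOfOrder V x₀ x₀ = 0 := by
  simp [reductionOfOrder]

variable [CompleteSpace 𝕜] {V V' V'' : ℝ → 𝕜} {a b x₀ x : ℝ}

theorem hasDerivWithinAt_integral_inv_sq (hV : ContinuousOn V (Icc a b))
    (hV₀ : ∀ x ∈ Icc a b, V x ≠ 0) (hx₀ : x₀ ∈ Icc a b) (hx : x ∈ Icc a b) :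
    HasDerivWithinAt (fun y ↦ ∫ t in x₀..y, (V t ^ 2)⁻¹) (V x ^ 2)⁻¹ (Icc a b) x :=
  hasDerivWithinAt_integral_of_continuousOn_Icc
    ((hV.pow 2).inv₀ fun t ht ↦ pow_ne_zero 2 (hV₀ t ht)) hx₀ hx

theorem hasDerivWithinAt_reductionOfOrder
    (hV : ∀ x ∈ Icc a b, HasDerivWithinAt V (V' x) (Icc a b) x)
    (hV₀ : ∀ x ∈ Icc a b, V x ≠ 0) (hx₀ : x₀ ∈ Icc a b) (hx : x ∈ Icc a b) :
    HasDerivWithinAt (reductionOfOrder V x₀)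
      (V' x * (∫ t in x₀..x, (V t ^ 2)⁻¹) + (V x)⁻¹) (Icc a b) x := by
  have hJ := hasDerivWithinAt_integral_inv_sq (HasDerivWithinAt.continuousOn hV) hV₀ hx₀ hx
  refine ((hV x hx).mul hJ).congr_deriv ?_
  have := hV₀ x hx
  field_simp

theorem hasDerivWithinAt_deriv_reductionOfOrder
    (hV : ∀ x ∈ Icc a b, HasDerivWithinAt V (V' x) (Icc a b) x)
    (hV' : HasDerivWithinAt V' (V'' x) (Icc a b) x)
    (hV₀ : ∀ x ∈ Icc a b, V x ≠ 0) (hx₀ : x₀ ∈ Icc a b) (hx : x ∈ Icc a b) :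
    HasDerivWithinAt (fun y ↦ V' y * (∫ t in x₀..y, (V t ^ 2)⁻¹) + (V y)⁻¹)
      (V'' x * ∫ t in x₀..x, (V t ^ 2)⁻¹) (Icc a b) x := by
  have hJ := hasDerivWithinAt_integral_inv_sq (HasDerivWithinAt.continuousOn hV) hV₀ hx₀ hx
  refine ((hV'.mul hJ).add ((hV x hx).inv (hV₀ x hx))).congr_deriv ?_
  ring

theorem derivWithin_derivWithin_reductionOfOrder
    (hV : ∀ x ∈ Icc a b, HasDerivWithinAt V (V' x) (Icc a b) x)
    (hV' : HasDerivWithinAt V' (V'' x) (Icc a b) x)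
    (hV₀ : ∀ x ∈ Icc a b, V x ≠ 0) (hab : a < b) (hx₀ : x₀ ∈ Icc a b) (hx : x ∈ Icc a b) :
    derivWithin (derivWithin (reductionOfOrder V x₀) (Icc a b)) (Icc a b) x =
      V'' x * ∫ t in x₀..x, (V t ^ 2)⁻¹ :=
  derivWithin_derivWithin_eq_of_hasDerivWithinAt (uniqueDiffOn_Icc hab)
    (fun _ ↦ hasDerivWithinAt_reductionOfOrder hV hV₀ hx₀)
    (hasDerivWithinAt_deriv_reductionOfOrder hV hV' hV₀ hx₀ hx) hx

theorem mul_derivWithin_derivWithin_reductionOfOrder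
    (hV : ∀ x ∈ Icc a b, HasDerivWithinAt V (V' x) (Icc a b) x)
    (hV' : HasDerivWithinAt V' (V'' x) (Icc a b) x)
    (hV₀ : ∀ x ∈ Icc a b, V x ≠ 0) (hab : a < b) (hx₀ : x₀ ∈ Icc a b) (hx : x ∈ Icc a b) :
    V x * derivWithin (derivWithin (reductionOfOrder V x₀) (Icc a b)) (Icc a b) x =
      V'' x * reductionOfOrder V x₀ x := by
  rw [derivWithin_derivWithin_reductionOfOrder hV hV' hV₀ hab hx₀ hx, reductionOfOrder,
    mul_left_comm]

theorem exists_derivWithin_derivWithin_reductionOfOrder_ne_zero {x₁ : ℝ}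
    (hV : ∀ x ∈ Icc a b, HasDerivWithinAt V (V' x) (Icc a b) x)
    (hV' : ∀ x ∈ Icc a b, HasDerivWithinAt V' (V'' x) (Icc a b) x)
    (hV₀ : ∀ x ∈ Icc a b, V x ≠ 0) (hx₀ : x₀ ∈ Icc a b) (hx₁ : x₁ ∈ Icc a b) (hne : x₀ ≠ x₁)
    (hzero : reductionOfOrder V x₀ x₁ = 0) :
    ∃ x ∈ Icc a b,
      derivWithin (derivWithin (reductionOfOrder V x₀) (Icc a b)) (Icc a b) x ≠ 0 := by
  have hab : a < b := lt_of_not_ge fun hba ↦ hne (subsingleton_Icc_of_ge hba hx₀ hx₁)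
  by_contra! hφ''
  have hderiv_zero : ∀ x ∈ Icc a b,
      HasDerivWithinAt (fun y ↦ V' y * (∫ t in x₀..y, (V t ^ 2)⁻¹) + (V y)⁻¹) 0 (Icc a b) x := by
    intro x hx
    rw [← hφ'' x hx, derivWithin_derivWithin_reductionOfOrder hV (hV' x hx) hV₀ hab hx₀ hx]
    exact hasDerivWithinAt_deriv_reductionOfOrder hV (hV' x hx) hV₀ hx₀ hx
  have haffine := eq_add_smul_of_hasDerivWithinAt_hasDerivWithinAt_zero (convex_Icc a b)
    (fun _ ↦ hasDerivWithinAt_reductionOfOrder hV hV₀ hx₀) hderiv_zero hx₀ hx₁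
  have hslope : (x₁ - x₀) • (V x₀)⁻¹ = 0 := by simpa [hzero] using haffine.symm
  exact smul_ne_zero (sub_ne_zero.2 hne.symm) (inv_ne_zero (hV₀ x₀ hx₀)) hslope

end ReductionOfOrder

theorem rayleigh_eigenfunction_of_dispersion_general {U U' U'' : ℝ → ℂ} {c : ℂ} {a b : ℝ}
    (hab : a < b) (hU : ∀ z ∈ Icc a b, HasDerivWithinAt U (U' z) (Icc a b) z)
    (hU' : ∀ z ∈ Icc a b, HasDerivWithinAt U' (U'' z) (Icc a b) z)
    (hc : ∀ z ∈ Icc a b, U z ≠ c) (hdisp : ∫ z in a..b, ((U z - c) ^ 2)⁻¹ = 0) :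
    let φ := reductionOfOrder (fun z ↦ U z - c) a
    let ω := derivWithin (derivWithin φ (Icc a b)) (Icc a b)
    φ a = 0 ∧ φ b = 0 ∧ (∃ z ∈ Icc a b, ω z ≠ 0) ∧
    (∀ z ∈ Icc a b, (U z - c) * ω z = U'' z * φ z) ∧
    (∀ n : ℂ, ∀ z ∈ Icc a b,
      -(Complex.I * n * U z) * ω z + Complex.I * n * U'' z * φ z = (-Complex.I * n * c) * ω z) := by
  intro φ ω
  have hV : ∀ z ∈ Icc a b, HasDerivWithinAt (fun z ↦ U z - c) (U' z) (Icc a b) z :=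
    fun z hz ↦ (hU z hz).sub_const c
  have hV₀ : ∀ z ∈ Icc a b, U z - c ≠ 0 := fun z hz ↦ sub_ne_zero.2 (hc z hz)
  have ha : a ∈ Icc a b := left_mem_Icc.2 hab.le
  have hb : b ∈ Icc a b := right_mem_Icc.2 hab.le
  have hφb : φ b = 0 := mul_eq_zero_of_right _ hdisp
  have hrayleigh : ∀ z ∈ Icc a b, (U z - c) * ω z = U'' z * φ z := fun z hz ↦
    mul_derivWithin_derivWithin_reductionOfOrder hV (hU' z hz) hV₀ hab ha hz
  refine ⟨reductionOfOrder_self _ a, hφb,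
    exists_derivWithin_derivWithin_reductionOfOrder_ne_zero hV hU' hV₀ ha hb hab.ne hφb,
    hrayleigh, fun n z hz ↦ ?_⟩
  linear_combination (-Complex.I * n) * hrayleigh z hz

theorem ofReal_ne_of_im_ne_zero {c : ℂ} (hc : c.im ≠ 0) (x : ℝ) : (x : ℂ) ≠ c := by
  rintro rfl
  exact hc (Complex.ofReal_im x)

/-- If `∫_{-1}^{1} (U(z) - c)⁻² dz = 0`, then `φ̂ := φ₂` vanishes at `z = ±1`, the function
`ω̂ := φ̂″` is not identically zero, satisfies `(U(z) - c)·ω̂(z) = U″(z)·φ̂(z)` on `[-1,1]`, and,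
equivalently, for every `n ∈ ℤ`, `-inU(z)·ω̂(z) + inU″(z)·φ̂(z) = (-inc)·ω̂(z)` on `[-1,1]`,
so that `(e^{iny} ω̂(z), -inc)` is an eigenpair of the linearized hydrostatic Euler operator. -/
theorem rayleigh_eigenfunction_of_dispersion (U : ℝ → ℝ)
    (hU : ContDiffOn ℝ 2 U (Set.Icc (-1) 1)) (c : ℂ) (hc : c.im ≠ 0)
    (hdisp : (∫ z in (-1:ℝ)..1, (((U z : ℂ) - c) ^ 2)⁻¹) = 0) :
    rayPhi2 U c (-1) = 0 ∧ rayPhi2 U c 1 = 0 ∧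
    (∃ z ∈ Set.Icc (-1:ℝ) 1, dI (dI (rayPhi2 U c)) z ≠ 0) ∧
    (∀ z ∈ Set.Icc (-1:ℝ) 1,
      ((U z : ℂ) - c) * dI (dI (rayPhi2 U c)) z = (ddU U z : ℂ) * rayPhi2 U c z) ∧
    (∀ n : ℤ, ∀ z ∈ Set.Icc (-1:ℝ) 1,
      -(Complex.I * (n : ℂ) * (U z : ℂ)) * dI (dI (rayPhi2 U c)) z
        + Complex.I * (n : ℂ) * (ddU U z : ℂ) * rayPhi2 U c z
      = (-(Complex.I) * (n : ℂ) * c) * dI (dI (rayPhi2 U c)) z) := by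
  have hU' : DifferentiableOn ℝ (derivWithin U (Icc (-1) 1)) (Icc (-1) 1) :=
    differentiableOn_derivWithin_of_contDiffOn_two hU (uniqueDiffOn_Icc (by norm_num))
  obtain ⟨hleft, hright, hne, hrayleigh, heigen⟩ :=
    rayleigh_eigenfunction_of_dispersion_general (by norm_num)
      (fun z hz ↦ (hU.differentiableOn two_ne_zero z hz).hasDerivWithinAt.ofReal_comp)
      (fun z hz ↦ (hU' z hz).hasDerivWithinAt.ofReal_comp)
      (fun z _ ↦ ofReal_ne_of_im_ne_zero hc (U z)) hdisp
  exact ⟨hleft, hright, hne, hrayleigh, fun n ↦ heigen n⟩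

end
end
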